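/- (McMullen) Let Δ be a complete simplicial fan in ℝ^d (d ≥ 1) and let ℓ ∈ A(Δ)_1 be a strictly convex conewise linear function, i.e. ℓ is a convex function on ℝ^d that restricts to a distinct linear function on each d-dimensional cone of Δ. Then for every integer k with 0 ≤ k < d/2, multiplication by ℓ^{d−2k} induces an isomorphism of real vector spaces from Ā(Δ)_k onto Ā(Δ)_{d−k}. -/

import Mathlib

open Classical Polynomial

section ConeDefs

variable {V : Type*} [AddCommGroup V] [Module ℝ V]

/-- The polyhedral cone generated by a finite set of vectors: all nonnegative
linear combinations. -/
def coneHull (S : Finset V) : Set V :=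
  {x | ∃ c : V → ℝ, (∀ w, 0 ≤ c w) ∧ x = ∑ w ∈ S, c w • w}

/-- A polyhedral cone: the set of nonnegative combinations of finitely many
vectors. -/
def IsCone (σ : Set V) : Prop := ∃ S : Finset V, σ = coneHull S

/-- A pointed polyhedral cone: a polyhedral cone containing no line. -/
def IsPointedCone (σ : Set V) : Prop :=
  IsCone σ ∧ ∀ x ∈ σ, -x ∈ σ → x = 0

/-- Faces of a cone: the cone itself and the intersections with supporting
hyperplanes. -/
def IsConeFace (σ τ : Set V) : Prop :=
  τ = σ ∨ ∃ l : V →ₗ[ℝ] ℝ, (∀ y ∈ σ, l y ≤ 0) ∧ τ = {x | x ∈ σ ∧ l x = 0}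

end ConeDefs
section FanDefs

variable {V : Type*} [AddCommGroup V] [Module ℝ V]

/-- A fan: a finite collection of pointed polyhedral cones that is closed under
taking faces and in which the intersection of any two cones is a face of each. -/
def IsFan (Δ : Finset (Set V)) : Prop :=
  (∀ σ ∈ Δ, IsPointedCone σ) ∧
  (∀ σ ∈ Δ, ∀ τ : Set V, IsConeFace σ τ → τ ∈ Δ) ∧
  (∀ σ ∈ Δ, ∀ τ ∈ Δ, IsConeFace σ (σ ∩ τ) ∧ IsConeFace τ (σ ∩ τ))

/-- A complete fan: the union of its cones is the whole space. -/
def IsCompleteFan (Δ : Finset (Set V)) : Prop :=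
  IsFan Δ ∧ (⋃ σ ∈ Δ, σ) = Set.univ

/-- A simplicial fan: every cone is generated by linearly independent vectors. -/
def IsSimplicialFan (Δ : Finset (Set V)) : Prop :=
  IsFan Δ ∧ ∀ σ ∈ Δ, ∃ S : Finset V,
    LinearIndependent ℝ (fun x : (S : Set V) => (x : V)) ∧ σ = coneHull S

end FanDefs
section ConewiseDefs

/-- `A(Δ)_k`: the space of conewise polynomial functions on `Δ` that are
homogeneous of degree `k`, as a subspace of all functions `ℝ^d → ℝ`. -/
def conewisePoly (d : ℕ) (Δ : Finset (Set (Fin d → ℝ))) (k : ℕ) :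
    Submodule ℝ ((Fin d → ℝ) → ℝ) where
  carrier := {f | ∀ σ ∈ Δ, ∃ p : MvPolynomial (Fin d) ℝ,
    p.IsHomogeneous k ∧ ∀ x ∈ σ, f x = MvPolynomial.eval x p}
  add_mem' := by
    intro f g hf hg σ hσ
    obtain ⟨p, hp, hfp⟩ := hf σ hσ
    obtain ⟨q, hq, hgq⟩ := hg σ hσ
    refine ⟨p + q, hp.add hq, fun x hx => ?_⟩
    simp [hfp x hx, hgq x hx]
  zero_mem' := by
    intro σ hσ
    exact ⟨0, MvPolynomial.isHomogeneous_zero _ _ _, fun x hx => by simp⟩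
  smul_mem' := by
    intro c f hf σ hσ
    obtain ⟨p, hp, hfp⟩ := hf σ hσ
    refine ⟨MvPolynomial.C c * p, ?_, fun x hx => ?_⟩
    · simpa using (MvPolynomial.isHomogeneous_C (Fin d) c).mul hp
    · simp [hfp x hx]

/-- `(m·A(Δ))_k`: the degree-`k` part of `m·A(Δ)`, where `m ⊂ A` is the ideal of
the ring of global polynomial functions generated by the linear functions.  It
is spanned by the products of a global linear function with a conewise
polynomial function that is homogeneous of degree `k - 1`. -/
def mConewisePoly (d : ℕ) (Δ : Finset (Set (Fin d → ℝ))) :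
    ℕ → Submodule ℝ ((Fin d → ℝ) → ℝ)
  | 0 => ⊥
  | k + 1 => Submodule.span ℝ
      {h | ∃ (l : (Fin d → ℝ) →ₗ[ℝ] ℝ) (f : (Fin d → ℝ) → ℝ),
        f ∈ conewisePoly d Δ k ∧ h = fun x => l x * f x}

end ConewiseDefs


section WF
variable {V : Type*} [Fintype V]

/-- weighted bilinear form -/
noncomputable def wf (μ f g : V → ℝ) : ℝ := ∑ s, μ s * f s * g s

theorem wf_add_left (μ f f' g : V → ℝ) : wf μ (f + f') g = wf μ f g + wf μ f' g := by
  simp only [wf, ← Finset.sum_add_distrib]; refine Finset.sum_congr rfl fun s _ => ?_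
  simp only [Pi.add_apply]; ring
theorem wf_add_right (μ f g g' : V → ℝ) : wf μ f (g + g') = wf μ f g + wf μ f g' := by
  simp only [wf, ← Finset.sum_add_distrib]; refine Finset.sum_congr rfl fun s _ => ?_
  simp only [Pi.add_apply]; ring
theorem wf_smul_left (μ : V → ℝ) (a : ℝ) (f g : V → ℝ) : wf μ (a • f) g = a * wf μ f g := by
  simp only [wf, Finset.mul_sum]; refine Finset.sum_congr rfl fun s _ => ?_
  simp only [Pi.smul_apply, smul_eq_mul]; ring
theorem wf_smul_right (μ : V → ℝ) (a : ℝ) (f g : V → ℝ) : wf μ f (a • g) = a * wf μ f g := by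
  simp only [wf, Finset.mul_sum]; refine Finset.sum_congr rfl fun s _ => ?_
  simp only [Pi.smul_apply, smul_eq_mul]; ring
theorem wf_comm (μ f g : V → ℝ) : wf μ f g = wf μ g f := by
  simp only [wf]; refine Finset.sum_congr rfl fun s _ => ?_; ring
theorem wf_neg (μ f g : V → ℝ) : wf (-μ) f g = - wf μ f g := by
  simp only [wf, ← Finset.sum_neg_distrib]; refine Finset.sum_congr rfl fun s _ => ?_
  simp only [Pi.neg_apply]; ring
theorem wf_add (μ ν f g : V → ℝ) : wf (μ + ν) f g = wf μ f g + wf ν f g := by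
  simp only [wf, ← Finset.sum_add_distrib]; refine Finset.sum_congr rfl fun s _ => ?_
  simp only [Pi.add_apply]; ring
theorem wf_zero_left (μ g : V → ℝ) : wf μ 0 g = 0 := by simp [wf]
theorem wf_zero_right (μ g : V → ℝ) : wf μ g 0 = 0 := by simp [wf]
theorem wf_single (s : V) (k : ℝ) (f g : V → ℝ) :
    wf (Pi.single s k) f g = k * f s * g s := by
  simp only [wf]
  rw [Finset.sum_eq_single s]
  · simp
  · intro t _ h; simp [Pi.single_eq_of_ne h]
  · simp

def PosOn (μ : V → ℝ) (W : Submodule ℝ (V → ℝ)) : Prop := ∀ f ∈ W, f ≠ 0 → 0 < wf μ f f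

def rad (μ : V → ℝ) (F : Submodule ℝ (V → ℝ)) : Submodule ℝ (V → ℝ) where
  carrier := {f | f ∈ F ∧ ∀ g ∈ F, wf μ f g = 0}
  add_mem' := by
    rintro f f' ⟨h1, h2⟩ ⟨h3, h4⟩
    exact ⟨F.add_mem h1 h3, fun g hg => by rw [wf_add_left, h2 g hg, h4 g hg, add_zero]⟩
  zero_mem' := ⟨F.zero_mem, fun g _ => wf_zero_left μ g⟩
  smul_mem' := by
    rintro a f ⟨h1, h2⟩
    exact ⟨F.smul_mem a h1, fun g hg => by rw [wf_smul_left, h2 g hg, mul_zero]⟩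

theorem mem_rad {μ : V → ℝ} {F : Submodule ℝ (V → ℝ)} {f : V → ℝ} :
    f ∈ rad μ F ↔ f ∈ F ∧ ∀ g ∈ F, wf μ f g = 0 := Iff.rfl

noncomputable def np (μ : V → ℝ) (F : Submodule ℝ (V → ℝ)) : ℕ :=
  sigPos ((QuadraticMap.weightedSumSquares ℝ μ).restrict F)

theorem wss_eq (μ f : V → ℝ) : QuadraticMap.weightedSumSquares ℝ μ f = wf μ f f := by
  simp [QuadraticMap.weightedSumSquares_apply, wf, mul_assoc]

theorem np_exists (μ : V → ℝ) (F : Submodule ℝ (V → ℝ)) :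
    ∃ W ≤ F, Module.finrank ℝ W = np μ F ∧ PosOn μ W := by
  obtain ⟨W, h1, h2⟩ := exists_finrank_eq_sigPos_and_posDef
    ((QuadraticMap.weightedSumSquares ℝ μ).restrict F)
  refine ⟨W.map F.subtype, Submodule.map_subtype_le _ _, ?_, ?_⟩
  · rw [← LinearEquiv.finrank_eq (W.equivMapOfInjective F.subtype F.injective_subtype)]
    exact h1
  · rintro f ⟨g, hg, rfl⟩ hf
    have h3 : (⟨g, hg⟩ : W) ≠ 0 := by
      intro h
      apply hf
      have : g = 0 := congrArg Subtype.val h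
      rw [this]; exact map_zero _
    have := h2 ⟨g, hg⟩ h3
    rw [QuadraticMap.restrict_apply, QuadraticMap.restrict_apply, wss_eq] at this
    exact this

theorem le_np {μ : V → ℝ} {F W : Submodule ℝ (V → ℝ)} (hW : W ≤ F) (h : PosOn μ W) :
    Module.finrank ℝ W ≤ np μ F := by
  rw [← LinearEquiv.finrank_eq (Submodule.comapSubtypeEquivOfLe hW)]
  apply le_sigPos_of_posDef
  rintro ⟨⟨f, hf⟩, hf'⟩ h0
  have := h f hf' (by intro h; apply h0; ext1; ext1; exact h)
  rw [QuadraticMap.restrict_apply, QuadraticMap.restrict_apply, wss_eq]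
  exact this

theorem polar_wss (μ f g : V → ℝ) :
    QuadraticMap.polar (QuadraticMap.weightedSumSquares ℝ μ) f g = 2 * wf μ f g := by
  simp only [QuadraticMap.polar, wss_eq, wf_add_left, wf_add_right]
  rw [wf_comm μ g f]; ring

theorem np_sum (μ : V → ℝ) (F : Submodule ℝ (V → ℝ)) :
    np μ F + np (-μ) F + Module.finrank ℝ (rad μ F) = Module.finrank ℝ F := by
  have h := QuadraticForm.sigPos_add_sigNeg_add_radical
    (Q := (QuadraticMap.weightedSumSquares ℝ μ).restrict F)
  have h1 : sigNeg ((QuadraticMap.weightedSumSquares ℝ μ).restrict F) = np (-μ) F := by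
    rw [np, ← sigPos_neg]
    congr 1
    ext f
    simp [QuadraticMap.restrict_apply]
  have h2 : Module.finrank ℝ
      ((QuadraticMap.weightedSumSquares ℝ μ).restrict F).radical = Module.finrank ℝ (rad μ F) := by
    have : ((QuadraticMap.weightedSumSquares ℝ μ).restrict F).radical
        = (rad μ F).comap F.subtype := by
      ext f
      rw [QuadraticMap.mem_radical_iff']
      simp only [Submodule.mem_comap, mem_rad]
      constructor
      · intro h
        refine ⟨f.2, fun g hg => ?_⟩
        have e := h.2 ⟨g, hg⟩
        have e0 := h.1
        rw [QuadraticMap.restrict_apply, wss_eq] at e0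
        rw [QuadraticMap.restrict_apply, wss_eq, QuadraticMap.restrict_apply, wss_eq] at e
        simp only [Submodule.coe_add, wf_add_left, wf_add_right, e0] at e
        rw [wf_comm μ g f] at e
        change wf μ (f : V → ℝ) g = 0
        linarith
      · rintro ⟨_, h⟩
        have e0 : wf μ (f : V → ℝ) f = 0 := h f f.2
        refine ⟨by rw [QuadraticMap.restrict_apply, wss_eq]; exact e0, fun g => ?_⟩
        have e : wf μ (f : V → ℝ) g = 0 := h g g.2
        rw [QuadraticMap.restrict_apply, wss_eq, QuadraticMap.restrict_apply, wss_eq]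
        simp only [Submodule.coe_add, wf_add_left, wf_add_right]
        rw [wf_comm μ (g : V → ℝ) f, e, e0]; ring
    rw [this]
    exact LinearEquiv.finrank_eq (Submodule.comapSubtypeEquivOfLe (fun f hf => hf.1))
  rw [← h, ← h1, ← h2]; rfl

theorem wf_continuous : Continuous fun z : (V → ℝ) × (V → ℝ) => wf z.1 z.2 z.2 := by
  unfold wf; fun_prop

theorem posOn_eventually {μ : V → ℝ} {W : Submodule ℝ (V → ℝ)} (h : PosOn μ W) :
    ∀ᶠ ν in nhds μ, PosOn ν W := by
  have hK : IsCompact ((W : Set (V → ℝ)) ∩ Metric.sphere 0 1) :=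
    (isCompact_sphere (0 : V → ℝ) 1).inter_left W.closed_of_finiteDimensional
  have := hK.eventually_forall_of_forall_eventually (x₀ := μ)
    (P := fun ν f => 0 < wf ν f f) (fun f hf => by
      apply (wf_continuous (V := V)).continuousAt.eventually (lt_mem_nhds _)
      refine h f hf.1 ?_
      rintro rfl
      simpa using hf.2)
  filter_upwards [this] with ν hν f hf h0
  have hn : ‖f‖ ≠ 0 := norm_ne_zero_iff.2 h0
  have := hν (‖f‖⁻¹ • f) ⟨W.smul_mem _ hf, by simp [norm_smul, hn]⟩
  rw [wf_smul_left, wf_smul_right] at this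
  have h3 : 0 < ‖f‖⁻¹ := by positivity
  nlinarith [mul_pos h3 h3, this, pos_of_mul_pos_right this h3.le,
    pos_of_mul_pos_right (pos_of_mul_pos_right this h3.le) h3.le]

theorem np_semicont (μ : V → ℝ) (F : Submodule ℝ (V → ℝ)) :
    ∀ᶠ ν in nhds μ, np μ F ≤ np ν F := by
  obtain ⟨W, h1, h2, h3⟩ := np_exists μ F
  filter_upwards [posOn_eventually h3] with ν hν
  rw [← h2]; exact le_np h1 hν

theorem np_const {I : Set ℝ} (hI : IsPreconnected I) {m : ℝ → V → ℝ} (hm : Continuous m)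
    {F : Submodule ℝ (V → ℝ)} {N : Submodule ℝ (V → ℝ)} (hr : ∀ c ∈ I, rad (m c) F = N)
    {c c' : ℝ} (hc : c ∈ I) (hc' : c' ∈ I) : np (m c) F = np (m c') F := by
  refine hI.constant (f := fun c => np (m c) F) ?_ hc hc'
  intro a ha
  rw [ContinuousWithinAt, nhds_discrete, Filter.tendsto_pure]
  have h1 := hm.continuousAt.eventually (np_semicont (m a) F)
  have h2 := (hm.neg).continuousAt.eventually (np_semicont (-(m a)) F)
  filter_upwards [nhdsWithin_le_nhds h1, nhdsWithin_le_nhds h2, self_mem_nhdsWithin] with b e1 e2 hb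
  have e3 := np_sum (m a) F
  have e4 := np_sum (m b) F
  rw [hr a ha] at e3
  rw [hr b hb] at e4
  simp only [Pi.neg_apply] at e2
  change np (-m a) F ≤ np (-m b) F at e2
  omega

theorem np_extend {μ : V → ℝ} {F W : Submodule ℝ (V → ℝ)} (hW : W ≤ F) (h : PosOn μ W)
    {u : V → ℝ} (hu : u ∈ F) (ho : ∀ w ∈ W, wf μ u w = 0) (hp : 0 < wf μ u u) :
    Module.finrank ℝ W + 1 ≤ np μ F := by
  have hu0 : u ≠ 0 := by rintro rfl; simp [wf_zero_left] at hp
  have hd : Disjoint W (ℝ ∙ u) := by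
    rw [Submodule.disjoint_span_singleton' hu0]
    intro h; exact hp.ne' (ho u h)
  have h1 : Module.finrank ℝ (W ⊔ (ℝ ∙ u) : Submodule ℝ (V → ℝ)) = Module.finrank ℝ W + 1 := by
    have := Submodule.finrank_sup_add_finrank_inf_eq W (ℝ ∙ u)
    rw [hd.eq_bot, finrank_bot, finrank_span_singleton hu0] at this
    omega
  rw [← h1]
  apply le_np
  · exact sup_le hW (by rw [Submodule.span_singleton_le_iff_mem]; exact hu)
  · intro f hf h0
    obtain ⟨w, hw, v, hv, rfl⟩ := Submodule.mem_sup.1 hf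
    obtain ⟨a, rfl⟩ := Submodule.mem_span_singleton.1 hv
    have e : wf μ (w + a • u) (w + a • u) = wf μ w w + a ^ 2 * wf μ u u := by
      simp only [wf_add_left, wf_add_right, wf_smul_left, wf_smul_right, ho w hw, wf_comm μ w u]
      ring
    rw [e]
    by_cases hw0 : w = 0
    · subst hw0
      have ha : a ≠ 0 := by rintro rfl; simp at h0
      have : 0 < a ^ 2 := by positivity
      rw [wf_zero_left]; nlinarith [mul_pos this hp]
    · have := h w hw hw0
      have : 0 ≤ a ^ 2 * wf μ u u := by positivity
      linarith

theorem finrank_map_of_ker {W : Submodule ℝ (V → ℝ)} (T : (V → ℝ) →ₗ[ℝ] (V → ℝ))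
    (h : ∀ f ∈ W, T f = 0 → f = 0) : Module.finrank ℝ (W.map T) = Module.finrank ℝ W := by
  have : W.map T = LinearMap.range (T.domRestrict W) := by
    ext f; simp [Submodule.mem_map, LinearMap.mem_range]
  rw [this]
  apply LinearMap.finrank_range_of_inj
  rw [← LinearMap.ker_eq_bot, LinearMap.ker_eq_bot']
  intro f hf
  exact Subtype.ext (h f f.2 hf)

theorem jump_ge {m0 : V → ℝ} {F : Submodule ℝ (V → ℝ)} {s : V} {f0 : V → ℝ}
    (hf0 : f0 ∈ rad m0 F) (hs : f0 s ≠ 0) :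
    ∀ᶠ a in nhds m0, f0 ∈ rad a F → ∀ k : ℝ,
      np m0 F + (if 0 < k then 1 else 0) ≤ np (a + Pi.single s k) F := by
  obtain ⟨W, h1, h2, h3⟩ := np_exists m0 F
  let T : (V → ℝ) →ₗ[ℝ] (V → ℝ) :=
    LinearMap.id - (LinearMap.toSpanSingleton ℝ _ f0) ∘ₗ ((f0 s)⁻¹ • LinearMap.proj s)
  have hT : ∀ f, T f = f - ((f0 s)⁻¹ * f s) • f0 := fun f => by
    simp [T, LinearMap.toSpanSingleton_apply]
  have hTs : ∀ f, T f s = 0 := fun f => by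
    rw [hT]; simp; field_simp; simp
  have hTF : ∀ f ∈ F, T f ∈ F := fun f hf => by
    rw [hT]; exact F.sub_mem hf (F.smul_mem _ hf0.1)
  have hTw : ∀ f ∈ F, wf m0 (T f) (T f) = wf m0 f f := fun f hf => by
    have e1 : wf m0 f0 f = 0 := hf0.2 f hf
    have e2 : wf m0 f0 f0 = 0 := hf0.2 f0 hf0.1
    have e3 : wf m0 f f0 = 0 := by rw [wf_comm, e1]
    rw [hT, sub_eq_add_neg, ← neg_smul]
    simp only [wf_add_left, wf_add_right, wf_smul_left, wf_smul_right, e1, e2, e3]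
    ring
  have hinj : ∀ f ∈ W, T f = 0 → f = 0 := by
    intro f hf hk
    by_contra h
    have := h3 f hf h
    rw [← hTw f (h1 hf), hk, wf_zero_left] at this
    exact lt_irrefl _ this
  have hfr : Module.finrank ℝ (W.map T) = np m0 F := by
    rw [← h2]
    exact finrank_map_of_ker T hinj
  have hWF : W.map T ≤ F := by
    rintro _ ⟨f, hf, rfl⟩; exact hTF f (h1 hf)
  have hpos : PosOn m0 (W.map T) := by
    rintro _ ⟨f, hf, rfl⟩ h0
    rw [hTw f (h1 hf)]
    apply h3 f hf
    rintro rfl; exact h0 (map_zero _)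
  filter_upwards [posOn_eventually hpos] with a ha hfa k
  have hpos' : PosOn (a + Pi.single s k) (W.map T) := by
    intro f hf h0
    have hfs : f s = 0 := by obtain ⟨g, _, rfl⟩ := hf; exact hTs g
    rw [wf_add, wf_single, hfs]; simpa using ha f hf h0
  split_ifs with hk
  · rw [← hfr]
    refine np_extend hWF hpos' hfa.1 ?_ ?_
    · intro w hw
      have hfs : w s = 0 := by obtain ⟨g, _, rfl⟩ := hw; exact hTs g
      rw [wf_add, wf_single, hfs, hfa.2 w (hWF hw)]; simp
    · rw [wf_add, wf_single, hfa.2 f0 hfa.1, zero_add, mul_assoc]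
      exact mul_pos hk (mul_self_pos.2 hs)
  · rw [← hfr]; exact le_np hWF hpos'

theorem rad_neg (μ : V → ℝ) (F : Submodule ℝ (V → ℝ)) : rad (-μ) F = rad μ F := by
  ext f; simp [mem_rad, wf_neg]

theorem finrank_hyper {N N' : Submodule ℝ (V → ℝ)} {s : V} {f0 : V → ℝ} (h0 : f0 ∈ N)
    (hs : f0 s ≠ 0) (h : ∀ f, f ∈ N' ↔ f ∈ N ∧ f s = 0) :
    Module.finrank ℝ N' + 1 = Module.finrank ℝ N := by
  let φ : N →ₗ[ℝ] ℝ := (LinearMap.proj s : (V → ℝ) →ₗ[ℝ] ℝ) ∘ₗ N.subtype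
  have h1 := LinearMap.finrank_range_add_finrank_ker φ
  have h2 : LinearMap.range φ = ⊤ := by
    rw [LinearMap.range_eq_top]
    intro r
    refine ⟨(r / f0 s) • ⟨f0, h0⟩, ?_⟩
    simp [φ, hs]
  have h3 : Module.finrank ℝ (LinearMap.ker φ) = Module.finrank ℝ N' := by
    have : LinearMap.ker φ = N'.comap N.subtype := by
      ext f
      simp [φ, h]
    rw [this]
    exact LinearEquiv.finrank_eq (Submodule.comapSubtypeEquivOfLe (fun f hf => ((h f).1 hf).1))
  rw [h2, h3, finrank_top, Module.finrank_self] at h1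
  omega

/-- crossing a critical value -/
theorem jump_eq {m0 : V → ℝ} {F N : Submodule ℝ (V → ℝ)} {s : V} {f0 : V → ℝ}
    (hf0 : f0 ∈ rad m0 F) (hs : f0 s ≠ 0) (hN : ∀ f, f ∈ N ↔ f ∈ rad m0 F ∧ f s = 0) :
    ∀ᶠ a in nhds m0, f0 ∈ rad a F → ∀ k : ℝ, k ≠ 0 → rad (a + Pi.single s k) F = N →
      np (a + Pi.single s k) F = np m0 F + (if 0 < k then 1 else 0) ∧
      np (-(a + Pi.single s k)) F = np (-m0) F + (if k < 0 then 1 else 0) := by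
  have h1 := jump_ge hf0 hs
  have h2 := jump_ge (m0 := -m0) (F := F) (s := s) (f0 := f0) (by rwa [rad_neg]) hs
  have h3 := (continuous_neg (G := V → ℝ)).continuousAt.eventually h2
  filter_upwards [h1, h3] with a e1 e2 hfa k hk hr
  have e3 := e1 hfa k
  have e4 := e2 (by rwa [rad_neg]) (-k)
  have e5 : -a + Pi.single s (-k) = -(a + Pi.single s k) := by
    rw [Pi.single_neg]; abel
  rw [e5] at e4
  have e6 := np_sum m0 F
  have e7 := np_sum (a + Pi.single s k) F
  rw [hr] at e7
  have e8 := finrank_hyper hf0 hs hN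
  simp only [neg_pos] at e4
  rcases lt_or_gt_of_ne hk with h | h
  · have : ¬ 0 < k := by linarith
    simp only [h, this, if_true, if_false] at *
    omega
  · have : ¬ k < 0 := by linarith
    simp only [h, this, if_true, if_false] at *
    omega

theorem hr_char {μ μ' : V → ℝ} {F F' : Submodule ℝ (V → ℝ)} (L : (V → ℝ) →ₗ[ℝ] (V → ℝ))
    (hL : ∀ f ∈ F', L f ∈ F) (hμ : ∀ f, wf μ' f f = wf μ (L f) (L f))
    (hn : np (-μ) F ≤ np (-μ') F') {f : V → ℝ} (hf : f ∈ F)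
    (hp : ∀ g ∈ F', wf μ f (L g) = 0) :
    0 ≤ wf μ f f ∧ (wf μ f f = 0 → f ∈ rad μ F) := by
  obtain ⟨W, h1, h2, h3⟩ := np_exists (-μ') F'
  have hinj : ∀ f ∈ W, L f = 0 → f = 0 := by
    intro f hf hk
    by_contra h
    have := h3 f hf h
    rw [wf_neg, hμ, hk, wf_zero_left] at this
    linarith
  have hfr : Module.finrank ℝ (W.map L) = np (-μ') F' := by
    rw [← h2]
    exact finrank_map_of_ker L hinj
  have hWF : W.map L ≤ F := by
    rintro _ ⟨f, hf, rfl⟩; exact hL f (h1 hf)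
  have hpos : PosOn (-μ) (W.map L) := by
    rintro _ ⟨f, hf, rfl⟩ h0
    rw [wf_neg, ← hμ, ← wf_neg]
    apply h3 f hf
    rintro rfl; exact h0 (map_zero _)
  set W1 := W.map L with hW1
  have hfo : ∀ w ∈ W1, wf μ f w = 0 := by
    rintro _ ⟨g, hg, rfl⟩; exact hp g (h1 hg)
  have key : ∀ u ∈ F, (∀ w ∈ W1, wf μ u w = 0) → 0 ≤ wf μ u u := by
    intro u hu ho
    by_contra h
    have := np_extend hWF hpos hu (fun w hw => by rw [wf_neg, ho w hw, neg_zero])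
      (by rw [wf_neg]; linarith)
    omega
  refine ⟨key f hf hfo, fun h0 => ⟨hf, fun g hg => ?_⟩⟩
  -- project g
  obtain ⟨w1, hw1, hw1'⟩ : ∃ w1 ∈ W1, ∀ w ∈ W1, wf μ w1 w = wf μ g w := by
    let B : (V → ℝ) → (W1 →ₗ[ℝ] ℝ) := fun u =>
      { toFun := fun w => wf μ u w
        map_add' := fun a b => by simp [wf_add_right]
        map_smul' := fun a b => by simp [wf_smul_right] }
    let T : W1 →ₗ[ℝ] Module.Dual ℝ W1 :=
      { toFun := fun u => B u
        map_add' := fun a b => by ext w; simp [B, wf_add_left]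
        map_smul' := fun a b => by ext w; simp [B, wf_smul_left] }
    have hT : Function.Injective T := by
      rw [← LinearMap.ker_eq_bot, LinearMap.ker_eq_bot']
      intro u hu
      by_contra h
      have e := hpos u u.2 (by simpa using h)
      have : T u u = 0 := by rw [hu]; rfl
      change wf μ (u : V → ℝ) u = 0 at this
      rw [wf_neg] at e
      linarith
    have hs := (LinearMap.injective_iff_surjective_of_finrank_eq_finrank
      (Subspace.dual_finrank_eq (K := ℝ) (V := W1)).symm).1 hT
    obtain ⟨w1, e⟩ := hs (B g)
    refine ⟨w1, w1.2, fun w hw => ?_⟩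
    exact congrArg (fun φ : Module.Dual ℝ W1 => φ ⟨w, hw⟩) e
  by_contra hne
  set β := wf μ f g with hβ
  have hfg' : wf μ f (g - w1) = β := by
    rw [sub_eq_add_neg, ← neg_one_smul ℝ w1, wf_add_right, wf_smul_right, hfo w1 hw1]; simp [hβ]
  have hor : ∀ w ∈ W1, wf μ (g - w1) w = 0 := fun w hw => by
    rw [sub_eq_add_neg, ← neg_one_smul ℝ w1, wf_add_left, wf_smul_left, hw1' w hw]; ring
  set g' := g - w1
  have hg' : g' ∈ F := F.sub_mem hg (hWF hw1)
  have := key (g' + (-(wf μ g' g' + 1) / (2 * β)) • f) (F.add_mem hg' (F.smul_mem _ hf))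
    (fun w hw => by rw [wf_add_left, wf_smul_left, hor w hw, hfo w hw]; ring)
  simp only [wf_add_left, wf_add_right, wf_smul_left, wf_smul_right, h0, hfg',
    wf_comm μ g' f] at this
  have e : -(wf μ g' g' + 1) / (2 * β) * β = -(wf μ g' g' + 1) / 2 := by field_simp
  rw [e] at this
  linarith
end WF


structure TD (V R : Type*) [Fintype V] [Fintype R] where
  d : ℕ
  B : V → Finset R
  cardB : ∀ s, (B s).card = d
  x : R → V → ℝ
  x_ne : ∀ r s, x r s ≠ 0 ↔ r ∈ B s
  w : V → ℝ
  w_pos : ∀ s, 0 < w s * ∏ r ∈ B s, x r s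
  ht : V → ℝ
  ht_inj : Function.Injective ht
  gap : R → V → ℝ
  gap_nonneg : ∀ r s, 0 ≤ gap r s
  gap_zero : ∀ r s, gap r s = 0 ↔ r ∈ B s
  ht_sub : ∀ s s', ht s - ht s' = ∑ r, gap r s' * x r s
  one : ∃ a : R → ℝ, ∀ s, ∑ r, a r * x r s = 1
  spn : ∀ τ : Finset R, τ.card < d → ∀ r ∈ τ, ∃ a : R → ℝ, (∀ r' ∈ τ, a r' = 0) ∧
    ∀ s, τ ⊆ B s → x r s = ∑ r', a r' * x r' s
  nbr : ∀ (τ : Finset R) s r, τ ⊆ B s → r ∈ B s → r ∉ τ → ∃ s', τ ⊆ B s' ∧ r ∉ B s'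
  l1 : ∀ l : List R, l.length < d → ∑ s, w s * (l.map (fun r => x r s)).prod = 0

namespace TD
variable {V R : Type*} [Fintype V] [Fintype R] (D : TD V R)

noncomputable def F (j : ℕ) : Submodule ℝ (V → ℝ) := (Submodule.span ℝ (Set.range D.x)) ^ j

noncomputable def xp (τ : Finset R) : V → ℝ := fun s => ∏ r ∈ τ, D.x r s

theorem F_mul {i j : ℕ} {f g : V → ℝ} (hf : f ∈ D.F i) (hg : g ∈ D.F j) : f * g ∈ D.F (i + j) := by
  unfold F; rw [pow_add]; exact Submodule.mul_mem_mul hf hg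

theorem x_mem (r : R) : D.x r ∈ D.F 1 := by
  unfold F; rw [pow_one]; exact Submodule.subset_span ⟨r, rfl⟩

theorem F_one_zero : (1 : V → ℝ) ∈ D.F 0 := by
  unfold F; rw [pow_zero]; exact Submodule.one_le.1 le_rfl

theorem comb_mem (a : R → ℝ) : (fun s => ∑ r, a r * D.x r s) ∈ D.F 1 := by
  have : (fun s => ∑ r, a r * D.x r s) = ∑ r, a r • D.x r := by
    ext s; simp
  rw [this]
  exact Submodule.sum_mem _ fun r _ => Submodule.smul_mem _ _ (D.x_mem r)

theorem F_one_one : (1 : V → ℝ) ∈ D.F 1 := by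
  obtain ⟨a, ha⟩ := D.one
  convert D.comb_mem a using 1
  ext s; simp [ha s]

theorem F_mono {i j : ℕ} (h : i ≤ j) : D.F i ≤ D.F j := by
  induction h with
  | refl => exact le_rfl
  | step h ih =>
    refine ih.trans fun f hf => ?_
    simpa using D.F_mul hf D.F_one_one

theorem xp_mem (τ : Finset R) : D.xp τ ∈ D.F τ.card := by
  induction τ using Finset.induction_on with
  | empty =>
    have : D.xp ∅ = 1 := by ext s; simp [xp]
    rw [this]; exact D.F_one_zero
  | insert r τ hr ih =>
    have : D.xp (insert r τ) = D.xp τ * D.x r := by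
      ext s; simp [xp, Finset.prod_insert hr, mul_comm]
    rw [this, Finset.card_insert_of_notMem hr]
    exact D.F_mul ih (D.x_mem r)

theorem xp_ne (τ : Finset R) (s : V) : D.xp τ s ≠ 0 ↔ τ ⊆ D.B s := by
  simp only [xp, Finset.prod_ne_zero_iff, D.x_ne]; rfl

theorem hc_mem (c : ℝ) : (fun s => D.ht s - c) ∈ D.F 1 := by
  by_cases hV : Nonempty V
  · obtain ⟨s0⟩ := hV
    have : (fun s => D.ht s - c) = (fun s => ∑ r, D.gap r s0 * D.x r s)
        + (D.ht s0 - c) • (1 : V → ℝ) := by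
      ext s; simp [← D.ht_sub]
    rw [this]
    exact Submodule.add_mem _ (D.comb_mem _) (Submodule.smul_mem _ _ D.F_one_one)
  · convert Submodule.zero_mem _ using 1
    ext s; exact (hV ⟨s⟩).elim

theorem hcp_mem (c : ℝ) (m : ℕ) : (fun s => (D.ht s - c) ^ m) ∈ D.F m := by
  have := Submodule.pow_mem_pow (Submodule.span ℝ (Set.range D.x)) (x := fun s => D.ht s - c)
    (by simpa [F] using D.hc_mem c) m
  exact this

theorem hcp_sub (c c' : ℝ) (m : ℕ) :
    (fun s => (D.ht s - c) ^ (m + 1) - (D.ht s - c') ^ (m + 1)) ∈ D.F m := by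
  induction m with
  | zero =>
    have : (fun s => (D.ht s - c) ^ (0 + 1) - (D.ht s - c') ^ (0 + 1)) = (c' - c) • (1 : V → ℝ) := by
      ext s; simp
    rw [this]; exact Submodule.smul_mem _ _ D.F_one_zero
  | succ m ih =>
    have : (fun s => (D.ht s - c) ^ (m + 1 + 1) - (D.ht s - c') ^ (m + 1 + 1))
      = (fun s => (D.ht s - c) ^ (m + 1) - (D.ht s - c') ^ (m + 1)) * (fun s => D.ht s - c)
        + (c' - c) • (fun s => (D.ht s - c') ^ (m + 1)) := by
      ext s; simp only [Pi.mul_apply, Pi.add_apply, Pi.smul_apply, smul_eq_mul]; ring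
    rw [this]
    exact Submodule.add_mem _ (D.F_mul ih (D.hc_mem c)) (Submodule.smul_mem _ _ (D.hcp_mem _ _))

theorem F_succ_induction {j : ℕ} {P : (V → ℝ) → Prop} (h0 : P 0)
    (hadd : ∀ f g, P f → P g → P (f + g))
    (hsmul : ∀ (a : ℝ) f, P f → P (a • f))
    (hx : ∀ r, ∀ g ∈ D.F j, P (D.x r * g)) {f : V → ℝ} (hf : f ∈ D.F (j + 1)) : P f := by
  unfold F at hf
  rw [pow_succ'] at hf
  refine Submodule.mul_induction_on hf (fun m hm n hn => ?_) hadd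
  · induction hm using Submodule.span_induction with
    | mem y hy => obtain ⟨r, rfl⟩ := hy; exact hx r n hn
    | zero => rw [zero_mul]; exact h0
    | add a b _ _ ha hb => rw [add_mul]; exact hadd _ _ ha hb
    | smul a b _ hb => rw [smul_mul_assoc]; exact hsmul _ _ hb

theorem l1' {j : ℕ} : ∀ {f : V → ℝ}, f ∈ D.F j → ∀ l : List R, j + l.length < D.d →
    ∑ s, D.w s * (l.map (fun r => D.x r s)).prod * f s = 0 := by
  induction j with
  | zero =>
    intro f hf l hl
    unfold F at hf
    rw [pow_zero, Submodule.mem_one] at hf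
    obtain ⟨a, rfl⟩ := hf
    have := D.l1 l (by omega)
    simp only [Pi.algebraMap_apply, ← Finset.sum_mul, this, zero_mul]
  | succ j ih =>
    intro f hf
    refine D.F_succ_induction (P := fun f => ∀ l : List R, j + 1 + l.length < D.d →
      ∑ s, D.w s * (l.map (fun r => D.x r s)).prod * f s = 0) ?_ ?_ ?_ ?_ hf
    · intro l _; simp
    · intro f g h1 h2 l hl
      simp only [Pi.add_apply, mul_add, Finset.sum_add_distrib, h1 l hl, h2 l hl, add_zero]
    · intro a f h1 l hl
      have := h1 l hl
      simp only [Pi.smul_apply, smul_eq_mul]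
      rw [← mul_zero a, ← this, Finset.mul_sum]
      refine Finset.sum_congr rfl fun s _ => by ring
    · intro r g hg l hl
      have := ih hg (r :: l) (by simp; omega)
      rw [← this]
      refine Finset.sum_congr rfl fun s _ => ?_
      simp only [List.map_cons, List.prod_cons, Pi.mul_apply]; ring

theorem l1F {j : ℕ} {f : V → ℝ} (hf : f ∈ D.F j) (hj : j < D.d) : ∑ s, D.w s * f s = 0 := by
  simpa using D.l1' hf [] (by simpa using hj)

/-! weights -/

noncomputable def bw (τ : Finset R) (S : Finset V) : V → ℝ :=
  fun s => if s ∈ S then D.w s * D.xp τ s else 0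

noncomputable def wt (τ : Finset R) (S : Finset V) (c : ℝ) (m : ℕ) : V → ℝ :=
  fun s => D.bw τ S s * (D.ht s - c) ^ m

theorem wt_zero (τ : Finset R) (S : Finset V) (c : ℝ) : D.wt τ S c 0 = D.bw τ S := by
  ext s; simp [wt]

theorem bw_eq_zero {τ : Finset R} {S : Finset V} {s : V} (h : ¬ τ ⊆ D.B s) : D.bw τ S s = 0 := by
  have : D.xp τ s = 0 := by by_contra h'; exact h ((D.xp_ne τ s).1 h')
  simp [bw, this]

theorem bw_congr {τ : Finset R} {S S' : Finset V} (h : ∀ s, τ ⊆ D.B s → (s ∈ S ↔ s ∈ S')) :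
    D.bw τ S = D.bw τ S' := by
  ext s
  by_cases hs : τ ⊆ D.B s
  · simp [bw, h s hs]
  · rw [D.bw_eq_zero hs, D.bw_eq_zero hs]

theorem bw_insert {τ : Finset R} {S : Finset V} {r : R} (hr : r ∉ τ) :
    D.bw (insert r τ) S = D.bw τ S * D.x r := by
  ext s; by_cases h : s ∈ S <;> simp [bw, h, xp, Finset.prod_insert hr]; ring

theorem wt_insert {τ : Finset R} {S : Finset V} {r : R} (hr : r ∉ τ) (c : ℝ) (m : ℕ) :
    D.wt (insert r τ) S c m = D.wt τ S c m * D.x r := by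
  ext s; simp only [wt, D.bw_insert hr, Pi.mul_apply]; ring

theorem wf_mul_right {V : Type*} [Fintype V] (μ h f g : V → ℝ) : wf (μ * h) f g = wf μ f (h * g) := by
  simp only [wf, Pi.mul_apply]; exact Finset.sum_congr rfl fun s _ => by ring

theorem wt_add (τ : Finset R) (S : Finset V) (c : ℝ) (m k : ℕ) :
    D.wt τ S c (m + k) = D.wt τ S c m * (fun s => (D.ht s - c) ^ k) := by
  ext s; simp only [wt, Pi.mul_apply]; ring

theorem wt_eq (τ : Finset R) (S : Finset V) (c : ℝ) (k : ℕ) :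
    D.wt τ S c k = D.bw τ S * (fun s => (D.ht s - c) ^ k) := rfl

/-- null space -/
noncomputable def NN (τ : Finset R) (S : Finset V) (j : ℕ) : Submodule ℝ (V → ℝ) where
  carrier := {f | f ∈ D.F j ∧ ∀ g ∈ D.F (D.d - τ.card - j), wf (D.bw τ S) f g = 0}
  add_mem' := by
    rintro f f' ⟨h1, h2⟩ ⟨h3, h4⟩
    exact ⟨Submodule.add_mem _ h1 h3, fun g hg => by rw [wf_add_left, h2 g hg, h4 g hg, add_zero]⟩
  zero_mem' := ⟨Submodule.zero_mem _, fun g _ => wf_zero_left _ g⟩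
  smul_mem' := by
    rintro a f ⟨h1, h2⟩
    exact ⟨Submodule.smul_mem _ a h1, fun g hg => by rw [wf_smul_left, h2 g hg, mul_zero]⟩

theorem mem_NN {τ : Finset R} {S : Finset V} {j : ℕ} {f : V → ℝ} :
    f ∈ D.NN τ S j ↔ f ∈ D.F j ∧ ∀ g ∈ D.F (D.d - τ.card - j), wf (D.bw τ S) f g = 0 := Iff.rfl

theorem wf_full {τ : Finset R} {S : Finset V} (hS : ∀ s, τ ⊆ D.B s → s ∈ S) {f g : V → ℝ} {i : ℕ}
    (hg : f * g ∈ D.F i) (hi : i + τ.card < D.d) : wf (D.bw τ S) f g = 0 := by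
  rw [← D.l1F (D.F_mul hg (D.xp_mem τ)) hi]
  refine Finset.sum_congr rfl fun s _ => ?_
  by_cases hs : τ ⊆ D.B s
  · simp only [bw, hS s hs, if_true, Pi.mul_apply]; ring
  · have : D.xp τ s = 0 := by by_contra h'; exact hs ((D.xp_ne τ s).1 h')
    rw [D.bw_eq_zero hs]; simp [this]

theorem NN_le_rad {τ : Finset R} {S : Finset V} {j : ℕ} (hj : 2 * j + τ.card ≤ D.d) (c : ℝ) :
    D.NN τ S j ≤ rad (D.wt τ S c (D.d - τ.card - 2 * j)) (D.F j) := by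
  rintro f ⟨h1, h2⟩
  refine ⟨h1, fun g hg => ?_⟩
  rw [wt_eq, wf_mul_right]
  apply h2
  have := D.F_mul (D.hcp_mem c (D.d - τ.card - 2 * j)) hg
  convert this using 2
  omega

/-! signs -/
noncomputable def Rm (τ : Finset R) (s : V) : Finset R := (D.B s \ τ).filter (fun r => D.x r s < 0)
noncomputable def Rp (τ : Finset R) (s : V) : Finset R := (D.B s \ τ).filter (fun r => 0 < D.x r s)

theorem mem_Rm {τ : Finset R} {s : V} {r : R} :
    r ∈ D.Rm τ s ↔ (r ∈ D.B s ∧ r ∉ τ) ∧ D.x r s < 0 := by simp [Rm]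
theorem mem_Rp {τ : Finset R} {s : V} {r : R} :
    r ∈ D.Rp τ s ↔ (r ∈ D.B s ∧ r ∉ τ) ∧ 0 < D.x r s := by simp [Rp]

theorem mem_B_cases {τ : Finset R} {s : V} {r : R} (hr : r ∈ D.B s) :
    r ∈ τ ∨ r ∈ D.Rm τ s ∨ r ∈ D.Rp τ s := by
  rw [mem_Rm, mem_Rp]
  have := (D.x_ne r s).2 hr
  rcases lt_or_gt_of_ne this with h | h <;> tauto

theorem Rm_sub (τ : Finset R) (s : V) : D.Rm τ s ⊆ D.B s := fun _ h => (D.mem_Rm.1 h).1.1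
theorem Rp_sub (τ : Finset R) (s : V) : D.Rp τ s ⊆ D.B s := fun _ h => (D.mem_Rp.1 h).1.1

theorem Rp_eq (τ : Finset R) (s : V) :
    D.Rp τ s = (D.B s \ τ).filter (fun r => ¬ D.x r s < 0) := by
  ext r
  simp only [Rp, Finset.mem_filter, not_lt]
  constructor
  · rintro ⟨h1, h2⟩; exact ⟨h1, h2.le⟩
  · rintro ⟨h1, h2⟩
    exact ⟨h1, lt_of_le_of_ne h2 ((D.x_ne r s).2 (Finset.mem_sdiff.1 h1).1).symm⟩

theorem card_pq {τ : Finset R} {s : V} (h : τ ⊆ D.B s) :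
    (D.Rm τ s).card + (D.Rp τ s).card + τ.card = D.d := by
  rw [Rp_eq, Rm, Finset.card_filter_add_card_filter_not, Finset.card_sdiff_add_card_eq_card h, D.cardB]

theorem sign_w {τ : Finset R} {s : V} (h : τ ⊆ D.B s) :
    0 < (-1 : ℝ) ^ (D.Rm τ s).card * (D.w s * D.xp τ s) := by
  have h1 := D.w_pos s
  have h2 : ∏ r ∈ D.B s, D.x r s = (∏ r ∈ D.Rm τ s, D.x r s) * (∏ r ∈ D.Rp τ s, D.x r s) * D.xp τ s := by
    rw [Rp_eq, Rm, Finset.prod_filter_mul_prod_filter_not, xp, Finset.prod_sdiff h]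
  have h3 : 0 < (-1 : ℝ) ^ (D.Rm τ s).card * ∏ r ∈ D.Rm τ s, D.x r s := by
    rw [← Finset.prod_const, ← Finset.prod_mul_distrib]
    apply Finset.prod_pos
    intro r hr
    have := (D.mem_Rm.1 hr).2; linarith
  have h4 : 0 < ∏ r ∈ D.Rp τ s, D.x r s := Finset.prod_pos fun r hr => (D.mem_Rp.1 hr).2
  rw [h2] at h1
  have h5 := mul_pos h3 h4
  by_contra hn
  push Not at hn
  have h6 := mul_nonpos_of_nonpos_of_nonneg hn h5.le
  have h7 : ((-1 : ℝ) ^ (D.Rm τ s).card) * ((-1 : ℝ) ^ (D.Rm τ s).card) = 1 := by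
    rw [← mul_pow]; simp
  have h8 : (-1 : ℝ) ^ (D.Rm τ s).card * (D.w s * D.xp τ s) *
    ((-1) ^ (D.Rm τ s).card * ∏ r ∈ D.Rm τ s, D.x r s) * (∏ r ∈ D.Rp τ s, D.x r s) =
      ((-1 : ℝ) ^ (D.Rm τ s).card) * ((-1 : ℝ) ^ (D.Rm τ s).card) * (D.w s *
      ((∏ r ∈ D.Rm τ s, D.x r s) * (∏ r ∈ D.Rp τ s, D.x r s) * D.xp τ s)) := by ring
  rw [h7] at h8
  nlinarith

theorem ht_lt_of_Rm {τ : Finset R} {s s' : V} (h1 : τ ⊆ D.B s')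
    (h2 : D.Rm τ s ⊆ D.B s') (hne : s' ≠ s) : D.ht s' < D.ht s := by
  have h := D.ht_sub s s'
  have h3 : 0 ≤ ∑ r, D.gap r s' * D.x r s := by
    apply Finset.sum_nonneg
    intro r _
    by_cases hr' : r ∈ D.B s'
    · rw [(D.gap_zero r s').2 hr', zero_mul]
    by_cases hr : r ∈ D.B s
    · rcases D.mem_B_cases (τ := τ) hr with h4 | h4 | h4
      · exact absurd (h1 h4) hr'
      · exact absurd (h2 h4) hr'
      · exact mul_nonneg (D.gap_nonneg _ _) (D.mem_Rp.1 h4).2.le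
    · have : D.x r s = 0 := by by_contra h'; exact hr ((D.x_ne r s).1 h')
      simp [this]
  have h5 : D.ht s' ≠ D.ht s := fun h => hne (D.ht_inj h)
  exact lt_of_le_of_ne (by linarith) h5

theorem ht_gt_of_Rp {τ : Finset R} {s s' : V} (h1 : τ ⊆ D.B s')
    (h2 : D.Rp τ s ⊆ D.B s') (hne : s' ≠ s) : D.ht s < D.ht s' := by
  have h := D.ht_sub s s'
  have h3 : ∑ r, D.gap r s' * D.x r s ≤ 0 := by
    apply Finset.sum_nonpos
    intro r _
    by_cases hr' : r ∈ D.B s'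
    · rw [(D.gap_zero r s').2 hr', zero_mul]
    by_cases hr : r ∈ D.B s
    · rcases D.mem_B_cases (τ := τ) hr with h4 | h4 | h4
      · exact absurd (h1 h4) hr'
      · exact mul_nonpos_of_nonneg_of_nonpos (D.gap_nonneg _ _) (D.mem_Rm.1 h4).2.le
      · exact absurd (h2 h4) hr'
    · have : D.x r s = 0 := by by_contra h'; exact hr ((D.x_ne r s).1 h')
      simp [this]
  have h5 : D.ht s' ≠ D.ht s := fun h => hne (D.ht_inj h)
  exact lt_of_le_of_ne (by linarith) h5.symm

theorem exists_lower {τ : Finset R} {s : V} (h : τ ⊆ D.B s) (hq : 0 < (D.Rp τ s).card) :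
    ∃ s', τ ⊆ D.B s' ∧ D.ht s' < D.ht s := by
  obtain ⟨r, hr⟩ := Finset.card_pos.1 hq
  have hr' := D.mem_Rp.1 hr
  obtain ⟨s', h1, h2⟩ := D.nbr ((D.B s).erase r) s r (Finset.erase_subset _ _) hr'.1.1
    (Finset.notMem_erase _ _)
  have h3 : τ ⊆ D.B s' := fun t ht => h1 (Finset.mem_erase.2 ⟨fun e => hr'.1.2 (e ▸ ht), h ht⟩)
  refine ⟨s', h3, D.ht_lt_of_Rm h3 (fun t ht => h1 (Finset.mem_erase.2 ⟨?_, D.Rm_sub _ _ ht⟩)) ?_⟩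
  · rintro rfl; have := (D.mem_Rm.1 ht).2; linarith [hr'.2]
  · rintro rfl; exact h2 hr'.1.1

theorem exists_higher {τ : Finset R} {s : V} (h : τ ⊆ D.B s) (hq : 0 < (D.Rm τ s).card) :
    ∃ s', τ ⊆ D.B s' ∧ D.ht s < D.ht s' := by
  obtain ⟨r, hr⟩ := Finset.card_pos.1 hq
  have hr' := D.mem_Rm.1 hr
  obtain ⟨s', h1, h2⟩ := D.nbr ((D.B s).erase r) s r (Finset.erase_subset _ _) hr'.1.1
    (Finset.notMem_erase _ _)
  have h3 : τ ⊆ D.B s' := fun t ht => h1 (Finset.mem_erase.2 ⟨fun e => hr'.1.2 (e ▸ ht), h ht⟩)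
  refine ⟨s', h3, D.ht_gt_of_Rp h3 (fun t ht => h1 (Finset.mem_erase.2 ⟨?_, D.Rp_sub _ _ ht⟩)) ?_⟩
  · rintro rfl; have := (D.mem_Rp.1 ht).2; linarith [hr'.2]
  · rintro rfl; exact h2 hr'.1.1

/-! one-vertex change.  `S` is the part of the star strictly above `s0`, `S'` adds `s0`. -/

def Above (τ : Finset R) (S : Finset V) (s0 : V) : Prop :=
  ∀ s, τ ⊆ D.B s → (s ∈ S ↔ D.ht s0 < D.ht s)

def AboveEq (τ : Finset R) (S : Finset V) (s0 : V) : Prop :=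
  ∀ s, τ ⊆ D.B s → (s ∈ S ↔ D.ht s0 ≤ D.ht s)

variable {D}
variable {τ : Finset R} {S S' : Finset V} {s0 : V} (hs0 : τ ⊆ D.B s0)
  (hS : D.Above τ S s0) (hS' : D.AboveEq τ S' s0)

include hs0 hS hS' in
theorem bw_split : D.bw τ S' = D.bw τ S + Pi.single s0 (D.w s0 * D.xp τ s0) := by
  ext s
  by_cases hs : τ ⊆ D.B s
  · by_cases h : s = s0
    · subst h
      have h1 : s ∈ S' := (hS' s hs).2 le_rfl
      have h2 : s ∉ S := fun h => lt_irrefl _ ((hS s hs).1 h)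
      simp [bw, h1, h2]
    · have : s ∈ S' ↔ s ∈ S := by
        rw [hS s hs, hS' s hs]
        exact ⟨fun h1 => lt_of_le_of_ne h1 fun h2 => h (D.ht_inj h2).symm, le_of_lt⟩
      simp [bw, this, Pi.single_eq_of_ne h]
  · have h : s ≠ s0 := by rintro rfl; exact hs hs0
    simp [D.bw_eq_zero hs, Pi.single_eq_of_ne h]

include hs0 hS hS' in
theorem wt_split (c : ℝ) (m : ℕ) : D.wt τ S' c m =
    D.wt τ S c m + Pi.single s0 (D.w s0 * D.xp τ s0 * (D.ht s0 - c) ^ m) := by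
  ext s
  simp only [wt, bw_split hs0 hS hS', Pi.add_apply]
  by_cases h : s = s0
  · subst h; simp; ring
  · simp [Pi.single_eq_of_ne h]

include hs0 in
theorem wx_ne : D.w s0 * D.xp τ s0 ≠ 0 := by
  intro h; have := D.sign_w hs0; rw [h] at this; simp at this

theorem xp_pos_zero {s : V} (hs : τ ⊆ D.B s) (h : ¬ D.ht s0 ≤ D.ht s) : D.xp (D.Rp τ s0) s = 0 := by
  by_contra hne
  have h1 := (D.xp_ne _ s).1 hne
  have : s ≠ s0 := by rintro rfl; exact h le_rfl
  exact h (D.ht_gt_of_Rp hs h1 this).le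

theorem xp_neg_zero {s : V} (hs : τ ⊆ D.B s) (h : D.ht s0 < D.ht s) : D.xp (D.Rm τ s0) s = 0 := by
  by_contra hne
  have h1 := (D.xp_ne _ s).1 hne
  have h2 : s ≠ s0 := by rintro rfl; exact lt_irrefl _ h
  linarith [D.ht_lt_of_Rm hs h1 h2]

include hS' in
theorem wf_Rp (f g : V → ℝ) :
    wf (D.bw τ S') f (D.xp (D.Rp τ s0) * g) = wf (D.bw τ Finset.univ) f (D.xp (D.Rp τ s0) * g) := by
  refine Finset.sum_congr rfl fun s _ => ?_
  by_cases hs : τ ⊆ D.B s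
  · by_cases h : D.ht s0 ≤ D.ht s
    · simp [bw, (hS' s hs).2 h]
    · simp [xp_pos_zero hs h]
  · rw [D.bw_eq_zero hs, D.bw_eq_zero hs]

include hs0 hS hS' in
theorem E1 {j : ℕ} (hj : j < (D.Rm τ s0).card) {f : V → ℝ} (hf : f ∈ D.NN τ S j) : f s0 = 0 := by
  have hpq := D.card_pq hs0
  have h1 : wf (D.bw τ S') f (D.xp (D.Rp τ s0) * 1) = 0 := by
    rw [wf_Rp hS', mul_one]
    refine D.wf_full (fun _ _ => Finset.mem_univ _) (D.F_mul hf.1 (D.xp_mem _)) ?_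
    omega
  have h2 : wf (D.bw τ S) f (D.xp (D.Rp τ s0)) = 0 :=
    hf.2 _ (D.F_mono (by omega) (D.xp_mem _))
  rw [mul_one, bw_split hs0 hS hS', wf_add, h2, wf_single, zero_add] at h1
  have h3 := wx_ne hs0
  have h4 := (D.xp_ne _ s0).2 (D.Rp_sub τ s0)
  by_contra h5
  exact mul_ne_zero (mul_ne_zero h3 h5) h4 h1

include hs0 hS hS' in
theorem E2 {j : ℕ} (hj : j ≤ (D.Rp τ s0).card) {f : V → ℝ} (hf : f ∈ D.NN τ S' j) : f s0 = 0 := by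
  have hpq := D.card_pq hs0
  have h1 : wf (D.bw τ S') f (D.xp (D.Rm τ s0)) = 0 :=
    hf.2 _ (D.F_mono (by omega) (D.xp_mem _))
  have h2 : wf (D.bw τ S) f (D.xp (D.Rm τ s0)) = 0 := by
    refine Finset.sum_eq_zero fun s _ => ?_
    by_cases hs : τ ⊆ D.B s
    · by_cases h : D.ht s0 < D.ht s
      · simp [xp_neg_zero hs h]
      · have : s ∉ S := fun h' => h ((hS s hs).1 h')
        simp [bw, this]
    · rw [D.bw_eq_zero hs]; ring
  rw [bw_split hs0 hS hS', wf_add, h2, wf_single, zero_add] at h1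
  have h3 := wx_ne hs0
  have h4 := (D.xp_ne _ s0).2 (D.Rm_sub τ s0)
  by_contra h5
  exact mul_ne_zero (mul_ne_zero h3 h5) h4 h1

include hS in
theorem E3 (g : V → ℝ) : wf (D.bw τ S) (D.xp (D.Rm τ s0)) g = 0 := by
  refine Finset.sum_eq_zero fun s _ => ?_
  by_cases hs : τ ⊆ D.B s
  · by_cases h : D.ht s0 < D.ht s
    · simp [xp_neg_zero hs h]
    · have : s ∉ S := fun h' => h ((hS s hs).1 h')
      simp [bw, this]
  · rw [D.bw_eq_zero hs]; ring

include hs0 hS' in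
theorem E4 {j : ℕ} (hj : (D.Rp τ s0).card < j) (hjn : j + τ.card ≤ D.d) :
    D.xp (D.Rp τ s0) ∈ D.NN τ S' j := by
  have hpq := D.card_pq hs0
  refine ⟨D.F_mono hj.le (D.xp_mem _), fun g hg => ?_⟩
  rw [wf_comm, ← mul_one (D.xp (D.Rp τ s0)), wf_Rp hS', mul_one]
  refine D.wf_full (fun _ _ => Finset.mem_univ _) (D.F_mul hg (D.xp_mem _)) ?_
  omega

include hs0 hS hS' in
theorem NN_iff {j : ℕ} {f : V → ℝ} (h : f s0 = 0) : f ∈ D.NN τ S' j ↔ f ∈ D.NN τ S j := by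
  simp only [mem_NN, bw_split hs0 hS hS', wf_add, wf_single, h, mul_zero, zero_mul, add_zero]

include hs0 hS hS' in
theorem NN_S' {j : ℕ} (hj : j ≤ (D.Rp τ s0).card) (f : V → ℝ) :
    f ∈ D.NN τ S' j ↔ f ∈ D.NN τ S j ∧ f s0 = 0 := by
  constructor
  · intro h
    have h0 := E2 hs0 hS hS' hj h
    exact ⟨(NN_iff hs0 hS hS' h0).1 h, h0⟩
  · rintro ⟨h, h0⟩; exact (NN_iff hs0 hS hS' h0).2 h

include hs0 hS hS' in
theorem NN_S {j : ℕ} (hj : j < (D.Rm τ s0).card) (f : V → ℝ) :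
    f ∈ D.NN τ S j ↔ f ∈ D.NN τ S' j ∧ f s0 = 0 := by
  constructor
  · intro h
    have h0 := E1 hs0 hS hS' hj h
    exact ⟨(NN_iff hs0 hS hS' h0).2 h, h0⟩
  · rintro ⟨h, h0⟩; exact (NN_iff hs0 hS hS' h0).1 h

include hs0 hS hS' in
theorem NN_eq {j : ℕ} (hj : j ≤ (D.Rp τ s0).card) (hj' : j < (D.Rm τ s0).card) :
    D.NN τ S' j = D.NN τ S j := by
  ext f
  constructor
  · intro h; exact ((NN_S' hs0 hS hS' hj f).1 h).1
  · intro h; exact ((NN_S hs0 hS hS' hj' f).1 h).1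

end TD

namespace TD
variable {V R : Type*} [Fintype V] [Fintype R] {D : TD V R}

variable (D) in
def HRs (τ : Finset R) (S : Finset V) (c : ℝ) (j : ℕ) : Prop :=
  ∀ f ∈ D.F j, (∀ i, i + 1 = j → ∀ g ∈ D.F i,
      wf (D.wt τ S c (D.d - τ.card - 2 * j + 1)) f g = 0) →
    0 ≤ (-1 : ℝ) ^ j * wf (D.wt τ S c (D.d - τ.card - 2 * j)) f f ∧
    (wf (D.wt τ S c (D.d - τ.card - 2 * j)) f f = 0 → f ∈ D.NN τ S j)

variable (D) in
def HL (τ : Finset R) (S : Finset V) (c : ℝ) (j : ℕ) : Prop :=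
  rad (D.wt τ S c (D.d - τ.card - 2 * j)) (D.F j) ≤ D.NN τ S j

variable (D) in
def valL (τ : Finset R) (S : Finset V) (c : ℝ) (j : ℕ) : Prop :=
  (∀ s, τ ⊆ D.B s → s ∈ S) ∨ ∀ s, τ ⊆ D.B s →
    (s ∈ S → c < D.ht s ∨ (c = D.ht s ∧ j < (D.Rm τ s).card)) ∧
    (s ∉ S → D.ht s < c ∨ (D.ht s = c ∧ j ≤ (D.Rp τ s).card))

variable (D) in
def val (τ : Finset R) (S : Finset V) (c : ℝ) (j : ℕ) : Prop :=
  (2 * j + τ.card < D.d ∧ D.valL τ S c j) ∨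
  (2 * j + τ.card = D.d ∧ ∀ i, i + 1 = j → D.valL τ S c i)

theorem wf_zero_weight {V : Type*} [Fintype V] (f g : V → ℝ) : wf 0 f g = 0 := by simp [wf]

theorem wf_sum_weight {V : Type*} [Fintype V] {ι : Type*} (T : Finset ι) (μ : ι → V → ℝ) (f g : V → ℝ) :
    wf (∑ i ∈ T, μ i) f g = ∑ i ∈ T, wf (μ i) f g := by
  induction T using Finset.induction_on with
  | empty => simp [wf_zero_weight]
  | insert a T ha ih => rw [Finset.sum_insert ha, Finset.sum_insert ha, wf_add, ih]

theorem wf_congr_star {τ : Finset R} {S : Finset V} {h h' f g : V → ℝ}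
    (hh : ∀ s, τ ⊆ D.B s → h s = h' s) : wf (D.bw τ S) f (h * g) = wf (D.bw τ S) f (h' * g) := by
  refine Finset.sum_congr rfl fun s _ => ?_
  by_cases hs : τ ⊆ D.B s
  · simp [hh s hs]
  · simp [D.bw_eq_zero hs]

theorem HL_core {τ : Finset R} {S : Finset V} {c : ℝ} {j : ℕ} (hj : 2 * j + τ.card < D.d)
    {h : R → ℝ} (hpos : ∀ r, r ∉ τ → 0 < h r)
    (hh : ∀ s, τ ⊆ D.B s → D.ht s - c = ∑ r ∈ Finset.univ \ τ, h r * D.x r s)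
    (IH : ∀ r, r ∉ τ → D.HRs (insert r τ) S c j) : D.HL τ S c j := by
  rintro f ⟨hf, hf0⟩
  set m := D.d - τ.card - 2 * j - 1 with hm
  have hm1 : D.d - τ.card - 2 * j = m + 1 := by omega
  rw [hm1] at hf0
  have hcard : ∀ r, r ∉ τ → D.d - (insert r τ).card - 2 * j = m := fun r hr => by
    rw [Finset.card_insert_of_notMem hr]; omega
  have h1 : ∀ r, r ∉ τ → 0 ≤ (-1 : ℝ) ^ j * wf (D.wt (insert r τ) S c m) f f ∧
      (wf (D.wt (insert r τ) S c m) f f = 0 → f ∈ D.NN (insert r τ) S j) := by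
    intro r hr
    have := IH r hr f hf
    rw [hcard r hr] at this
    refine this ?_
    intro i hi g hg
    rw [D.wt_insert hr, wf_mul_right]
    apply hf0
    rw [← hi, add_comm]
    exact D.F_mul (D.x_mem r) hg
  have h2 : ∑ r ∈ Finset.univ \ τ, h r * wf (D.wt (insert r τ) S c m) f f = 0 := by
    have e1 : wf (D.wt τ S c (m + 1)) f f = 0 := hf0 f hf
    rw [D.wt_add, mul_comm, ← wf_comm] at e1
    rw [← e1]
    simp only [wf, Finset.mul_sum]
    rw [Finset.sum_comm]
    refine Finset.sum_congr rfl fun s _ => ?_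
    by_cases hs : τ ⊆ D.B s
    · simp only [Pi.mul_apply, pow_one, hh s hs, Finset.sum_mul]
      refine Finset.sum_congr rfl fun r hr => ?_
      rw [D.wt_insert (Finset.mem_sdiff.1 hr).2, Pi.mul_apply]; ring
    · simp only [wt, Pi.mul_apply, D.bw_eq_zero hs]
      rw [Finset.sum_eq_zero]; · ring
      intro r hr
      rw [D.bw_insert (Finset.mem_sdiff.1 hr).2, Pi.mul_apply, D.bw_eq_zero hs]; ring
  have h3 : ∀ r, r ∉ τ → f ∈ D.NN (insert r τ) S j := by
    have e : ∑ r ∈ Finset.univ \ τ, h r * ((-1 : ℝ) ^ j * wf (D.wt (insert r τ) S c m) f f) = 0 := by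
      rw [← mul_zero ((-1 : ℝ) ^ j), ← h2, Finset.mul_sum]
      exact Finset.sum_congr rfl fun r _ => by ring
    rw [Finset.sum_eq_zero_iff_of_nonneg] at e
    · intro r hr
      have e2 := e r (by simp [hr])
      apply (h1 r hr).2
      have := (hpos r hr).ne'
      have h4 : (-1 : ℝ) ^ j ≠ 0 := by simp
      rcases mul_eq_zero.1 e2 with e3 | e3
      · exact absurd e3 this
      · exact (mul_eq_zero.1 e3).resolve_left h4
    · intro r hr
      have hr' : r ∉ τ := (Finset.mem_sdiff.1 hr).2
      exact mul_nonneg (hpos r hr').le (h1 r hr').1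
  refine ⟨hf, fun g hg => ?_⟩
  have hn : D.d - τ.card - j = (D.d - τ.card - j - 1) + 1 := by omega
  rw [hn] at hg
  have key : ∀ r, r ∉ τ → ∀ g ∈ D.F (D.d - τ.card - j - 1), wf (D.bw τ S) f (D.x r * g) = 0 := by
    intro r hr g hg
    rw [← wf_mul_right, ← D.bw_insert hr]
    apply (h3 r hr).2
    rw [Finset.card_insert_of_notMem hr]
    convert hg using 2
    omega
  refine D.F_succ_induction (P := fun g => wf (D.bw τ S) f g = 0) (wf_zero_right _ _) ?_ ?_ ?_ hg
  · intro f g h1 h2; rw [wf_add_right, h1, h2, add_zero]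
  · intro a f h1; rw [wf_smul_right, h1, mul_zero]
  · intro r g hg
    by_cases hr : r ∈ τ
    · obtain ⟨a, ha, ha'⟩ := D.spn τ (by omega) r hr
      rw [wf_congr_star (h' := fun s => ∑ r', a r' * D.x r' s) ha', ← wf_mul_right]
      have : D.bw τ S * (fun s => ∑ r', a r' * D.x r' s) = ∑ r', a r' • (D.bw τ S * D.x r') := by
        ext s; simp [Finset.mul_sum]; exact Finset.sum_congr rfl fun r _ => by ring
      rw [this, wf_sum_weight]
      refine Finset.sum_eq_zero fun r' _ => ?_
      by_cases hr' : r' ∈ τ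
      · rw [ha r' hr', zero_smul, wf_zero_weight]
      · have : a r' • (D.bw τ S * D.x r') = D.bw τ S * (a r' • D.x r') := by
          rw [mul_smul_comm]
        rw [this, wf_mul_right, smul_mul_assoc, wf_smul_right, key r' hr' g hg, mul_zero]
    · exact key r hr g hg

theorem conv_comb {ι : Type*} (T : Finset ι) (h : ι → ℝ) (c : ℝ) {a b : ι} (ha : a ∈ T) (hb : b ∈ T)
    (hac : h a < c) (hbc : c < h b) :
    ∃ t : ι → ℝ, (∀ i ∈ T, 0 < t i) ∧ ∑ i ∈ T, t i = 1 ∧ ∑ i ∈ T, t i * h i = c := by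
  have key : ∃ t : ι → ℝ, (∀ i ∈ T, 0 < t i) ∧ ∑ i ∈ T, t i * (h i - c) = 0 := by
    set E := ∑ i ∈ T, (h i - c) with hE
    rcases le_total E 0 with h0 | h0
    · refine ⟨fun i => 1 + if i = b then -E / (h b - c) else 0, fun i _ => ?_, ?_⟩
      · have : 0 ≤ -E / (h b - c) := div_nonneg (by linarith) (by linarith)
        dsimp only; split_ifs <;> linarith
      · simp only [add_mul, one_mul, Finset.sum_add_distrib, ite_mul, zero_mul, Finset.sum_ite_eq', hb,
          if_true, ← hE]
        have : h b - c ≠ 0 := by linarith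
        field_simp; ring
    · refine ⟨fun i => 1 + if i = a then E / (c - h a) else 0, fun i _ => ?_, ?_⟩
      · have : 0 ≤ E / (c - h a) := div_nonneg (by linarith) (by linarith)
        dsimp only; split_ifs <;> linarith
      · simp only [add_mul, one_mul, Finset.sum_add_distrib, ite_mul, zero_mul, Finset.sum_ite_eq', ha,
          if_true, ← hE]
        have : c - h a ≠ 0 := by linarith
        field_simp; ring
  obtain ⟨t, ht, h1⟩ := key
  have hpos : 0 < ∑ i ∈ T, t i := Finset.sum_pos ht ⟨a, ha⟩
  refine ⟨fun i => t i / ∑ i ∈ T, t i, fun i hi => div_pos (ht i hi) hpos, ?_, ?_⟩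
  · rw [← Finset.sum_div, div_self hpos.ne']
  · have : ∑ i ∈ T, t i * h i = c * ∑ i ∈ T, t i := by
      rw [Finset.mul_sum, ← sub_eq_zero, ← Finset.sum_sub_distrib, ← h1]
      exact Finset.sum_congr rfl fun i _ => by ring
    simp only [div_mul_eq_mul_div, ← Finset.sum_div, this]
    field_simp

theorem exists_h {τ : Finset R} {c : ℝ} {a b : V} (ha : τ ⊆ D.B a) (hb : τ ⊆ D.B b)
    (hac : D.ht a < c) (hbc : c < D.ht b) :
    ∃ h : R → ℝ, (∀ r, r ∉ τ → 0 < h r) ∧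
      ∀ s, τ ⊆ D.B s → D.ht s - c = ∑ r ∈ Finset.univ \ τ, h r * D.x r s := by
  obtain ⟨t, ht, h1, h2⟩ := conv_comb (Finset.univ.filter fun s => τ ⊆ D.B s) D.ht c
    (a := a) (b := b) (by simpa using ha) (by simpa using hb) hac hbc
  set T := Finset.univ.filter fun s => τ ⊆ D.B s with hT
  have hTm : ∀ s, s ∈ T ↔ τ ⊆ D.B s := fun s => by simp [hT]
  refine ⟨fun r => ∑ s ∈ T, t s * D.gap r s, fun r hr => ?_, fun s hs => ?_⟩
  · have hex : ∃ s ∈ T, r ∉ D.B s := by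
      by_cases hra : r ∈ D.B a
      · obtain ⟨s', h3, h4⟩ := D.nbr τ a r ha hra hr
        exact ⟨s', (hTm _).2 h3, h4⟩
      · exact ⟨a, (hTm _).2 ha, hra⟩
    obtain ⟨s, hs, hrs⟩ := hex
    refine Finset.sum_pos' (fun s hs => mul_nonneg (ht s hs).le (D.gap_nonneg _ _)) ⟨s, hs, ?_⟩
    refine mul_pos (ht s hs) (lt_of_le_of_ne (D.gap_nonneg _ _) fun h => hrs ?_)
    exact (D.gap_zero r s).1 h.symm
  · have e1 : D.ht s - c = ∑ s' ∈ T, t s' * (D.ht s - D.ht s') := by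
      simp only [mul_sub, Finset.sum_sub_distrib, h2, ← Finset.sum_mul, h1]; ring
    have e2 : ∀ s' ∈ T, t s' * (D.ht s - D.ht s')
        = ∑ r ∈ Finset.univ \ τ, t s' * D.gap r s' * D.x r s := by
      intro s' hs'
      rw [D.ht_sub, Finset.mul_sum, ← Finset.sum_sdiff (Finset.subset_univ τ),
        Finset.sum_eq_zero (s := τ), add_zero]
      · exact Finset.sum_congr rfl fun r _ => by ring
      · intro r hr
        rw [(D.gap_zero r s').2 ((hTm _).1 hs' hr)]; ring
    rw [e1, Finset.sum_congr rfl e2, Finset.sum_comm]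
    refine Finset.sum_congr rfl fun r _ => ?_
    rw [Finset.sum_mul]

theorem HL_empty {τ : Finset R} {S : Finset V} {c : ℝ} {j : ℕ} (h : ∀ s, τ ⊆ D.B s → s ∉ S) :
    D.HL τ S c j := by
  rintro f ⟨hf, _⟩
  refine ⟨hf, fun g _ => ?_⟩
  refine Finset.sum_eq_zero fun s _ => ?_
  by_cases hs : τ ⊆ D.B s
  · simp [bw, h s hs]
  · rw [D.bw_eq_zero hs]; ring

theorem HL_half {τ : Finset R} {S : Finset V} {c : ℝ} {j : ℕ} (h : 2 * j + τ.card = D.d) :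
    D.HL τ S c j := by
  rintro f ⟨hf, h2⟩
  refine ⟨hf, fun g hg => ?_⟩
  rw [show D.d - τ.card - 2 * j = 0 by omega, D.wt_zero] at h2
  rw [show D.d - τ.card - j = j by omega] at hg
  exact h2 g hg

theorem wf_full_indep {τ : Finset R} {S : Finset V} (hS : ∀ s, τ ⊆ D.B s → s ∈ S) {j : ℕ}
    (hj : 2 * j + τ.card < D.d) (c c' : ℝ) {f g : V → ℝ} (hf : f ∈ D.F j) (hg : g ∈ D.F j) :
    wf (D.wt τ S c (D.d - τ.card - 2 * j)) f g = wf (D.wt τ S c' (D.d - τ.card - 2 * j)) f g := by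
  obtain ⟨m, hm⟩ : ∃ m, D.d - τ.card - 2 * j = m + 1 := ⟨D.d - τ.card - 2 * j - 1, by omega⟩
  rw [hm, wt_eq, wt_eq, wf_mul_right, wf_mul_right, ← sub_eq_zero]
  have := D.wf_full hS (f := f) (g := (fun s => (D.ht s - c) ^ (m + 1) - (D.ht s - c') ^ (m + 1)) * g)
    (i := j + (m + j)) (D.F_mul hf (D.F_mul (D.hcp_sub c c' m) hg)) (by omega)
  rw [← this]
  simp only [wf, ← Finset.sum_sub_distrib]
  exact Finset.sum_congr rfl fun s _ => by simp only [Pi.mul_apply]; ring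

theorem HL_full {τ : Finset R} {S : Finset V} {c : ℝ} {j : ℕ} (hj : 2 * j + τ.card < D.d)
    (hS : ∀ s, τ ⊆ D.B s → s ∈ S)
    (IH : ∀ c r, r ∉ τ → D.HRs (insert r τ) S c j) : D.HL τ S c j := by
  by_cases hne : ∃ s, τ ⊆ D.B s
  · obtain ⟨s, hs⟩ := hne
    obtain ⟨a, b, ha, hb, hab⟩ : ∃ a b, τ ⊆ D.B a ∧ τ ⊆ D.B b ∧ D.ht a < D.ht b := by
      have := D.card_pq hs
      rcases Nat.eq_zero_or_pos (D.Rp τ s).card with h | h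
      · obtain ⟨s', h1, h2⟩ := D.exists_higher hs (by omega)
        exact ⟨s, s', hs, h1, h2⟩
      · obtain ⟨s', h1, h2⟩ := D.exists_lower hs h
        exact ⟨s', s, h1, hs, h2⟩
    obtain ⟨h, h1, h2⟩ := exists_h (c := (D.ht a + D.ht b) / 2) ha hb (by linarith) (by linarith)
    have := HL_core hj h1 h2 (IH _)
    rintro f ⟨hf, hf0⟩
    refine this ⟨hf, fun g hg => ?_⟩
    rw [wf_full_indep hS hj _ c hf hg]
    exact hf0 g hg
  · exact HL_empty fun s hs => absurd ⟨s, hs⟩ hne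

variable (D) in
/-- condition under which the inductive step is direct -/
def Dir (τ : Finset R) (S : Finset V) (c : ℝ) (j : ℕ) : Prop :=
  ∀ s, τ ⊆ D.B s →
    (s ∈ S → c < D.ht s ∨ (c = D.ht s ∧ (j + 1 < (D.Rm τ s).card ∨
      (2 * j + 1 + τ.card = D.d ∧ j < (D.Rm τ s).card)))) ∧
    (s ∉ S → D.ht s < c ∨ (D.ht s = c ∧ (j < (D.Rp τ s).card ∨
      (2 * j + 1 + τ.card = D.d ∧ j ≤ (D.Rp τ s).card ∧ 1 ≤ (D.Rp τ s).card))))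

theorem Rm_insert (τ : Finset R) (s : V) (r : R) :
    (D.Rm τ s).card ≤ (D.Rm (insert r τ) s).card + 1 := by
  have : D.Rm τ s ⊆ insert r (D.Rm (insert r τ) s) := by
    intro t ht
    rw [mem_Rm] at ht
    rw [Finset.mem_insert, mem_Rm, Finset.mem_insert]
    tauto
  exact (Finset.card_le_card this).trans (Finset.card_insert_le _ _)

theorem Rp_insert (τ : Finset R) (s : V) (r : R) :
    (D.Rp τ s).card ≤ (D.Rp (insert r τ) s).card + 1 := by
  have : D.Rp τ s ⊆ insert r (D.Rp (insert r τ) s) := by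
    intro t ht
    rw [mem_Rp] at ht
    rw [Finset.mem_insert, mem_Rp, Finset.mem_insert]
    tauto
  exact (Finset.card_le_card this).trans (Finset.card_insert_le _ _)

theorem Dir_val {τ : Finset R} {S : Finset V} {c : ℝ} {j : ℕ} (hj : 2 * j + τ.card < D.d)
    (h : D.Dir τ S c j) {r : R} (hr : r ∉ τ) : D.val (insert r τ) S c j := by
  have hc := Finset.card_insert_of_notMem hr
  by_cases hj2 : 2 * j + 1 + τ.card = D.d
  · right
    refine ⟨by omega, fun i hi => Or.inr fun s hs => ?_⟩
    have hs' : τ ⊆ D.B s := (Finset.subset_insert _ _).trans hs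
    have h1 := Rm_insert (D := D) τ s r
    have h2 := Rp_insert (D := D) τ s r
    refine ⟨fun hS => ?_, fun hS => ?_⟩
    · rcases (h s hs').1 hS with h3 | ⟨h3, h4⟩
      · exact Or.inl h3
      · exact Or.inr ⟨h3, by omega⟩
    · rcases (h s hs').2 hS with h3 | ⟨h3, h4⟩
      · exact Or.inl h3
      · exact Or.inr ⟨h3, by omega⟩
  · left
    refine ⟨by omega, Or.inr fun s hs => ?_⟩
    have hs' : τ ⊆ D.B s := (Finset.subset_insert _ _).trans hs
    have h1 := Rm_insert (D := D) τ s r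
    have h2 := Rp_insert (D := D) τ s r
    refine ⟨fun hS => ?_, fun hS => ?_⟩
    · rcases (h s hs').1 hS with h3 | ⟨h3, h4⟩
      · exact Or.inl h3
      · exact Or.inr ⟨h3, by omega⟩
    · rcases (h s hs').2 hS with h3 | ⟨h3, h4⟩
      · exact Or.inl h3
      · exact Or.inr ⟨h3, by omega⟩

theorem full_val {τ : Finset R} {S : Finset V} {c : ℝ} {j : ℕ} (hj : 2 * j + τ.card < D.d)
    (hS : ∀ s, τ ⊆ D.B s → s ∈ S) {r : R} (hr : r ∉ τ) : D.val (insert r τ) S c j := by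
  have hc := Finset.card_insert_of_notMem hr
  have hS' : ∀ s, insert r τ ⊆ D.B s → s ∈ S := fun s hs =>
    hS s ((Finset.subset_insert _ _).trans hs)
  by_cases hj2 : 2 * j + 1 + τ.card = D.d
  · exact Or.inr ⟨by omega, fun i hi => Or.inl hS'⟩
  · exact Or.inl ⟨by omega, Or.inl hS'⟩

theorem HL_dir {τ : Finset R} {S : Finset V} {c : ℝ} {j : ℕ} (hj : 2 * j + τ.card < D.d)
    (h : D.Dir τ S c j) (IH : ∀ c S r, r ∉ τ → D.val (insert r τ) S c j → D.HRs (insert r τ) S c j) :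
    D.HL τ S c j := by
  by_cases hfull : ∀ s, τ ⊆ D.B s → s ∈ S
  · exact HL_full hj hfull fun c r hr => IH c S r hr (full_val hj hfull hr)
  by_cases hemp : ∀ s, τ ⊆ D.B s → s ∉ S
  · exact HL_empty hemp
  push Not at hfull hemp
  obtain ⟨a0, ha0, ha0S⟩ := hfull
  obtain ⟨b0, hb0, hb0S⟩ := hemp
  obtain ⟨a, ha, hac⟩ : ∃ a, τ ⊆ D.B a ∧ D.ht a < c := by
    rcases (h a0 ha0).2 ha0S with h1 | ⟨h1, h2⟩
    · exact ⟨a0, ha0, h1⟩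
    · rw [← h1]; exact D.exists_lower ha0 (by omega)
  obtain ⟨b, hb, hbc⟩ : ∃ b, τ ⊆ D.B b ∧ c < D.ht b := by
    rcases (h b0 hb0).1 hb0S with h1 | ⟨h1, h2⟩
    · exact ⟨b0, hb0, h1⟩
    · rw [h1]; exact D.exists_higher hb0 (by omega)
  obtain ⟨h', h1, h2⟩ := exists_h ha hb hac hbc
  exact HL_core hj h1 h2 fun r hr => IH c S r hr (Dir_val hj h hr)

theorem HL_valL {τ : Finset R} {S : Finset V} {c : ℝ} {j : ℕ} (hj : 2 * j + τ.card < D.d)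
    (h : D.valL τ S c j)
    (IH : ∀ c S r, r ∉ τ → D.val (insert r τ) S c j → D.HRs (insert r τ) S c j) :
    D.HL τ S c j := by
  rcases h with hfull | h
  · exact HL_full hj hfull fun c r hr => IH c S r hr (full_val hj hfull hr)
  by_cases hdir : D.Dir τ S c j
  · exact HL_dir hj hdir IH
  have hex : ∃ s0, τ ⊆ D.B s0 ∧ D.ht s0 = c := by
    by_contra hno
    push Not at hno
    refine hdir fun s hs => ⟨fun hS => ?_, fun hS => ?_⟩
    · exact ((h s hs).1 hS).imp_right fun h1 => absurd h1.1.symm (hno s hs)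
    · exact ((h s hs).2 hS).imp_right fun h1 => absurd h1.1 (hno s hs)
  obtain ⟨s0, hs0, rfl⟩ := hex
  have hpq := D.card_pq hs0
  have hothers : ∀ s, τ ⊆ D.B s → s ≠ s0 → (s ∈ S ↔ D.ht s0 < D.ht s) := by
    intro s hs hne
    have hne' : D.ht s ≠ D.ht s0 := fun e => hne (D.ht_inj e)
    constructor
    · intro hS
      exact ((h s hs).1 hS).resolve_right fun h1 => hne' h1.1.symm
    · intro hlt
      by_contra hS
      rcases (h s hs).2 hS with h1 | h1
      · linarith
      · exact hne' h1.1
  have hlow : ∀ s, τ ⊆ D.B s → s ≠ s0 → ¬ D.ht s0 < D.ht s → D.ht s < D.ht s0 := by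
    intro s hs hne hlt
    exact lt_of_le_of_ne (not_lt.1 hlt) fun e => hne (D.ht_inj e)
  have hwt : ∀ S1 S2, D.Above τ S1 s0 → D.AboveEq τ S2 s0 →
      D.wt τ S2 (D.ht s0) (D.d - τ.card - 2 * j) = D.wt τ S1 (D.ht s0) (D.d - τ.card - 2 * j) := by
    intro S1 S2 h1 h2
    rw [wt_split hs0 h1 h2, sub_self, zero_pow (by omega), mul_zero, Pi.single_zero, add_zero]
  by_cases hS0 : s0 ∈ S
  · have hjp : j < (D.Rm τ s0).card := ((h s0 hs0).1 hS0).elim (fun e => absurd e (lt_irrefl _)) And.right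
    have hAE : D.AboveEq τ S s0 := by
      intro s hs
      by_cases hne : s = s0
      · subst hne; simp [hS0]
      · rw [hothers s hs hne]
        exact ⟨le_of_lt, fun h1 => lt_of_le_of_ne h1 fun e => hne (D.ht_inj e).symm⟩
    have hA : D.Above τ (S.erase s0) s0 := by
      intro s hs
      by_cases hne : s = s0
      · subst hne; simp
      · simp [hne, hothers s hs hne]
    have hnd : ¬ (j + 1 < (D.Rm τ s0).card ∨ (2 * j + 1 + τ.card = D.d ∧ j < (D.Rm τ s0).card)) := by
      intro hh
      refine hdir fun s hs => ?_
      by_cases hne : s = s0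
      · subst hne; exact ⟨fun _ => Or.inr ⟨rfl, hh⟩, fun h1 => absurd hS0 h1⟩
      · exact ⟨fun h1 => Or.inl ((hothers s hs hne).1 h1),
          fun h1 => Or.inl (hlow s hs hne fun h2 => h1 ((hothers s hs hne).2 h2))⟩
    have hD2 : D.Dir τ (S.erase s0) (D.ht s0) j := by
      intro s hs
      by_cases hne : s = s0
      · subst hne
        exact ⟨fun h1 => absurd rfl (Finset.mem_erase.1 h1).1, fun _ => Or.inr ⟨rfl, Or.inl (by omega)⟩⟩
      · exact ⟨fun h1 => Or.inl ((hA s hs).1 h1),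
          fun h1 => Or.inl (hlow s hs hne fun h2 => h1 ((hA s hs).2 h2))⟩
    have := HL_dir hj hD2 IH
    unfold HL at this ⊢
    rw [hwt _ _ hA hAE, NN_eq hs0 hA hAE (by omega) hjp]
    exact this
  · have hjq : j ≤ (D.Rp τ s0).card := ((h s0 hs0).2 hS0).elim (fun e => absurd e (lt_irrefl _)) And.right
    have hA : D.Above τ S s0 := by
      intro s hs
      by_cases hne : s = s0
      · subst hne; simp [hS0]
      · exact hothers s hs hne
    have hAE : D.AboveEq τ (insert s0 S) s0 := by
      intro s hs
      by_cases hne : s = s0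
      · subst hne; simp
      · rw [Finset.mem_insert, hothers s hs hne]
        simp only [hne, false_or]
        exact ⟨le_of_lt, fun h1 => lt_of_le_of_ne h1 fun e => hne (D.ht_inj e).symm⟩
    have hnd : ¬ (j < (D.Rp τ s0).card ∨
      (2 * j + 1 + τ.card = D.d ∧ j ≤ (D.Rp τ s0).card ∧ 1 ≤ (D.Rp τ s0).card)) := by
      intro hh
      refine hdir fun s hs => ?_
      by_cases hne : s = s0
      · subst hne; exact ⟨fun h1 => absurd h1 hS0, fun _ => Or.inr ⟨rfl, hh⟩⟩
      · exact ⟨fun h1 => Or.inl ((hothers s hs hne).1 h1),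
          fun h1 => Or.inl (hlow s hs hne fun h2 => h1 ((hothers s hs hne).2 h2))⟩
    have hD2 : D.Dir τ (insert s0 S) (D.ht s0) j := by
      intro s hs
      by_cases hne : s = s0
      · subst hne
        exact ⟨fun _ => Or.inr ⟨rfl, by omega⟩, fun h1 => absurd (Finset.mem_insert_self _ _) h1⟩
      · refine ⟨fun h1 => Or.inl ?_, fun h1 => Or.inl ?_⟩
        · exact lt_of_le_of_ne ((hAE s hs).1 h1) fun e => hne (D.ht_inj e).symm
        · exact not_le.1 fun h2 => h1 ((hAE s hs).2 h2)
    have := HL_dir hj hD2 IH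
    unfold HL at this ⊢
    rw [hwt _ _ hA hAE, NN_eq hs0 hA hAE hjq (by omega)] at this
    exact this

end TD

namespace TD
variable {V R : Type*} [Fintype V] [Fintype R] {D : TD V R}

variable (D) in
def Str (τ : Finset R) (S : Finset V) (c : ℝ) : Prop :=
  ∀ s, τ ⊆ D.B s → (s ∈ S ↔ c < D.ht s) ∧ D.ht s ≠ c

theorem valL_mono {τ : Finset R} {S : Finset V} {c : ℝ} {i j : ℕ} (hij : i ≤ j)
    (h : D.valL τ S c j) : D.valL τ S c i := by
  rcases h with h | h
  · exact Or.inl h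
  · refine Or.inr fun s hs => ⟨fun h1 => ?_, fun h1 => ?_⟩
    · exact ((h s hs).1 h1).imp_right fun h2 => ⟨h2.1, by omega⟩
    · exact ((h s hs).2 h1).imp_right fun h2 => ⟨h2.1, by omega⟩

theorem exists_above (D : TD V R) (c : ℝ) : ∃ c1, c < c1 ∧ ∀ s, c < D.ht s → c1 < D.ht s := by
  have h : ∀ᶠ c1 in nhdsWithin c (Set.Ioi c), ∀ s, c < D.ht s → c1 < D.ht s := by
    rw [Filter.eventually_all]
    intro s
    by_cases h : c < D.ht s
    · filter_upwards [nhdsWithin_le_nhds (gt_mem_nhds h)] with a ha _ using ha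
    · exact Filter.Eventually.of_forall fun _ h' => absurd h' h
  obtain ⟨c1, h1, h2⟩ := (h.and self_mem_nhdsWithin).exists
  exact ⟨c1, h2, h1⟩

theorem exists_below (D : TD V R) (c : ℝ) : ∃ c1, c1 < c ∧ ∀ s, D.ht s < c → D.ht s < c1 := by
  have h : ∀ᶠ c1 in nhdsWithin c (Set.Iio c), ∀ s, D.ht s < c → D.ht s < c1 := by
    rw [Filter.eventually_all]
    intro s
    by_cases h : D.ht s < c
    · filter_upwards [nhdsWithin_le_nhds (lt_mem_nhds h)] with a ha _ using ha
    · exact Filter.Eventually.of_forall fun _ h' => absurd h' h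
  obtain ⟨c1, h1, h2⟩ := (h.and self_mem_nhdsWithin).exists
  exact ⟨c1, h2, h1⟩

theorem exists_bot (D : TD V R) : ∃ c1, ∀ s, c1 < D.ht s := by
  have h : ∀ᶠ c1 in Filter.atBot, ∀ s, c1 < D.ht s := by
    rw [Filter.eventually_all]
    intro s
    exact Filter.eventually_lt_atBot _
  exact h.exists

theorem valL_path {τ : Finset R} {S : Finset V} {c : ℝ} {j : ℕ} (h : D.valL τ S c j) :
    ∃ c', D.Str τ S c' ∧ ∀ a ∈ Set.uIcc c c', D.valL τ S a j := by
  rcases h with h | h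
  · obtain ⟨c', hc'⟩ := D.exists_bot
    exact ⟨c', fun s hs => ⟨⟨fun _ => hc' s, fun _ => h s hs⟩, (hc' s).ne'⟩, fun _ _ => Or.inl h⟩
  by_cases hex : ∃ s0, τ ⊆ D.B s0 ∧ D.ht s0 = c ∧ s0 ∈ S
  · obtain ⟨s0, hs0, rfl, hS0⟩ := hex
    obtain ⟨c', h1, h2⟩ := D.exists_below (D.ht s0)
    have hin : ∀ s, τ ⊆ D.B s → s ∈ S → D.ht s0 ≤ D.ht s := fun s hs hS => by
      rcases (h s hs).1 hS with h3 | h3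
      · exact h3.le
      · exact h3.1.le
    have hout : ∀ s, τ ⊆ D.B s → s ∉ S → D.ht s < c' := fun s hs hS => by
      rcases (h s hs).2 hS with h3 | h3
      · exact h2 s h3
      · exact absurd (D.ht_inj h3.1 ▸ hS0) hS
    refine ⟨c', fun s hs => ?_, fun a ha => Or.inr fun s hs => ?_⟩
    · by_cases hS : s ∈ S
      · have := hin s hs hS
        exact ⟨⟨fun _ => by linarith, fun _ => hS⟩, by linarith⟩
      · have := hout s hs hS
        exact ⟨⟨fun h => absurd h hS, fun h => by linarith⟩, this.ne⟩
    · rw [Set.uIcc_of_ge h1.le] at ha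
      refine ⟨fun hS => ?_, fun hS => Or.inl (lt_of_lt_of_le (hout s hs hS) ha.1)⟩
      rcases eq_or_lt_of_le ha.2 with h3 | h3
      · rw [h3]; exact (h s hs).1 hS
      · exact Or.inl (lt_of_lt_of_le h3 (hin s hs hS))
  · obtain ⟨c', h1, h2⟩ := D.exists_above c
    have hin : ∀ s, τ ⊆ D.B s → s ∈ S → c' < D.ht s := fun s hs hS => by
      rcases (h s hs).1 hS with h3 | h3
      · exact h2 s h3
      · exact absurd ⟨s, hs, h3.1.symm, hS⟩ hex
    have hout : ∀ s, τ ⊆ D.B s → s ∉ S → D.ht s ≤ c := fun s hs hS => by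
      rcases (h s hs).2 hS with h3 | h3
      · exact h3.le
      · exact h3.1.le
    refine ⟨c', fun s hs => ?_, fun a ha => Or.inr fun s hs => ?_⟩
    · by_cases hS : s ∈ S
      · have := hin s hs hS
        exact ⟨⟨fun _ => by linarith, fun _ => hS⟩, by linarith⟩
      · have := hout s hs hS
        exact ⟨⟨fun h => absurd h hS, fun h => by linarith⟩, by linarith⟩
    · rw [Set.uIcc_of_le h1.le] at ha
      refine ⟨fun hS => Or.inl (lt_of_le_of_lt ha.2 (hin s hs hS)), fun hS => ?_⟩
      rcases eq_or_lt_of_le ha.1 with h3 | h3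
      · rw [← h3]; exact (h s hs).2 hS
      · exact Or.inl (lt_of_le_of_lt (hout s hs hS) h3)

variable (D) in
/-- hard Lefschetz for a fixed `τ` -/
def HLt (τ : Finset R) : Prop :=
  ∀ S c j, 2 * j + τ.card < D.d → D.valL τ S c j → D.HL τ S c j

variable (D) in
/-- the form in question -/
noncomputable def qw (τ : Finset R) (S : Finset V) (j : ℕ) (c : ℝ) : V → ℝ :=
  D.wt τ S c (D.d - τ.card - 2 * j)

theorem qw_cont (τ : Finset R) (S : Finset V) (j : ℕ) : Continuous (D.qw τ S j) := by
  unfold qw wt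
  refine continuous_pi fun s => ?_
  fun_prop

theorem rad_eq {τ : Finset R} (H : D.HLt τ) {S : Finset V} {c : ℝ} {j : ℕ}
    (hj : 2 * j + τ.card ≤ D.d) (hv : D.valL τ S c j ∨ 2 * j + τ.card = D.d) :
    rad (D.qw τ S j c) (D.F j) = D.NN τ S j := by
  apply le_antisymm _ (D.NN_le_rad hj c)
  by_cases h : 2 * j + τ.card = D.d
  · exact HL_half h
  · exact H S c j (by omega) (hv.resolve_right h)

theorem np_path {τ : Finset R} (H : D.HLt τ) {S : Finset V} {c c' : ℝ} {j : ℕ}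
    (hj : 2 * j + τ.card ≤ D.d)
    (hv : ∀ a ∈ Set.uIcc c c', D.valL τ S a j ∨ 2 * j + τ.card = D.d) :
    np (D.qw τ S j c) (D.F j) = np (D.qw τ S j c') (D.F j) ∧
    np (-(D.qw τ S j c)) (D.F j) = np (-(D.qw τ S j c')) (D.F j) := by
  constructor
  · exact np_const (isPreconnected_uIcc (a := c) (b := c')) (qw_cont τ S j)
      (fun a ha => rad_eq H hj (hv a ha)) Set.left_mem_uIcc Set.right_mem_uIcc
  · refine np_const (m := fun c => - (D.qw τ S j c)) (N := D.NN τ S j)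
      (isPreconnected_uIcc (a := c) (b := c')) (qw_cont τ S j).neg
      (fun a ha => ?_) Set.left_mem_uIcc Set.right_mem_uIcc
    rw [rad_neg]; exact rad_eq H hj (hv a ha)

theorem sign_iff {p : ℕ} {X : ℝ} (h : 0 < (-1 : ℝ) ^ p * X) : (0 < X ↔ Even p) ∧ (X < 0 ↔ Odd p) := by
  rcases Nat.even_or_odd p with hp | hp
  · rw [hp.neg_one_pow, one_mul] at h
    have : ¬ Odd p := by simpa using hp
    simp [hp, h, this, h.le]
  · rw [hp.neg_one_pow] at h
    have h1 : X < 0 := by linarith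
    have : ¬ Even p := by simpa using hp
    simp [hp, h1, this, h1.le]

theorem transition {τ : Finset R} (H : D.HLt τ) {S S1 : Finset V} {s0 : V} (hs0 : τ ⊆ D.B s0)
    (hA : D.Above τ S1 s0) (hAE : D.AboveEq τ S s0) {c c1 : ℝ} (hc : D.Str τ S c) (hc1 : D.Str τ S1 c1)
    (hc01 : D.ht s0 < c1) {j : ℕ} (hj : 2 * j + τ.card ≤ D.d) :
    np (D.qw τ S j c) (D.F j) + (if (D.Rp τ s0).card < j ∧ Odd (D.Rp τ s0).card then 1 else 0)
      = np (D.qw τ S1 j c1) (D.F j) + (if (D.Rm τ s0).card ≤ j ∧ Even (D.Rm τ s0).card then 1 else 0) ∧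
    np (-(D.qw τ S j c)) (D.F j) + (if (D.Rp τ s0).card < j ∧ Even (D.Rp τ s0).card then 1 else 0)
      = np (-(D.qw τ S1 j c1)) (D.F j) +
        (if (D.Rm τ s0).card ≤ j ∧ Odd (D.Rm τ s0).card then 1 else 0) := by
  have hpq := D.card_pq hs0
  have hS0 : s0 ∈ S := (hAE s0 hs0).2 le_rfl
  have hcc : c < D.ht s0 := ((hc s0 hs0).1).1 hS0
  have valS : ∀ a, c ≤ a → a ≤ D.ht s0 → (a < D.ht s0 ∨ j < (D.Rm τ s0).card) → D.valL τ S a j := by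
    intro a h1 h2 h3
    refine Or.inr fun s hs => ⟨fun hS => ?_, fun hS => Or.inl ?_⟩
    · have h4 := (hAE s hs).1 hS
      by_cases hne : s = s0
      · subst hne
        rcases eq_or_lt_of_le h2 with h5 | h5
        · exact Or.inr ⟨h5, h3.resolve_left (by linarith)⟩
        · exact Or.inl h5
      · exact Or.inl (lt_of_le_of_lt h2 (lt_of_le_of_ne h4 fun e => hne (D.ht_inj e).symm))
    · have h4 := hc s hs
      have h5 : D.ht s ≤ c := not_lt.1 fun h => hS (h4.1.2 h)
      exact lt_of_lt_of_le (lt_of_le_of_ne h5 h4.2) h1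
  have valS1 : ∀ a, D.ht s0 ≤ a → a ≤ c1 → (D.ht s0 < a ∨ j ≤ (D.Rp τ s0).card) → D.valL τ S1 a j := by
    intro a h1 h2 h3
    refine Or.inr fun s hs => ⟨fun hS => Or.inl ?_, fun hS => ?_⟩
    · exact lt_of_le_of_lt h2 ((hc1 s hs).1.1 hS)
    · have h4 : D.ht s ≤ D.ht s0 := not_lt.1 fun h => hS ((hA s hs).2 h)
      by_cases hne : s = s0
      · subst hne
        rcases eq_or_lt_of_le h1 with h5 | h5
        · exact Or.inr ⟨h5, h3.resolve_left (by linarith)⟩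
        · exact Or.inl h5
      · exact Or.inl (lt_of_lt_of_le (lt_of_le_of_ne h4 fun e => hne (D.ht_inj e)) h1)
  set X := D.w s0 * D.xp τ s0 with hX
  have hsg := D.sign_w hs0
  set p := (D.Rm τ s0).card with hp
  set q := (D.Rp τ s0).card with hq
  rw [← hX] at hsg
  have hsplit : ∀ a, D.qw τ S j a = D.qw τ S1 j a +
      Pi.single s0 (X * (D.ht s0 - a) ^ (D.d - τ.card - 2 * j)) := fun a => wt_split hs0 hA hAE _ _
  by_cases hpj : p ≤ j
  · -- case (i)
    have hqj : ¬ q < j := by omega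
    have hrad : rad (D.qw τ S1 j (D.ht s0)) (D.F j) = D.NN τ S1 j :=
      rad_eq H hj (Or.inl (valS1 _ le_rfl hc01.le (Or.inr (by omega))))
    have hf0 : ∀ a, D.xp (D.Rm τ s0) ∈ rad (D.qw τ S1 j a) (D.F j) := fun a =>
      ⟨D.F_mono hpj (D.xp_mem _), fun g _ => by rw [qw, wt_eq, wf_mul_right]; exact E3 hA _⟩
    have hJ := jump_eq (N := D.NN τ S j) (hf0 (D.ht s0)) ((D.xp_ne _ s0).2 (D.Rm_sub τ s0))
      (fun f => by rw [hrad]; exact NN_S' hs0 hA hAE (by omega) f)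
    have hJ2 := (qw_cont τ S1 j).continuousAt.eventually hJ
    obtain ⟨a, hJa, ha⟩ := ((hJ2.filter_mono nhdsWithin_le_nhds).and (Ioo_mem_nhdsLT hcc)).exists
    have hY : 0 < (D.ht s0 - a) ^ (D.d - τ.card - 2 * j) := pow_pos (by linarith [ha.2]) _
    have hk : 0 < (-1 : ℝ) ^ p * (X * (D.ht s0 - a) ^ (D.d - τ.card - 2 * j)) := by
      rw [← mul_assoc]; exact mul_pos hsg hY
    have hk0 : X * (D.ht s0 - a) ^ (D.d - τ.card - 2 * j) ≠ 0 := by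
      intro h; rw [h] at hk; simp at hk
    have h1 := hJa (hf0 a) _ hk0 (by
      rw [← hsplit]; exact rad_eq H hj (Or.inl (valS a ha.1.le ha.2.le (Or.inl ha.2))))
    rw [← hsplit] at h1
    simp only [(sign_iff hk).1, (sign_iff hk).2] at h1
    have h2 := np_path H (S := S) (c := c) (c' := a) hj (fun b hb => by
      rw [Set.uIcc_of_le ha.1.le] at hb
      have : b < D.ht s0 := lt_of_le_of_lt hb.2 ha.2
      exact Or.inl (valS b hb.1 this.le (Or.inl this)))
    have h3 := np_path H (S := S1) (c := D.ht s0) (c' := c1) hj (fun b hb => by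
      rw [Set.uIcc_of_le hc01.le] at hb
      exact Or.inl (valS1 b hb.1 hb.2 (Or.inr (by omega))))
    simp only [hpj, hqj, true_and, false_and, if_false, add_zero]
    rw [h2.1, h2.2, h1.1, h1.2, h3.1, h3.2]
    exact ⟨rfl, rfl⟩
  by_cases hqj : q < j
  · -- case (iii)
    have hvc0 : ∀ a, c ≤ a → a ≤ D.ht s0 → D.valL τ S a j := fun a h1 h2 => valS a h1 h2 (Or.inr (by omega))
    have hrad : rad (D.qw τ S j (D.ht s0)) (D.F j) = D.NN τ S j :=
      rad_eq H hj (Or.inl (hvc0 _ hcc.le le_rfl))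
    have hf0 : ∀ a, D.xp (D.Rp τ s0) ∈ rad (D.qw τ S j a) (D.F j) := fun a =>
      D.NN_le_rad hj a (E4 hs0 hAE hqj (by omega))
    have hJ := jump_eq (N := D.NN τ S1 j) (hf0 (D.ht s0)) ((D.xp_ne _ s0).2 (D.Rp_sub τ s0))
      (fun f => by rw [hrad]; exact NN_S hs0 hA hAE (by omega) f)
    have hJ2 := (qw_cont τ S j).continuousAt.eventually hJ
    obtain ⟨a, hJa, ha⟩ := ((hJ2.filter_mono nhdsWithin_le_nhds).and (Ioo_mem_nhdsGT hc01)).exists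
    set m := D.d - τ.card - 2 * j with hm
    have hY : 0 < (a - D.ht s0) ^ m := pow_pos (by linarith [ha.1]) _
    have hk : 0 < (-1 : ℝ) ^ (q + 1) * (-(X * (D.ht s0 - a) ^ m)) := by
      have e1 : (D.ht s0 - a) ^ m = (-1) ^ m * (a - D.ht s0) ^ m := by
        rw [← mul_pow]; congr 1; ring
      have e2 : (-1 : ℝ) ^ (q + m) = (-1 : ℝ) ^ p := by
        have : q + m + 2 * j = p + 2 * q := by omega
        have e3 : (-1 : ℝ) ^ (q + m + 2 * j) = (-1) ^ (p + 2 * q) := by rw [this]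
        simpa [pow_add, pow_mul] using e3
      have e4 : (-1 : ℝ) ^ (q + 1) * (-(X * (D.ht s0 - a) ^ m)) =
          ((-1 : ℝ) ^ (q + m) * X) * (a - D.ht s0) ^ m := by
        rw [e1, pow_add, pow_add]; ring
      rw [e4, e2]
      exact mul_pos hsg hY
    have hk0 : -(X * (D.ht s0 - a) ^ m) ≠ 0 := by
      intro h; rw [h] at hk; simp at hk
    have hsplit' : D.qw τ S1 j a = D.qw τ S j a + Pi.single s0 (-(X * (D.ht s0 - a) ^ m)) := by
      rw [hsplit a, Pi.single_neg, add_neg_cancel_right]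
    have h1 := hJa (hf0 a) _ hk0 (by
      rw [← hsplit']; exact rad_eq H hj (Or.inl (valS1 a ha.1.le ha.2.le (Or.inl ha.1))))
    rw [← hsplit'] at h1
    simp only [(sign_iff hk).1, (sign_iff hk).2] at h1
    have h2 := np_path H (S := S) (c := c) (c' := D.ht s0) hj (fun b hb => by
      rw [Set.uIcc_of_le hcc.le] at hb
      exact Or.inl (hvc0 b hb.1 hb.2))
    have h3 := np_path H (S := S1) (c := a) (c' := c1) hj (fun b hb => by
      rw [Set.uIcc_of_le ha.2.le] at hb
      have : D.ht s0 < b := lt_of_lt_of_le ha.1 hb.1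
      exact Or.inl (valS1 b this.le hb.2 (Or.inl this)))
    simp only [Nat.even_add_one, Nat.odd_add_one, Nat.not_even_iff_odd, Nat.not_odd_iff_even] at h1
    simp only [hpj, hqj, true_and, false_and, if_false, add_zero]
    rw [h2.1, h2.2, ← h3.1, ← h3.2, h1.1, h1.2]
    exact ⟨rfl, rfl⟩
  · -- case (ii)
    have h2 := np_path H (S := S) (c := c) (c' := D.ht s0) hj (fun b hb => by
      rw [Set.uIcc_of_le hcc.le] at hb
      exact Or.inl (valS b hb.1 hb.2 (Or.inr (by omega))))
    have h3 := np_path H (S := S1) (c := D.ht s0) (c' := c1) hj (fun b hb => by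
      rw [Set.uIcc_of_le hc01.le] at hb
      exact Or.inl (valS1 b hb.1 hb.2 (Or.inr (by omega))))
    have h4 : D.qw τ S j (D.ht s0) = D.qw τ S1 j (D.ht s0) := by
      rw [hsplit, sub_self, zero_pow (by omega), mul_zero, Pi.single_zero, add_zero]
    simp only [hpj, hqj, false_and, if_false, add_zero]
    rw [h2.1, h2.2, h4, h3.1, h3.2]
    exact ⟨rfl, rfl⟩

variable (D) in
def Num (τ : Finset R) (S : Finset V) (c : ℝ) : Prop :=
  (∀ j, 2 * (j + 1) + τ.card ≤ D.d →
    (Even j → np (D.qw τ S (j + 1) c) (D.F (j + 1)) = np (D.qw τ S j c) (D.F j)) ∧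
    (Odd j → np (-(D.qw τ S (j + 1) c)) (D.F (j + 1)) = np (-(D.qw τ S j c)) (D.F j))) ∧
  np (-(D.qw τ S 0 c)) (D.F 0) = 0

theorem np_zero {V : Type*} [Fintype V] (F : Submodule ℝ (V → ℝ)) : np (0 : V → ℝ) F = 0 := by
  obtain ⟨W, _, h1, h2⟩ := np_exists (0 : V → ℝ) F
  rw [← h1]
  have : W = ⊥ := by
    rw [Submodule.eq_bot_iff]
    intro f hf
    by_contra h
    have := h2 f hf h
    rw [wf_zero_weight] at this
    exact lt_irrefl _ this
  rw [this, finrank_bot]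

theorem num_all {τ : Finset R} (H : D.HLt τ) (hτ : τ.card ≤ D.d) : ∀ (N : ℕ) (S : Finset V) (c : ℝ),
    (S.filter fun s => τ ⊆ D.B s).card = N → D.Str τ S c → D.Num τ S c := by
  intro N
  induction N with
  | zero =>
    intro S c hN _
    have h0 : ∀ j, D.qw τ S j c = 0 := by
      intro j; ext s
      simp only [qw, wt]
      by_cases hs : τ ⊆ D.B s
      · have : s ∉ S := fun h => by
          have : s ∈ S.filter fun s => τ ⊆ D.B s := by simp [h, hs]
          rw [Finset.card_eq_zero.1 hN] at this; simp at this
        simp [bw, this]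
      · simp [D.bw_eq_zero hs]
    simp [Num, h0, np_zero]
  | succ N ih =>
    intro S c hN hc
    obtain ⟨s0, hs0', hmin⟩ := Finset.exists_min_image (S.filter fun s => τ ⊆ D.B s) D.ht
      (Finset.card_pos.1 (by omega))
    obtain ⟨hs0S, hs0⟩ := Finset.mem_filter.1 hs0'
    have hAE : D.AboveEq τ S s0 := by
      intro s hs
      constructor
      · intro h; exact hmin s (Finset.mem_filter.2 ⟨h, hs⟩)
      · intro h; exact (hc s hs).1.2 (lt_of_lt_of_le ((hc s0 hs0).1.1 hs0S) h)
    have hA : D.Above τ (S.erase s0) s0 := by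
      intro s hs
      rw [Finset.mem_erase, hAE s hs]
      constructor
      · rintro ⟨h1, h2⟩; exact lt_of_le_of_ne h2 fun e => h1 (D.ht_inj e).symm
      · intro h; exact ⟨by rintro rfl; exact lt_irrefl _ h, h.le⟩
    obtain ⟨c1, hc1, hc1'⟩ := D.exists_above (D.ht s0)
    have hStr : D.Str τ (S.erase s0) c1 := by
      intro s hs
      rw [hA s hs]
      refine ⟨⟨hc1' s, fun h => lt_trans hc1 h⟩, ?_⟩
      intro e
      have := hc1' s (by linarith)
      linarith
    have hnum := ih (S.erase s0) c1 (by
      rw [Finset.filter_erase, Finset.card_erase_of_mem hs0']; omega) hStr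
    have hT := fun j hj => transition H hs0 hA hAE hc hStr hc1 (j := j) hj
    refine ⟨fun j hj => ?_, ?_⟩
    · have t1 := hT j (by omega)
      have t2 := hT (j + 1) hj
      have n1 := hnum.1 j hj
      generalize (D.Rp τ s0).card = q at *
      generalize (D.Rm τ s0).card = p at *
      constructor
      · intro hev
        have e1 := t1.1
        have e2 := t2.1
        rw [n1.1 hev] at e2
        have a1 : (q < j ∧ Odd q) ↔ (q < j + 1 ∧ Odd q) := by grind
        have a2 : (p ≤ j ∧ Even p) ↔ (p ≤ j + 1 ∧ Even p) := by grind
        simp only [← a1, ← a2] at e2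
        omega
      · intro hev
        have e1 := t1.2
        have e2 := t2.2
        rw [n1.2 hev] at e2
        have a1 : (q < j ∧ Even q) ↔ (q < j + 1 ∧ Even q) := by grind
        have a2 : (p ≤ j ∧ Odd p) ↔ (p ≤ j + 1 ∧ Odd p) := by grind
        simp only [← a1, ← a2] at e2
        omega
    · have t1 := (hT 0 (by omega)).2
      rw [hnum.2] at t1
      have : ¬ ((D.Rm τ s0).card ≤ 0 ∧ Odd (D.Rm τ s0).card) := by
        rintro ⟨h1, h2⟩
        rw [Nat.le_zero.1 h1] at h2; simp at h2
      simp only [this, if_false, Nat.not_lt_zero, false_and, add_zero] at t1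
      exact t1

theorem num_valL {τ : Finset R} (H : D.HLt τ) {S : Finset V} {c : ℝ} {j : ℕ}
    (hv : D.val τ S c (j + 1)) :
    (Even j → np (D.qw τ S (j + 1) c) (D.F (j + 1)) = np (D.qw τ S j c) (D.F j)) ∧
    (Odd j → np (-(D.qw τ S (j + 1) c)) (D.F (j + 1)) = np (-(D.qw τ S j c)) (D.F j)) := by
  have hle : 2 * (j + 1) + τ.card ≤ D.d := by
    rcases hv with h | h
    · omega
    · omega
  obtain ⟨c', h1, h2, h3⟩ : ∃ c', D.Str τ S c' ∧ (∀ a ∈ Set.uIcc c c', D.valL τ S a j) ∧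
      (∀ a ∈ Set.uIcc c c', D.valL τ S a (j + 1) ∨ 2 * (j + 1) + τ.card = D.d) := by
    rcases hv with ⟨h, h'⟩ | ⟨h, h'⟩
    · obtain ⟨c', h1, h2⟩ := valL_path h'
      exact ⟨c', h1, fun a ha => valL_mono (by omega) (h2 a ha), fun a ha => Or.inl (h2 a ha)⟩
    · obtain ⟨c', h1, h2⟩ := valL_path (h' j rfl)
      exact ⟨c', h1, h2, fun a ha => Or.inr h⟩
  have e1 := np_path H (by omega) fun a ha => Or.inl (h2 a ha)
  have e2 := np_path H hle h3
  have e3 := (num_all H (by omega) _ S c' rfl h1).1 j hle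
  rw [e1.1, e1.2, e2.1, e2.2]
  exact e3

theorem num_zero {τ : Finset R} (H : D.HLt τ) {S : Finset V} {c : ℝ} (hτ : τ.card ≤ D.d)
    (hv : D.valL τ S c 0) : np (-(D.qw τ S 0 c)) (D.F 0) = 0 := by
  obtain ⟨c', h1, h2⟩ := valL_path hv
  rw [(np_path H (by omega) fun a ha => Or.inl (h2 a ha)).2]
  exact (num_all H hτ _ S c' rfl h1).2

theorem wf_smul_weight {V : Type*} [Fintype V] (a : ℝ) (μ f g : V → ℝ) :
    wf (a • μ) f g = a * wf μ f g := by
  simp only [wf, Finset.mul_sum, Pi.smul_apply, smul_eq_mul]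
  exact Finset.sum_congr rfl fun s _ => by ring

theorem HRs_of_HLt {τ : Finset R} (H : D.HLt τ) (hτ : τ.card < D.d) {S : Finset V} {c : ℝ} {j : ℕ}
    (hv : D.val τ S c j) : D.HRs τ S c j := by
  have hle : 2 * j + τ.card ≤ D.d := by
    rcases hv with h | h <;> omega
  have hrad : rad (D.qw τ S j c) (D.F j) = D.NN τ S j :=
    rad_eq H hle (hv.imp And.right And.left)
  intro f hf hprim
  change 0 ≤ (-1 : ℝ) ^ j * wf (D.qw τ S j c) f f ∧ (wf (D.qw τ S j c) f f = 0 → f ∈ D.NN τ S j)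
  rw [← hrad]
  cases j with
  | zero =>
    have hv0 : D.valL τ S c 0 := by
      rcases hv with h | h
      · exact h.2
      · omega
    have := hr_char (μ := D.qw τ S 0 c) (μ' := 0) (F := D.F 0) (F' := ⊥) (0 : (V → ℝ) →ₗ[ℝ] (V → ℝ))
      (fun f _ => by simp) (fun f => by simp [wf_zero_left, wf_zero_weight])
      (by rw [num_zero H hτ.le hv0]; exact Nat.zero_le _) hf
      (fun g _ => by simp [wf_zero_right])
    simpa using this
  | succ j =>
    have hn := num_valL H hv
    set L : (V → ℝ) →ₗ[ℝ] (V → ℝ) := LinearMap.mulLeft ℝ (fun s => D.ht s - c) with hL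
    have hLa : ∀ f s, L f s = (D.ht s - c) * f s := fun f s => rfl
    have hLF : ∀ f ∈ D.F j, L f ∈ D.F (j + 1) := fun f hf => by
      rw [add_comm]; exact D.F_mul (D.hc_mem c) hf
    have hq : ∀ f, wf (D.qw τ S j c) f f = wf (D.qw τ S (j + 1) c) (L f) (L f) := by
      intro f
      simp only [wf, qw, wt, hLa]
      refine Finset.sum_congr rfl fun s _ => ?_
      rw [show D.d - τ.card - 2 * j = D.d - τ.card - 2 * (j + 1) + 2 by omega]
      ring
    have hp : ∀ g ∈ D.F j, wf (D.qw τ S (j + 1) c) f (L g) = 0 := by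
      intro g hg
      rw [← hprim j rfl g hg]
      simp only [wf, qw, wt, hLa]
      exact Finset.sum_congr rfl fun s _ => by ring
    rcases Nat.even_or_odd j with hj | hj
    · have hodd : (-1 : ℝ) ^ (j + 1) = -1 := by rw [pow_succ, hj.neg_one_pow]; ring
      have := hr_char (μ := -(D.qw τ S (j + 1) c)) (μ' := -(D.qw τ S j c)) L hLF
        (fun f => by rw [wf_neg, wf_neg, hq]) (by rw [neg_neg, neg_neg, hn.1 hj]) hf
        (fun g hg => by rw [wf_neg, hp g hg, neg_zero])
      rw [wf_neg, rad_neg] at this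
      rw [hodd]
      exact ⟨by linarith [this.1], fun h => this.2 (by rw [h, neg_zero])⟩
    · have hev : (-1 : ℝ) ^ (j + 1) = 1 := by rw [pow_succ, hj.neg_one_pow]; ring
      have := hr_char (μ := D.qw τ S (j + 1) c) (μ' := D.qw τ S j c) L hLF
        hq (by rw [hn.2 hj]) hf hp
      rw [hev, one_mul]
      exact this

theorem HRs_base {τ : Finset R} (hτ : τ.card = D.d) {S : Finset V} {c : ℝ} {j : ℕ}
    (hj : 2 * j + τ.card ≤ D.d) : D.HRs τ S c j := by
  have hj0 : j = 0 := by omega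
  subst hj0
  intro f hf _
  rw [show D.d - τ.card - 2 * 0 = 0 by omega, D.wt_zero]
  have hnn : ∀ s, 0 ≤ D.bw τ S s := by
    intro s
    by_cases hs : τ ⊆ D.B s
    · have : τ = D.B s := Finset.eq_of_subset_of_card_le hs (by rw [D.cardB, hτ])
      simp only [bw]
      split_ifs
      · have := D.w_pos s; rw [xp, ‹τ = D.B s›]; exact this.le
      · exact le_rfl
    · rw [D.bw_eq_zero hs]
  have hn : ∀ s ∈ Finset.univ, 0 ≤ D.bw τ S s * f s * f s := fun s _ => by
    rw [mul_assoc]; exact mul_nonneg (hnn s) (mul_self_nonneg _)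
  refine ⟨by simpa [wf] using Finset.sum_nonneg hn, fun h => ⟨hf, fun g _ => ?_⟩⟩
  rw [wf, Finset.sum_eq_zero_iff_of_nonneg hn] at h
  refine Finset.sum_eq_zero fun s hs => ?_
  rcases mul_eq_zero.1 (h s hs) with h1 | h1
  · rw [h1, zero_mul]
  · rw [h1]; ring

theorem HRs_all (D : TD V R) : ∀ (n : ℕ) (τ : Finset R), τ.card + n = D.d → ∀ S c j, D.val τ S c j →
    D.HRs τ S c j := by
  intro n
  induction n with
  | zero =>
    intro τ hτ S c j hv
    exact HRs_base hτ (by rcases hv with h | h <;> omega)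
  | succ n ih =>
    intro τ hτ S c j hv
    refine HRs_of_HLt (fun S c j hj hv => ?_) (by omega) hv
    refine HL_valL hj hv fun c S r hr hv => ih (insert r τ) ?_ S c j hv
    rw [Finset.card_insert_of_notMem hr]; omega

theorem hard_lefschetz (D : TD V R) {k : ℕ} (hk : 2 * k < D.d) {f : V → ℝ} (hf : f ∈ D.F k)
    (h : ∀ g ∈ D.F k, ∑ s, D.w s * D.ht s ^ (D.d - 2 * k) * f s * g s = 0) :
    ∀ g ∈ D.F (D.d - k), ∑ s, D.w s * f s * g s = 0 := by
  have hHL : D.HL ∅ Finset.univ 0 k := by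
    refine HL_valL (by simpa using hk) (Or.inl fun _ _ => Finset.mem_univ _) fun c S r hr hv => ?_
    refine HRs_all D (D.d - 1) _ ?_ S c k hv
    rw [Finset.card_insert_of_notMem hr, Finset.card_empty]; omega
  have hb : D.bw ∅ Finset.univ = D.w := by ext s; simp [bw, xp]
  have h1 := hHL (show f ∈ _ from ⟨hf, fun g hg => by
    refine Eq.trans ?_ (h g hg)
    simp only [wf, wt, hb, sub_zero, Finset.card_empty, Nat.sub_zero]⟩)
  intro g hg
  have := h1.2 g (by simpa using hg)
  rw [hb] at this
  exact this

end TD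


theorem exists_generic {d : ℕ} {ι : Type*} [Finite ι] (f : ι → (Fin d → ℝ) →ₗ[ℝ] ℝ) (hf : ∀ i, f i ≠ 0)
    {O : Set (Fin d → ℝ)} (hO : IsOpen O) (hne : O.Nonempty) : ∃ p ∈ O, ∀ i, f i p ≠ 0 := by
  obtain ⟨u, hu⟩ := Module.Dual.exists_forall_ne_zero_of_forall_exists f (fun i => by
    by_contra! h
    exact hf i (LinearMap.ext h))
  obtain ⟨p, hp⟩ := hne
  have h1 : ∀ᶠ t in nhdsWithin (0 : ℝ) {0}ᶜ, p + t • u ∈ O := by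
    apply Filter.Eventually.filter_mono nhdsWithin_le_nhds
    have hc : Continuous fun t : ℝ => p + t • u := by fun_prop
    exact hc.continuousAt.eventually (by simpa using hO.mem_nhds hp)
  have h2 : ∀ i, ∀ᶠ t in nhdsWithin (0 : ℝ) {0}ᶜ, f i (p + t • u) ≠ 0 := by
    intro i
    by_cases h0 : f i p = 0
    · filter_upwards [self_mem_nhdsWithin] with t ht
      simpa [h0, hu i] using ht
    · apply Filter.Eventually.filter_mono nhdsWithin_le_nhds
      have hc : Continuous fun t : ℝ => f i (p + t • u) := by
        simp only [map_add, map_smul, smul_eq_mul]; fun_prop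
      exact hc.continuousAt.eventually_ne (by simpa using h0)
  obtain ⟨t, ht1, ht2⟩ := (h1.and (Filter.eventually_all.2 h2)).exists
  exact ⟨_, ht1, ht2⟩

structure GD (d : ℕ) (V R : Type*) [Fintype V] [Fintype R] where
  e : R → (Fin d → ℝ)
  B : V → Finset R
  B_inj : Function.Injective B
  cardB : ∀ s, (B s).card = d
  c : V → R → ((Fin d → ℝ) →ₗ[ℝ] ℝ)
  c_off : ∀ s r, r ∉ B s → c s r = 0
  c_e : ∀ s r r', r' ∈ B s → c s r (e r') = if r = r' then 1 else 0
  rep : ∀ s y, ∑ r, c s r y • e r = y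
  used : ∀ r, ∃ s, r ∈ B s
  cover : ∀ y, ∃ s, ∀ r, 0 ≤ c s r y
  inter : ∀ s s' y, (∀ r, 0 ≤ c s r y) → (∀ r, 0 ≤ c s' r y) → ∀ r, c s r y = c s' r y

namespace GD
variable {d : ℕ} {V R : Type*} [Fintype V] [Fintype R] (G : GD d V R)

def cone (s : V) : Set (Fin d → ℝ) := {y | ∀ r, 0 ≤ G.c s r y}

theorem c_cont (s : V) (r : R) : Continuous (G.c s r) := LinearMap.continuous_of_finiteDimensional _

theorem cone_closed (s : V) : IsClosed (G.cone s) := by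
  have : G.cone s = ⋂ r, {y | 0 ≤ G.c s r y} := by ext y; simp [cone]
  rw [this]
  exact isClosed_iInter fun r => isClosed_le continuous_const (G.c_cont s r)

theorem lin (l : (Fin d → ℝ) →ₗ[ℝ] ℝ) (s : V) (y : Fin d → ℝ) : ∑ r, l (G.e r) * G.c s r y = l y := by
  conv_rhs => rw [← G.rep s y]
  rw [map_sum]
  exact Finset.sum_congr rfl fun r _ => by rw [map_smul, smul_eq_mul, mul_comm]

theorem c_sum (s : V) (a : R → ℝ) (r : R) (T : Finset R) (hT : T ⊆ G.B s) :
    G.c s r (∑ r' ∈ T, a r' • G.e r') = if r ∈ T then a r else 0 := by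
  rw [map_sum]
  have : ∀ r' ∈ T, G.c s r (a r' • G.e r') = if r = r' then a r' else 0 := by
    intro r' h; rw [map_smul, G.c_e s r r' (hT h)]; simp
  rw [Finset.sum_congr rfl this, Finset.sum_ite_eq]

theorem wall_out {s s' : V} (hne : s ≠ s') {r : R} (hr : r ∈ G.B s) (h : (G.B s).erase r ⊆ G.B s') :
    r ∉ G.B s' := by
  intro hr'
  apply hne
  apply G.B_inj
  apply Finset.eq_of_subset_of_card_le
  · intro x hx
    by_cases hxr : x = r
    · rwa [hxr]
    · exact h (Finset.mem_erase.2 ⟨hxr, hx⟩)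
  · rw [G.cardB, G.cardB]

/-- the other ray across a wall -/
theorem wall_other {s s' : V} (hne : s ≠ s') {r : R} (hr : r ∈ G.B s) (h : (G.B s).erase r ⊆ G.B s') :
    ∃ r', r' ∉ G.B s ∧ G.B s' = insert r' ((G.B s).erase r) := by
  have h1 := G.wall_out hne hr h
  have h2 : (G.B s' \ (G.B s).erase r).card = 1 := by
    rw [Finset.card_sdiff_of_subset h, Finset.card_erase_of_mem hr, G.cardB, G.cardB]
    have : 0 < d := by rw [← G.cardB s]; exact Finset.card_pos.2 ⟨r, hr⟩
    omega
  obtain ⟨r', hr'⟩ := Finset.card_eq_one.1 h2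
  have h3 : r' ∈ G.B s' \ (G.B s).erase r := by rw [hr']; simp
  rw [Finset.mem_sdiff] at h3
  refine ⟨r', fun h4 => ?_, ?_⟩
  · have : r' ≠ r := by rintro rfl; exact h1 h3.1
    exact h3.2 (Finset.mem_erase.2 ⟨this, h4⟩)
  · rw [← Finset.sdiff_union_of_subset h, hr']; rfl

/-- on the wall hyperplane the coordinates agree -/
theorem wall_agree {s s' : V} {r : R} (h : (G.B s).erase r ⊆ G.B s')
    {y : Fin d → ℝ} (hy : G.c s r y = 0) (r' : R) : G.c s r' y = G.c s' r' y := by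
  have h1 : y = ∑ q ∈ (G.B s).erase r, G.c s q y • G.e q := by
    conv_lhs => rw [← G.rep s y]
    symm
    apply Finset.sum_subset (Finset.subset_univ _)
    intro q _ hq
    by_cases hqr : q = r
    · rw [hqr, hy, zero_smul]
    · rw [G.c_off s q (fun h => hq (Finset.mem_erase.2 ⟨hqr, h⟩)), LinearMap.zero_apply, zero_smul]
  have h2 := G.c_sum s (fun q => G.c s q y) r' _ ((G.B s).erase_subset r)
  have h3 := G.c_sum s' (fun q => G.c s q y) r' _ h
  rw [← h1] at h2 h3
  rw [h2, h3]

theorem wall_prop {s s' : V} (hne : s ≠ s') {r r' : R} (hr : r ∈ G.B s) (h : (G.B s).erase r ⊆ G.B s')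
    (hr' : r' ∈ G.B s') (y : Fin d → ℝ) (hr'' : r' ∉ G.B s) :
    G.c s r y = G.c s r (G.e r') * G.c s' r' y := by
  rw [← G.lin (G.c s r) s' y]
  refine Finset.sum_eq_single r' (fun q _ hq => ?_) (by simp)
  by_cases hqs : q ∈ G.B s'
  · obtain ⟨p, hp, hB⟩ := G.wall_other hne hr h
    rw [hB] at hqs hr'
    have : r' = p := by
      rcases Finset.mem_insert.1 hr' with h | h
      · exact h
      · exact absurd (Finset.mem_of_mem_erase h) hr''
    subst this
    have := Finset.mem_of_mem_insert_of_ne hqs hq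
    rw [Finset.mem_erase] at this
    rw [G.c_e s r q this.2, if_neg (Ne.symm this.1), zero_mul]
  · rw [G.c_off s' q hqs, LinearMap.zero_apply, mul_zero]

theorem wall_neg {s s' : V} (hne : s ≠ s') {r r' : R} (hr : r ∈ G.B s) (h : (G.B s).erase r ⊆ G.B s')
    (hr' : r' ∈ G.B s') (hr'' : r' ∉ G.B s) : G.c s r (G.e r') < 0 := by
  by_contra hcon
  rw [not_lt] at hcon
  rcases eq_or_lt_of_le hcon with h0 | h0
  · have := G.wall_prop hne hr h hr' (G.e r) hr''
    rw [← h0, zero_mul, G.c_e s r r hr] at this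
    simp at this
  · set z := ∑ q ∈ (G.B s).erase r, (1 : ℝ) • G.e q with hz
    have hzs := fun q => G.c_sum s (fun _ => 1) q _ ((G.B s).erase_subset r)
    have hzs' := fun q => G.c_sum s' (fun _ => 1) q _ h
    rw [← hz] at hzs hzs'
    have hev : ∀ᶠ t in nhdsWithin (0 : ℝ) (Set.Ioi 0), ∀ q, 0 ≤ G.c s q (z + t • G.e r') := by
      refine Filter.eventually_all.2 fun q => ?_
      by_cases hq : q ∈ (G.B s).erase r
      · apply Filter.Eventually.filter_mono nhdsWithin_le_nhds
        have hc : Continuous fun t : ℝ => G.c s q (z + t • G.e r') := by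
          simp only [map_add, map_smul, smul_eq_mul]; fun_prop
        have : (0 : ℝ) < G.c s q (z + (0 : ℝ) • G.e r') := by rw [zero_smul, add_zero, hzs, if_pos hq]; simp
        exact (hc.continuousAt.eventually (lt_mem_nhds this)).mono fun t ht => ht.le
      · filter_upwards [self_mem_nhdsWithin] with t ht
        rw [map_add, map_smul, hzs, if_neg hq, zero_add, smul_eq_mul]
        by_cases hqr : q = r
        · subst hqr; exact mul_nonneg (le_of_lt ht) hcon
        · rw [G.c_off s q (fun h => hq (Finset.mem_erase.2 ⟨hqr, h⟩))]; simp
    obtain ⟨t, ht1, ht2⟩ := (hev.and self_mem_nhdsWithin).exists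
    have ht2' : 0 < t := ht2
    have h3 := G.inter s s' _ ht1 (fun q => by
      rw [map_add, map_smul, hzs', G.c_e s' q r' hr', smul_eq_mul]
      split_ifs <;> simp <;> positivity) r
    rw [G.c_off s' r (G.wall_out hne hr h), map_add, map_smul, hzs, if_neg (by simp)] at h3
    simp at h3
    rcases h3 with h3 | h3
    · linarith
    · linarith

theorem wall_exists (s : V) {r : R} (hr : r ∈ G.B s) : ∃ s', s ≠ s' ∧ (G.B s).erase r ⊆ G.B s' := by
  set z := ∑ q ∈ (G.B s).erase r, (1 : ℝ) • G.e q with hz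
  have hzs := fun q => G.c_sum s (fun _ => 1) q _ ((G.B s).erase_subset r)
  rw [← hz] at hzs
  set U : Set (Fin d → ℝ) := ⋃ s' : {s' // s' ≠ s}, G.cone s' with hU
  have hUc : IsClosed U := isClosed_iUnion_of_finite fun s' => G.cone_closed _
  by_cases hzU : z ∈ U
  · obtain ⟨⟨s', hs'⟩, hz'⟩ := Set.mem_iUnion.1 hzU
    refine ⟨s', hs'.symm, fun q hq => ?_⟩
    have := G.inter s s' z (fun q => by rw [hzs]; split_ifs <;> simp) hz' q
    by_contra hqs
    rw [G.c_off s' q hqs, hzs, if_pos hq] at this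
    simp at this
  · exfalso
    have h1 : ∀ᶠ t in nhdsWithin (0 : ℝ) (Set.Ioi 0), z - t • G.e r ∈ Uᶜ := by
      apply Filter.Eventually.filter_mono nhdsWithin_le_nhds
      have hc : Continuous fun t : ℝ => z - t • G.e r := by fun_prop
      have h0 : Uᶜ ∈ nhds (z - (0 : ℝ) • G.e r) := by
        rw [zero_smul, sub_zero]; exact hUc.isOpen_compl.mem_nhds hzU
      exact hc.continuousAt.eventually h0
    obtain ⟨t, ht1, ht2⟩ := (h1.and self_mem_nhdsWithin).exists
    have ht2' : 0 < t := ht2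
    obtain ⟨s', hs'⟩ := G.cover (z - t • G.e r)
    by_cases hss : s' = s
    · subst hss
      have := hs' r
      rw [map_sub, map_smul, hzs, if_neg (by simp), G.c_e _ r r hr] at this
      simp at this
      linarith
    · exact ht1 (Set.mem_iUnion.2 ⟨⟨s', hss⟩, hs'⟩)

theorem wall_unique {s s' s'' : V} (hne : s ≠ s') (hne' : s ≠ s'') {r : R} (hr : r ∈ G.B s)
    (h : (G.B s).erase r ⊆ G.B s') (h' : (G.B s).erase r ⊆ G.B s'') : s' = s'' := by
  by_contra hcon
  obtain ⟨p, hp, hB⟩ := G.wall_other hne hr h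
  obtain ⟨p', hp', hB'⟩ := G.wall_other hne' hr h'
  have hps : p ∈ G.B s' := by rw [hB]; simp
  have hps' : p' ∈ G.B s'' := by rw [hB']; simp
  have h1 := G.wall_neg hne hr h hps hp
  have h2 := G.wall_neg hne' hr h' hps' hp'
  have h3 := G.wall_prop hne hr h hps (G.e p') hp
  have hpp : p' ∉ G.B s' := by
    intro hh
    rw [hB, Finset.mem_insert] at hh
    rcases hh with rfl | hh
    · exact hcon (G.B_inj (by rw [hB, hB']))
    · exact hp' (Finset.mem_of_mem_erase hh)
  have h4 := G.wall_neg hcon hps (by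
    rw [hB, Finset.erase_insert (fun hh => hp (Finset.mem_of_mem_erase hh))]; exact h') hps' hpp
  nlinarith

/-! convexity -/

noncomputable def ls (l : (Fin d → ℝ) → ℝ) (s : V) : (Fin d → ℝ) →ₗ[ℝ] ℝ := ∑ r, l (G.e r) • G.c s r

theorem ls_apply (l : (Fin d → ℝ) → ℝ) (s : V) (y) : G.ls l s y = ∑ r, l (G.e r) * G.c s r y := by
  simp [ls]

theorem ls_e (l : (Fin d → ℝ) → ℝ) {s : V} {r : R} (hr : r ∈ G.B s) : G.ls l s (G.e r) = l (G.e r) := by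
  rw [ls_apply, Finset.sum_eq_single r]
  · rw [G.c_e s r r hr]; simp
  · intro q _ hq; rw [G.c_e s q r hr]; simp [hq]
  · simp

theorem exists_int (s : V) : ∃ z, ∀ r ∈ G.B s, 0 < G.c s r z := by
  refine ⟨∑ q ∈ G.B s, (1 : ℝ) • G.e q, fun r hr => ?_⟩
  rw [G.c_sum s _ r _ le_rfl, if_pos hr]; exact one_pos

theorem int_open (s : V) : IsOpen {y | ∀ r ∈ G.B s, 0 < G.c s r y} := by
  have : {y | ∀ r ∈ G.B s, 0 < G.c s r y} = ⋂ r : G.B s, {y | 0 < G.c s r y} := by ext y; simp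
  rw [this]
  exact isOpen_iInter_of_finite fun r => isOpen_lt continuous_const (G.c_cont s r)

theorem int_sub (s : V) {y} (h : ∀ r ∈ G.B s, 0 < G.c s r y) : y ∈ G.cone s := by
  intro r
  by_cases hr : r ∈ G.B s
  · exact (h r hr).le
  · rw [G.c_off s r hr]; simp

theorem line_mem {O : Set (Fin d → ℝ)} (hO : IsOpen O) {z : Fin d → ℝ} (hz : z ∈ O) (y : Fin d → ℝ) :
    ∃ t : ℝ, 0 < t ∧ t < 1 ∧ z + t • y ∈ O := by
  have h1 : ∀ᶠ t in nhdsWithin (0 : ℝ) (Set.Ioi 0), z + t • y ∈ O := by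
    apply Filter.Eventually.filter_mono nhdsWithin_le_nhds
    have hc : Continuous fun t : ℝ => z + t • y := by fun_prop
    exact hc.continuousAt.eventually (by simpa using hO.mem_nhds hz)
  obtain ⟨t, ht1, ht2⟩ := (h1.and (Ioo_mem_nhdsGT one_pos)).exists
  exact ⟨t, ht2.1, ht2.2, ht1⟩

theorem ls_le {l : (Fin d → ℝ) → ℝ} (hl : ConvexOn ℝ Set.univ l)
    (hls : ∀ s, ∀ y ∈ G.cone s, l y = G.ls l s y) (s : V) (y) : G.ls l s y ≤ l y := by
  obtain ⟨z, hz⟩ := G.exists_int s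
  obtain ⟨t, ht0, ht1, ht⟩ := line_mem (G.int_open s) hz (y - z)
  have h1 := hl.2 (Set.mem_univ z) (Set.mem_univ y) (sub_nonneg.2 ht1.le) ht0.le (by ring)
  have h2 : (1 - t) • z + t • y = z + t • (y - z) := by
    rw [sub_smul, smul_sub, one_smul]; abel
  rw [h2, hls s _ (G.int_sub s ht), hls s z (G.int_sub s hz), map_add, map_smul, map_sub] at h1
  simp only [smul_eq_mul] at h1
  have : t * (G.ls l s y) ≤ t * l y := by nlinarith
  exact le_of_mul_le_mul_left this ht0

theorem ls_strict {l : (Fin d → ℝ) → ℝ} (hl : ConvexOn ℝ Set.univ l)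
    (hls : ∀ s, ∀ y ∈ G.cone s, l y = G.ls l s y) (hst : Function.Injective (G.ls l)) {s : V} {r : R}
    (hr : r ∉ G.B s) : G.ls l s (G.e r) < l (G.e r) := by
  refine lt_of_le_of_ne (G.ls_le hl hls s _) fun heq => ?_
  have hout : G.e r ∉ G.cone s := by
    intro h
    obtain ⟨s', hs'⟩ := G.used r
    have := G.inter s s' (G.e r) h (fun q => by rw [G.c_e s' q r hs']; split_ifs <;> simp) r
    rw [G.c_off s r hr, G.c_e s' r r hs'] at this
    simp at this
  set O : Set (Fin d → ℝ) := {y | ∀ q ∈ G.B s, 0 < G.c s q (y - G.e r)} ∩ (G.cone s)ᶜ with hO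
  have hOo : IsOpen O := ((G.int_open s).preimage (continuous_id.sub continuous_const)).inter
    (G.cone_closed s).isOpen_compl
  have hne : O.Nonempty := by
    obtain ⟨z, hz⟩ := G.exists_int s
    obtain ⟨t, ht0, _, ht⟩ := line_mem (G.cone_closed s).isOpen_compl hout z
    refine ⟨G.e r + t • z, fun q hq => ?_, ht⟩
    rw [add_sub_cancel_left, map_smul]
    exact mul_pos ht0 (hz q hq)
  have hlO : ∀ y ∈ O, l y = G.ls l s y := by
    intro y hy
    apply le_antisymm _ (G.ls_le hl hls s y)
    have h1 := hl.2 (Set.mem_univ ((2 : ℝ) • (y - G.e r))) (Set.mem_univ ((2 : ℝ) • G.e r))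
      (show (0 : ℝ) ≤ 1 / 2 by norm_num) (show (0 : ℝ) ≤ 1 / 2 by norm_num) (by norm_num)
    have h2 : (1 / 2 : ℝ) • (2 : ℝ) • (y - G.e r) + (1 / 2 : ℝ) • (2 : ℝ) • G.e r = y := by
      rw [smul_smul, smul_smul]; norm_num
    have h3 : l ((2 : ℝ) • G.e r) = 2 * l (G.e r) := by
      obtain ⟨s', hs'⟩ := G.used r
      rw [hls s' _ (fun q => by rw [map_smul, G.c_e s' q r hs']; split_ifs <;> simp), map_smul,
        G.ls_e l hs', smul_eq_mul]
    rw [h2, h3, hls s ((2 : ℝ) • (y - G.e r)) (fun q => by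
      rw [map_smul]; exact mul_nonneg (by norm_num) (G.int_sub s hy.1 q)), map_smul, map_sub, heq] at h1
    simp only [smul_eq_mul] at h1
    linarith
  obtain ⟨p, hpO, hp⟩ := exists_generic (fun i : (s : V) × G.B s => G.c i.1 i.2) (fun i h => by
    have := G.c_e i.1 i.2 i.2 i.2.2
    rw [h] at this; simp at this) hOo hne
  obtain ⟨s', hs'⟩ := G.cover p
  have hint : ∀ q ∈ G.B s', 0 < G.c s' q p := fun q hq =>
    lt_of_le_of_ne (hs' q) (Ne.symm (hp ⟨s', ⟨q, hq⟩⟩))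
  have hss : s' ≠ s := by rintro rfl; exact hpO.2 hs'
  apply hss
  apply hst
  ext1 y
  obtain ⟨t, ht0, _, ht⟩ := line_mem (hOo.inter (G.int_open s')) ⟨hpO, hint⟩ (Pi.single y 1)
  have e1 := hlO _ ht.1
  have e2 := hlO _ hpO
  rw [hls s' _ (G.int_sub s' ht.2)] at e1
  rw [hls s' _ hs'] at e2
  rw [map_add, map_add, e2, map_smul, map_smul, smul_eq_mul, smul_eq_mul] at e1
  have e3 := mul_left_cancel₀ ht0.ne' (add_left_cancel e1)
  ext
  simpa using e3

end GD


theorem lagrange_zero {R : Type*} (S : Finset R) (a b : R → ℝ) (ha : ∀ r ∈ S, a r ≠ 0)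
    (hb : ∀ r ∈ S, b r ≠ 0)
    (hab : ∀ r ∈ S, ∀ r' ∈ S, r ≠ r' → a r' + (-(a r / b r)) * b r' ≠ 0) (f : ℝ[X]) (hf : f.degree < S.card) :
    f.eval 0 / ∏ r ∈ S, a r =
      ∑ r ∈ S, f.eval (-(a r / b r)) / (a r * ∏ r' ∈ S.erase r, (a r' + (-(a r / b r)) * b r')) := by
  have hinj : Set.InjOn (fun r => -(a r / b r)) S := by
    intro r hr r' hr' h
    by_contra hne
    apply hab r hr r' hr' hne
    have h' : -(a r / b r) = -(a r' / b r') := h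
    rw [h']
    have := hb r' hr'
    field_simp
    ring
  have h1 := Lagrange.eq_interpolate hinj hf
  have h2 := congrArg (Polynomial.eval 0) h1
  rw [Lagrange.interpolate_apply, Polynomial.eval_finsetSum] at h2
  rw [h2, Finset.sum_div]
  refine Finset.sum_congr rfl fun r hr => ?_
  have hr0 := ha r hr
  rw [Polynomial.eval_mul, Polynomial.eval_C, Lagrange.basis, Polynomial.eval_prod,
    ← Finset.mul_prod_erase S a hr]
  have h3 : ∀ r' ∈ S.erase r, Polynomial.eval 0 (Lagrange.basisDivisor (-(a r / b r)) (-(a r' / b r'))) =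
      a r' / (a r' + (-(a r / b r)) * b r') := by
    intro r' hr'
    rw [Finset.mem_erase] at hr'
    have h4 := hab r hr r' hr'.2 (Ne.symm hr'.1)
    have h5 := hb r' hr'.2
    have h6 : -(a r / b r) - -(a r' / b r') = (a r' + (-(a r / b r)) * b r') / b r' := by
      field_simp; ring
    simp only [Lagrange.basisDivisor, Polynomial.eval_mul, Polynomial.eval_C, Polynomial.eval_sub,
      Polynomial.eval_X]
    rw [h6]
    field_simp
    ring
  rw [Finset.prod_congr rfl h3, Finset.prod_div_distrib]
  have h7 : ∏ r' ∈ S.erase r, a r' ≠ 0 := Finset.prod_ne_zero_iff.2 fun q hq => ha q (Finset.mem_of_mem_erase hq)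
  have h8 : ∏ r' ∈ S.erase r, (a r' + (-(a r / b r)) * b r') ≠ 0 :=
    Finset.prod_ne_zero_iff.2 fun q hq => hab r hr q (Finset.mem_of_mem_erase hq) (Finset.ne_of_mem_erase hq).symm
  field_simp

namespace GD
variable {d : ℕ} {V R : Type*} [Fintype V] [Fintype R] (G : GD d V R)

noncomputable def dt (φ : Fin d → R) : ℝ := Matrix.det (Matrix.of fun i j : Fin d => G.e (φ i) j)

noncomputable def enum (s : V) (i : Fin d) : R := (((G.B s).equivFinOfCardEq (G.cardB s)).symm i).1

theorem enum_mem (s : V) (i : Fin d) : G.enum s i ∈ G.B s :=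
  (((G.B s).equivFinOfCardEq (G.cardB s)).symm i).2

theorem enum_surj (s : V) {r : R} (hr : r ∈ G.B s) : ∃ i, G.enum s i = r :=
  ⟨(G.B s).equivFinOfCardEq (G.cardB s) ⟨r, hr⟩, by simp [enum]⟩

theorem enum_inj (s : V) : Function.Injective (G.enum s) := by
  intro i j h
  exact ((G.B s).equivFinOfCardEq (G.cardB s)).symm.injective (Subtype.ext h)

noncomputable def vol (s : V) : ℝ := |G.dt (G.enum s)|

theorem vol_eq (s : V) {φ : Fin d → R} (hφ : Function.Injective φ) (h : ∀ i, φ i ∈ G.B s) :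
    |G.dt φ| = G.vol s := by
  choose σ hσ using fun i => G.enum_surj s (h i)
  have hinj : Function.Injective σ := fun i j hij => hφ (by rw [← hσ, ← hσ, hij])
  have hb : Function.Bijective σ := Finite.injective_iff_bijective.1 hinj
  have := Matrix.abs_det_submatrix_equiv_equiv (Equiv.ofBijective σ hb) (Equiv.refl (Fin d))
    (Matrix.of fun i j : Fin d => G.e (G.enum s i) j)
  rw [vol, dt, dt, ← this]
  congr 2
  ext i j
  simp [hσ]

theorem vol_pos (s : V) : 0 < G.vol s := by
  rw [vol, abs_pos, dt]
  have : (Matrix.of fun i j : Fin d => G.e (G.enum s i) j) *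
      (Matrix.of fun j i : Fin d => G.c s (G.enum s i) (Pi.single j 1)) = 1 := by
    ext i i'
    rw [Matrix.mul_apply]
    simp only [Matrix.of_apply]
    have h1 : ∑ j, G.e (G.enum s i) j * G.c s (G.enum s i') (Pi.single j 1) =
        G.c s (G.enum s i') (G.e (G.enum s i)) := by
      conv_rhs => rw [pi_eq_sum_univ' (G.e (G.enum s i))]
      rw [map_sum]
      refine Finset.sum_congr rfl fun j _ => ?_
      rw [map_smul, smul_eq_mul]
    rw [h1, G.c_e s _ _ (G.enum_mem s i), Matrix.one_apply]
    simp only [(G.enum_inj s).eq_iff, eq_comm]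
  have h2 := congrArg Matrix.det this
  rw [Matrix.det_mul, Matrix.det_one] at h2
  exact left_ne_zero_of_mul_eq_one h2

theorem vol_wall {s s' : V} (hne : s ≠ s') {r r' : R} (hr : r ∈ G.B s) (hr'' : r' ∉ G.B s)
    (hB : G.B s' = insert r' ((G.B s).erase r)) (v : Fin d → ℝ) :
    G.vol s' * G.c s' r' v = -(G.vol s * G.c s r v) := by
  have hr' : r' ∈ G.B s' := by rw [hB]; simp
  have h : (G.B s).erase r ⊆ G.B s' := by rw [hB]; exact Finset.subset_insert _ _
  obtain ⟨i, hi⟩ := G.enum_surj s hr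
  have h1 : G.dt (Function.update (G.enum s) i r') = G.c s r (G.e r') * G.dt (G.enum s) := by
    have h2 := Matrix.det_updateRow_sum (Matrix.of fun i j : Fin d => G.e (G.enum s i) j) i
      (fun k => G.c s (G.enum s k) (G.e r'))
    rw [hi, smul_eq_mul] at h2
    rw [dt, dt, ← h2]
    congr 1
    ext k j
    by_cases hk : k = i
    · subst hk
      simp only [Matrix.of_apply, Function.update_self, Matrix.updateRow_self]
      have h3 : G.e r' = ∑ k, G.c s (G.enum s k) (G.e r') • G.e (G.enum s k) := by
        conv_lhs => rw [← G.rep s (G.e r')]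
        rw [← Finset.sum_subset (Finset.subset_univ (G.B s)) (fun q _ hq => by rw [G.c_off s q hq]; simp)]
        symm
        apply Finset.sum_bij (fun k _ => G.enum s k)
        · intro k _; exact G.enum_mem s k
        · intro a _ b _ hab; exact G.enum_inj s hab
        · intro q hq; obtain ⟨k, hk⟩ := G.enum_surj s hq; exact ⟨k, Finset.mem_univ _, hk⟩
        · intro k _; rfl
      have h4 := congrFun h3 j
      rw [h4]
      simp only [Finset.sum_apply]
      rfl
    · simp [Function.update_of_ne hk, Matrix.updateRow_ne hk]
  have h2 : |G.dt (Function.update (G.enum s) i r')| = G.vol s' := by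
    apply G.vol_eq
    · intro a b hab
      by_cases ha : a = i <;> by_cases hb : b = i
      · rw [ha, hb]
      · subst ha
        rw [Function.update_self, Function.update_of_ne hb] at hab
        exact absurd (hab ▸ G.enum_mem s b) hr''
      · subst hb
        rw [Function.update_self, Function.update_of_ne ha] at hab
        exact absurd (hab ▸ G.enum_mem s a) hr''
      · rw [Function.update_of_ne ha, Function.update_of_ne hb] at hab
        exact G.enum_inj s hab
    · intro k
      by_cases hk : k = i
      · subst hk; rw [Function.update_self]; exact hr'
      · rw [Function.update_of_ne hk]
        apply h
        rw [Finset.mem_erase, ← hi]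
        exact ⟨fun hh => hk (G.enum_inj s hh), G.enum_mem s k⟩
  rw [h1, abs_mul, abs_of_neg (G.wall_neg hne hr h hr' hr'')] at h2
  rw [← h2, G.wall_prop hne hr h hr' v hr'', vol]
  ring

noncomputable def wgt (v : Fin d → ℝ) (s : V) : ℝ := 1 / (G.vol s * ∏ r ∈ G.B s, G.c s r v)

theorem l1 (v : Fin d → ℝ) (hv : ∀ s, ∀ r ∈ G.B s, G.c s r v ≠ 0) (l : List R) (hl : l.length < d) :
    ∑ s, G.wgt v s * (l.map (fun r => G.c s r v)).prod = 0 := by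
  -- choose the direction
  obtain ⟨u, -, hu⟩ := exists_generic
    (ι := ((s : V) × G.B s) ⊕ {i : (s : V) × (G.B s × G.B s) // i.2.1 ≠ i.2.2})
    (Sum.elim (fun i => G.c i.1 i.2) (fun i => (G.c i.1.1 i.1.2.2 v) • G.c i.1.1 i.1.2.1 -
      (G.c i.1.1 i.1.2.1 v) • G.c i.1.1 i.1.2.2)) (by
      rintro (i | ⟨i, hi⟩) h
      · have := G.c_e i.1 i.2 i.2 i.2.2
        simp only [Sum.elim_inl] at h
        rw [h] at this; simp at this
      · have h1 := LinearMap.congr_fun h (G.e i.2.1)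
        have hi' : (i.2.2 : R) ≠ i.2.1 := fun hh => hi (Subtype.ext hh.symm)
        simp only [Sum.elim_inr, LinearMap.sub_apply, LinearMap.smul_apply, LinearMap.zero_apply] at h1
        rw [G.c_e _ _ _ i.2.1.2, G.c_e _ _ _ i.2.1.2, if_pos rfl, if_neg hi'] at h1
        simp at h1
        exact hv _ _ i.2.2.2 h1) isOpen_univ ⟨0, trivial⟩
  have hu1 : ∀ s, ∀ r ∈ G.B s, G.c s r u ≠ 0 := fun s r hr => hu (Sum.inl ⟨s, ⟨r, hr⟩⟩)
  have hu2 : ∀ s, ∀ r ∈ G.B s, ∀ r' ∈ G.B s, r ≠ r' →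
      G.c s r' v + (-(G.c s r v / G.c s r u)) * G.c s r' u ≠ 0 := by
    intro s r hr r' hr' hne h
    have h1 := hu (Sum.inr ⟨⟨s, (⟨r, hr⟩, ⟨r', hr'⟩)⟩, fun hh => hne (congrArg Subtype.val hh)⟩)
    apply h1
    have := hu1 s r hr
    simp only [Sum.elim_inr, LinearMap.sub_apply, LinearMap.smul_apply, smul_eq_mul]
    field_simp at h
    linarith
  set Y : V → R → (Fin d → ℝ) := fun s r => v + (-(G.c s r v / G.c s r u)) • u with hY
  set T : (Σ _ : V, R) → ℝ := fun i => (l.map (fun q => G.c i.1 q (Y i.1 i.2))).prod /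
    (G.vol i.1 * G.c i.1 i.2 v * ∏ q ∈ (G.B i.1).erase i.2, G.c i.1 q (Y i.1 i.2)) with hT
  have hstep : ∀ s, G.wgt v s * (l.map (fun r => G.c s r v)).prod = ∑ r ∈ G.B s, T ⟨s, r⟩ := by
    intro s
    set f : ℝ[X] := (l.map (fun q => Polynomial.C (G.c s q v) + Polynomial.X * Polynomial.C (G.c s q u))).prod with hf
    have hfe : ∀ t, f.eval t = (l.map (fun q => G.c s q (v + t • u))).prod := by
      intro t
      rw [hf, Polynomial.eval_list_prod, List.map_map]
      congr 1
      apply List.map_congr_left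
      intro q _
      simp
      ring
    have hdeg : f.degree < (G.B s).card := by
      rw [G.cardB]
      refine lt_of_le_of_lt (Polynomial.degree_list_prod_le _) ?_
      refine lt_of_le_of_lt (List.sum_le_card_nsmul _ 1 ?_) ?_
      · intro x hx
        simp only [List.map_map, List.mem_map, Function.comp] at hx
        obtain ⟨q, _, rfl⟩ := hx
        refine (Polynomial.degree_add_le _ _).trans (max_le (Polynomial.degree_C_le.trans zero_le_one) ?_)
        refine (Polynomial.degree_mul_le _ _).trans ?_
        calc _ ≤ (1 : WithBot ℕ) + 0 := add_le_add Polynomial.degree_X_le Polynomial.degree_C_le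
          _ = 1 := add_zero _
      · simp only [List.length_map, nsmul_eq_mul, mul_one]
        exact_mod_cast hl
    have h1 := lagrange_zero (G.B s) (fun r => G.c s r v) (fun r => G.c s r u) (hv s) (hu1 s) (hu2 s) f hdeg
    have h2 : f.eval 0 = (l.map (fun r => G.c s r v)).prod := by rw [hfe]; simp
    rw [h2] at h1
    have h3 : G.wgt v s * (l.map (fun r => G.c s r v)).prod =
        (1 / G.vol s) * ((l.map (fun r => G.c s r v)).prod / ∏ r ∈ G.B s, G.c s r v) := by
      rw [wgt]
      have := (G.vol_pos s).ne'
      field_simp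
    rw [h3, h1, Finset.mul_sum]
    refine Finset.sum_congr rfl fun r hr => ?_
    rw [hfe, hT]
    simp only [hY, map_add, map_smul, smul_eq_mul]
    rw [div_mul_div_comm, one_mul, mul_assoc]
  rw [Finset.sum_congr rfl fun s _ => hstep s, Finset.sum_sigma' Finset.univ (fun s => G.B s) (fun s r => T ⟨s, r⟩)]
  have hex : ∀ i : (Σ _ : V, R), i.2 ∈ G.B i.1 → ∃ j : (Σ _ : V, R), i.1 ≠ j.1 ∧ j.2 ∉ G.B i.1 ∧
      G.B j.1 = insert j.2 ((G.B i.1).erase i.2) := by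
    intro i hi
    obtain ⟨s', h1, h2⟩ := G.wall_exists i.1 hi
    obtain ⟨r', h3, h4⟩ := G.wall_other h1 hi h2
    exact ⟨⟨s', r'⟩, h1, h3, h4⟩
  choose! g hg1 hg2 hg3 using hex
  have hgm : ∀ i : (Σ _ : V, R), i.2 ∈ G.B i.1 → (g i).2 ∈ G.B (g i).1 := fun i hi => by
    rw [hg3 i hi]; simp
  have hge : ∀ i : (Σ _ : V, R), i.2 ∈ G.B i.1 → (G.B (g i).1).erase (g i).2 = (G.B i.1).erase i.2 := fun i hi => by
    rw [hg3 i hi, Finset.erase_insert (fun h => hg2 i hi (Finset.mem_of_mem_erase h))]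
  refine Finset.sum_involution (fun i _ => g i) ?_ ?_ ?_ ?_
  · rintro ⟨s, r⟩ hi
    have hr : r ∈ G.B s := (Finset.mem_sigma.1 hi).2
    have h1 := hg1 ⟨s, r⟩ hr
    have h2 := hg2 ⟨s, r⟩ hr
    have h3 := hg3 ⟨s, r⟩ hr
    have h4 := hgm ⟨s, r⟩ hr
    have h5 := hge ⟨s, r⟩ hr
    generalize g ⟨s, r⟩ = j at *
    obtain ⟨s', r'⟩ := j
    simp only at h1 h2 h3 h4 h5
    have hsub : (G.B s).erase r ⊆ G.B s' := by rw [h3]; exact Finset.subset_insert _ _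
    have hp := fun y => G.wall_prop h1 hr hsub h4 y h2
    have hκ : G.c s r (G.e r') ≠ 0 := (G.wall_neg h1 hr hsub h4 h2).ne
    have hYe : Y s r = Y s' r' := by
      simp only [hY]
      rw [hp v, hp u, mul_div_mul_left _ _ hκ]
    have hY0 : G.c s r (Y s r) = 0 := by
      simp only [hY, map_add, map_smul, smul_eq_mul]
      have := hu1 s r hr
      field_simp
      ring
    have hag := G.wall_agree hsub hY0
    simp only [hT]
    rw [h5, ← hYe, G.vol_wall h1 hr h2 h3]
    simp only [← hag]
    rw [neg_mul, div_neg, add_neg_cancel]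
  · rintro ⟨s, r⟩ hi _ h
    exact hg1 ⟨s, r⟩ (Finset.mem_sigma.1 hi).2 (by rw [h])
  · rintro ⟨s, r⟩ hi
    exact Finset.mem_sigma.2 ⟨Finset.mem_univ _, hgm _ (Finset.mem_sigma.1 hi).2⟩
  · rintro ⟨s, r⟩ hi
    have hr : r ∈ G.B s := (Finset.mem_sigma.1 hi).2
    have h1 := hg1 ⟨s, r⟩ hr
    have h5 := hge ⟨s, r⟩ hr
    have k1 := hgm ⟨s, r⟩ hr
    have j1 := hg1 (g ⟨s, r⟩) k1
    have j2 := hg2 (g ⟨s, r⟩) k1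
    have j3 := hg3 (g ⟨s, r⟩) k1
    have e1 : s = (g (g ⟨s, r⟩)).1 := by
      refine G.wall_unique h1.symm j1 k1 (by rw [h5]; exact Finset.erase_subset _ _) ?_
      rw [j3]; exact Finset.subset_insert _ _
    have e2 : r = (g (g ⟨s, r⟩)).2 := by
      rw [← e1, h5] at j3
      have : r ∈ insert (g (g ⟨s, r⟩)).2 ((G.B s).erase r) := by rw [← j3]; exact hr
      rcases Finset.mem_insert.1 this with h | h
      · exact h
      · simp at h
    show g (g ⟨s, r⟩) = ⟨s, r⟩
    generalize g (g ⟨s, r⟩) = j at e1 e2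
    obtain ⟨a, b⟩ := j
    simp only at e1 e2
    rw [e1, e2]

/-- the toric data attached to a strictly convex function and a generic vector -/
noncomputable def toTD (hd : 1 ≤ d) (l : (Fin d → ℝ) → ℝ) (hl : ConvexOn ℝ Set.univ l)
    (hls : ∀ s, ∀ y ∈ G.cone s, l y = G.ls l s y) (hst : Function.Injective (G.ls l))
    (v : Fin d → ℝ) (hv : ∀ s, ∀ r ∈ G.B s, G.c s r v ≠ 0)
    (hinj : Function.Injective fun s => G.ls l s v) : TD V R where
  d := d
  B := G.B
  cardB := G.cardB
  x := fun r s => G.c s r v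
  x_ne := fun r s => ⟨fun h => by
    by_contra hr; rw [G.c_off s r hr] at h; simp at h, hv s r⟩
  w := G.wgt v
  w_pos := fun s => by
    have h0 : ∏ r ∈ G.B s, G.c s r v ≠ 0 := Finset.prod_ne_zero_iff.2 (hv s)
    have := G.vol_pos s
    rw [wgt]
    have h1 : 1 / (G.vol s * ∏ r ∈ G.B s, G.c s r v) * ∏ r ∈ G.B s, G.c s r v = 1 / G.vol s := by
      field_simp
    rw [h1]; positivity
  ht := fun s => G.ls l s v
  ht_inj := hinj
  gap := fun r s => l (G.e r) - G.ls l s (G.e r)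
  gap_nonneg := fun r s => sub_nonneg.2 (G.ls_le hl hls s _)
  gap_zero := fun r s => ⟨fun h => by
      by_contra hr
      have := G.ls_strict hl hls hst hr
      linarith, fun h => by rw [G.ls_e l h, sub_self]⟩
  ht_sub := fun s s' => by
    simp only [sub_mul, Finset.sum_sub_distrib, G.lin, ← G.ls_apply]
  one := by
    obtain ⟨s, -⟩ := G.cover 0
    obtain ⟨r, hr⟩ : (G.B s).Nonempty := Finset.card_pos.1 (by rw [G.cardB]; omega)
    refine ⟨fun q => (G.c s r v)⁻¹ * G.c s r (G.e q), fun s' => ?_⟩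
    simp only [mul_assoc]
    rw [← Finset.mul_sum, G.lin, inv_mul_cancel₀ (hv s r hr)]
  spn := by
    intro τ hτ r hr
    by_cases h : ∃ s0, τ ⊆ G.B s0
    · obtain ⟨s0, hs0⟩ := h
      obtain ⟨p, hp, hpτ⟩ := Finset.exists_mem_notMem_of_card_lt_card (show τ.card < (G.B s0).card by
        rw [G.cardB]; exact hτ)
      set u : (Fin d → ℝ) →ₗ[ℝ] ℝ := G.c s0 r - (G.c s0 r v / G.c s0 p v) • G.c s0 p with hu
      have huv : u v = 0 := by
        have := hv s0 p hp
        simp only [hu, LinearMap.sub_apply, LinearMap.smul_apply, smul_eq_mul]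
        field_simp; ring
      have hut : ∀ q ∈ τ, u (G.e q) = if r = q then 1 else 0 := by
        intro q hq
        simp only [hu, LinearMap.sub_apply, LinearMap.smul_apply, smul_eq_mul]
        rw [G.c_e s0 _ q (hs0 hq), G.c_e s0 _ q (hs0 hq), if_neg (show p ≠ q by rintro rfl; exact hpτ hq)]
        simp
      refine ⟨fun q => if q ∈ τ then 0 else - u (G.e q), fun q hq => by simp [hq], fun s _ => ?_⟩
      have h1 := G.lin u s v
      rw [huv, ← Finset.sum_add_sum_compl τ] at h1
      have h2 : ∑ q ∈ τ, u (G.e q) * G.c s q v = G.c s r v := by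
        rw [Finset.sum_congr rfl fun q hq => by rw [hut q hq]]
        simp [hr]
      rw [h2] at h1
      rw [← Finset.sum_add_sum_compl τ]
      have h3 : ∑ q ∈ τ, (if q ∈ τ then 0 else - u (G.e q)) * G.c s q v = 0 :=
        Finset.sum_eq_zero fun q hq => by simp [hq]
      have h4 : ∑ q ∈ τᶜ, (if q ∈ τ then 0 else - u (G.e q)) * G.c s q v = -∑ q ∈ τᶜ, u (G.e q) * G.c s q v := by
        rw [← Finset.sum_neg_distrib]
        exact Finset.sum_congr rfl fun q hq => by simp [Finset.mem_compl.1 hq]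
      rw [h3, h4]
      linarith
    · exact ⟨0, by simp, fun s hs => absurd ⟨s, hs⟩ h⟩
  nbr := by
    intro τ s r hτ hr hrτ
    obtain ⟨s', h1, h2⟩ := G.wall_exists s hr
    refine ⟨s', fun q hq => h2 (Finset.mem_erase.2 ⟨?_, hτ hq⟩), G.wall_out h1 hr h2⟩
    rintro rfl; exact hrτ hq
  l1 := G.l1 v hv

end GD


theorem coef_zero {R : Type*} [Fintype R] (P : MvPolynomial R ℝ) (T : Finset R)
    (h : ∀ x : R → ℝ, (∀ r, 0 ≤ x r) → (∀ r, r ∉ T → x r = 0) → MvPolynomial.eval x P = 0)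
    {α : R →₀ ℕ} (hα : α.support ⊆ T) : MvPolynomial.coeff α P = 0 := by
  set P' : MvPolynomial R ℝ := ∑ β ∈ P.support.filter (fun β => β.support ⊆ T),
    MvPolynomial.monomial β (MvPolynomial.coeff β P) with hP'
  have h0 : P' = 0 := by
    refine MvPolynomial.funext_set (fun _ => Set.Ici (0:ℝ)) (fun _ => Set.Ici_infinite _) ?_
    intro x hx
    rw [map_zero]
    have hx' : ∀ r, 0 ≤ x r := fun r => hx r (Set.mem_univ _)
    have := h (fun r => if r ∈ T then x r else 0) (fun r => by
      by_cases hr : r ∈ T <;> simp [hr, hx' r]) (fun r hr => by simp [hr])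
    rw [← this, hP', map_sum, MvPolynomial.eval_eq', Finset.sum_filter]
    refine Finset.sum_congr rfl fun β hβ => ?_
    split_ifs with hb
    · rw [MvPolynomial.eval_monomial, Finsupp.prod_fintype _ _ (fun _ => pow_zero _)]
      congr 1
      refine Finset.prod_congr rfl fun r _ => ?_
      by_cases hr : r ∈ T
      · simp [hr]
      · have : β r = 0 := by
          by_contra hc
          exact hr (hb (Finsupp.mem_support_iff.2 hc))
        simp [this]
    · obtain ⟨r, hr, hrT⟩ := Finset.not_subset.1 hb
      rw [Finset.prod_eq_zero (Finset.mem_univ r), mul_zero]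
      simp only [hrT, if_false]
      exact zero_pow (Finsupp.mem_support_iff.1 hr)
  have h1 : MvPolynomial.coeff α P' = MvPolynomial.coeff α P := by
    rw [hP', MvPolynomial.coeff_sum]
    simp only [MvPolynomial.coeff_monomial]
    rw [Finset.sum_ite_eq']
    split_ifs with hc
    · rfl
    · simp only [Finset.mem_filter, hα, and_true, MvPolynomial.mem_support_iff, not_not] at hc
      exact hc.symm
  rw [← h1, h0]; simp

namespace GD
variable {d : ℕ} {V R : Type*} [Fintype V] [Fintype R] (G : GD d V R)

noncomputable def Xf (r : R) (y : Fin d → ℝ) : ℝ := G.c (G.cover y).choose r y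

theorem Xf_eq {s : V} {y : Fin d → ℝ} (hy : y ∈ G.cone s) (r : R) : G.Xf r y = G.c s r y :=
  G.inter _ _ y (G.cover y).choose_spec hy r

/-- `A_k` -/
def Ak (k : ℕ) : Submodule ℝ ((Fin d → ℝ) → ℝ) where
  carrier := {f | ∀ s : V, ∃ p : MvPolynomial (Fin d) ℝ,
    p.IsHomogeneous k ∧ ∀ x ∈ G.cone s, f x = MvPolynomial.eval x p}
  add_mem' := by
    intro f g hf hg s
    obtain ⟨p, hp, hfp⟩ := hf s
    obtain ⟨q, hq, hgq⟩ := hg s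
    refine ⟨p + q, hp.add hq, fun x hx => ?_⟩
    simp [hfp x hx, hgq x hx]
  zero_mem' := by
    intro s
    exact ⟨0, MvPolynomial.isHomogeneous_zero _ _ _, fun x hx => by simp⟩
  smul_mem' := by
    intro c f hf s
    obtain ⟨p, hp, hfp⟩ := hf s
    refine ⟨MvPolynomial.C c * p, ?_, fun x hx => ?_⟩
    · simpa using (MvPolynomial.isHomogeneous_C (Fin d) c).mul hp
    · simp [hfp x hx]

theorem Ak_mul {i j : ℕ} {f g : (Fin d → ℝ) → ℝ} (hf : f ∈ G.Ak i) (hg : g ∈ G.Ak j) :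
    (f * g) ∈ G.Ak (i + j) := by
  intro s
  obtain ⟨p, hp, hfp⟩ := hf s
  obtain ⟨q, hq, hgq⟩ := hg s
  exact ⟨p * q, hp.mul hq, fun x hx => by simp [hfp x hx, hgq x hx]⟩

theorem Ak_one : (1 : (Fin d → ℝ) → ℝ) ∈ G.Ak 0 := fun s =>
  ⟨1, MvPolynomial.isHomogeneous_one _ _, fun x _ => by simp⟩

noncomputable def lpoly (l : (Fin d → ℝ) →ₗ[ℝ] ℝ) : MvPolynomial (Fin d) ℝ :=
  ∑ i, MvPolynomial.C (l (Pi.single i 1)) * MvPolynomial.X i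

theorem lpoly_hom (l : (Fin d → ℝ) →ₗ[ℝ] ℝ) : (lpoly l).IsHomogeneous 1 := by
  refine MvPolynomial.IsHomogeneous.sum _ _ _ fun i _ => ?_
  simpa using (MvPolynomial.isHomogeneous_C (Fin d) (l (Pi.single i 1))).mul
    (MvPolynomial.isHomogeneous_X ℝ i)

theorem lpoly_eval (l : (Fin d → ℝ) →ₗ[ℝ] ℝ) (y : Fin d → ℝ) :
    MvPolynomial.eval y (lpoly l) = l y := by
  conv_rhs => rw [pi_eq_sum_univ' y]
  simp only [lpoly, map_sum, map_mul, MvPolynomial.eval_C, MvPolynomial.eval_X, map_smul, smul_eq_mul]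
  exact Finset.sum_congr rfl fun i _ => by rw [mul_comm]

theorem Ak_lin (l : (Fin d → ℝ) →ₗ[ℝ] ℝ) : (fun y => l y) ∈ G.Ak 1 := fun s =>
  ⟨lpoly l, lpoly_hom l, fun x _ => by simp [lpoly_eval]⟩

theorem Ak_X (r : R) : G.Xf r ∈ G.Ak 1 := fun s =>
  ⟨lpoly (G.c s r), lpoly_hom _, fun x hx => by rw [lpoly_eval, G.Xf_eq hx]⟩

noncomputable def Xp (T : Finset R) : (Fin d → ℝ) → ℝ := fun y => ∏ r ∈ T, G.Xf r y

theorem Ak_Xp (T : Finset R) : G.Xp T ∈ G.Ak T.card := by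
  induction T using Finset.induction_on with
  | empty =>
    have : G.Xp ∅ = 1 := by ext y; simp [Xp]
    rw [this]; exact G.Ak_one
  | insert r T hr ih =>
    have : G.Xp (insert r T) = G.Xp T * G.Xf r := by
      ext y; simp [Xp, Finset.prod_insert hr, mul_comm]
    rw [this, Finset.card_insert_of_notMem hr]
    exact G.Ak_mul ih (G.Ak_X r)

theorem Ak_pow {f : (Fin d → ℝ) → ℝ} (hf : f ∈ G.Ak 1) (m : ℕ) : f ^ m ∈ G.Ak m := by
  induction m with
  | zero => rw [pow_zero]; exact G.Ak_one
  | succ m ih => rw [pow_succ]; exact G.Ak_mul ih hf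

/-- the degree k part of m A -/
noncomputable def mA : ℕ → Submodule ℝ ((Fin d → ℝ) → ℝ)
  | 0 => ⊥
  | k + 1 => Submodule.span ℝ
      {h | ∃ (l : (Fin d → ℝ) →ₗ[ℝ] ℝ) (f : (Fin d → ℝ) → ℝ),
        f ∈ G.Ak k ∧ h = fun x => l x * f x}

/-- evaluation relation -/
def Evl (v : Fin d → ℝ) (f : (Fin d → ℝ) → ℝ) (φ : V → ℝ) : Prop :=
  ∀ s, ∃ p : MvPolynomial (Fin d) ℝ, (∀ y ∈ G.cone s, f y = MvPolynomial.eval y p) ∧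
    φ s = MvPolynomial.eval v p

variable {G} {v : Fin d → ℝ}

theorem c_comb (s : V) {x : R → ℝ} (hx : ∀ r, r ∉ G.B s → x r = 0) (r : R) :
    G.c s r (∑ r', x r' • G.e r') = x r := by
  have : ∑ r', x r' • G.e r' = ∑ r' ∈ G.B s, x r' • G.e r' := by
    symm
    refine Finset.sum_subset (Finset.subset_univ _) fun r' _ h => by rw [hx r' h, zero_smul]
  rw [this, G.c_sum s x r _ (Finset.Subset.refl _)]
  split_ifs with h
  · rfl
  · exact (hx r h).symm

/-- polynomial in ray coordinates -/
noncomputable def rp (G : GD d V R) (s : V) (p : MvPolynomial (Fin d) ℝ) : MvPolynomial R ℝ :=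
  MvPolynomial.aeval (fun i => ∑ r ∈ G.B s, MvPolynomial.C (G.e r i) * MvPolynomial.X r) p

theorem rp_eval (s : V) (p : MvPolynomial (Fin d) ℝ) {x : R → ℝ} (hx : ∀ r, r ∉ G.B s → x r = 0) :
    MvPolynomial.eval x (rp G s p) = MvPolynomial.eval (∑ r, x r • G.e r) p := by
  unfold rp
  rw [← MvPolynomial.coe_aeval_eq_eval, ← MvPolynomial.coe_aeval_eq_eval]
  change (MvPolynomial.aeval x) _ = (MvPolynomial.aeval _) p
  rw [MvPolynomial.comp_aeval_apply]
  congr 2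
  funext i
  simp only [map_sum, map_mul, MvPolynomial.aeval_X, MvPolynomial.algHom_C, Finset.sum_apply,
    Pi.smul_apply, smul_eq_mul, Algebra.algebraMap_self, RingHom.id_apply]
  refine (Finset.sum_subset (Finset.subset_univ _) fun r _ h => by rw [hx r h]; simp).trans ?_
  exact Finset.sum_congr rfl fun r _ => mul_comm _ _

theorem rp_eval' (s : V) (p : MvPolynomial (Fin d) ℝ) (y : Fin d → ℝ) :
    MvPolynomial.eval (fun r => G.c s r y) (rp G s p) = MvPolynomial.eval y p := by
  rw [rp_eval s p (fun r hr => by simp [G.c_off s r hr]), G.rep]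

theorem rp_hom (s : V) {p : MvPolynomial (Fin d) ℝ} {k : ℕ} (hp : p.IsHomogeneous k) :
    (rp G s p).IsHomogeneous k := by
  have := hp.aeval (n := 1) (fun i => ∑ r ∈ G.B s, MvPolynomial.C (G.e r i) * MvPolynomial.X r)
    (fun i => MvPolynomial.IsHomogeneous.sum _ _ _ fun r _ => by
      simpa using (MvPolynomial.isHomogeneous_C R (G.e r i)).mul (MvPolynomial.isHomogeneous_X ℝ r))
  simpa [rp] using this

theorem rp_zero (s : V) {p : MvPolynomial (Fin d) ℝ} {T : Finset R} (hT : T ⊆ G.B s)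
    (h : ∀ y ∈ G.cone s, (∀ r, r ∉ T → G.c s r y = 0) → MvPolynomial.eval y p = 0)
    {α : R →₀ ℕ} (hα : α.support ⊆ T) : MvPolynomial.coeff α (rp G s p) = 0 := by
  refine coef_zero _ T (fun x hx hxT => ?_) hα
  have hx' : ∀ r, r ∉ G.B s → x r = 0 := fun r hr => hxT r fun h => hr (hT h)
  rw [rp_eval s p hx']
  refine h _ (fun r => ?_) (fun r hr => ?_)
  · rw [c_comb s hx']; exact hx r
  · rw [c_comb s hx']; exact hxT r hr

theorem poly_unique (s : V) {p : MvPolynomial (Fin d) ℝ}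
    (h : ∀ y ∈ G.cone s, MvPolynomial.eval y p = 0) (z) : MvPolynomial.eval z p = 0 := by
  rw [← rp_eval' (G := G) s p z, MvPolynomial.eval_eq']
  refine Finset.sum_eq_zero fun α _ => ?_
  by_cases hα : α.support ⊆ G.B s
  · rw [rp_zero s (Finset.Subset.refl _) (fun y hy _ => h y hy) hα, zero_mul]
  · obtain ⟨r, hr, hrT⟩ := Finset.not_subset.1 hα
    rw [Finset.prod_eq_zero (Finset.mem_univ r), mul_zero]
    rw [G.c_off s r hrT]
    exact zero_pow (Finsupp.mem_support_iff.1 hr)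

theorem Evl.unique {f : (Fin d → ℝ) → ℝ} {φ ψ : V → ℝ} (h1 : G.Evl v f φ) (h2 : G.Evl v f ψ) : φ = ψ := by
  ext s
  obtain ⟨p, hp, hp'⟩ := h1 s
  obtain ⟨q, hq, hq'⟩ := h2 s
  have := poly_unique (G := G) s (p := p - q) (fun y hy => by simp [← hp y hy, ← hq y hy]) v
  rw [hp', hq']; simpa [sub_eq_zero] using this

theorem Evl.add {f g : (Fin d → ℝ) → ℝ} {φ ψ : V → ℝ} (h1 : G.Evl v f φ) (h2 : G.Evl v g ψ) :
    G.Evl v (f + g) (φ + ψ) := by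
  intro s
  obtain ⟨p, hp, hp'⟩ := h1 s
  obtain ⟨q, hq, hq'⟩ := h2 s
  exact ⟨p + q, fun y hy => by simp [hp y hy, hq y hy], by simp [hp', hq']⟩

theorem Evl.mul {f g : (Fin d → ℝ) → ℝ} {φ ψ : V → ℝ} (h1 : G.Evl v f φ) (h2 : G.Evl v g ψ) :
    G.Evl v (f * g) (φ * ψ) := by
  intro s
  obtain ⟨p, hp, hp'⟩ := h1 s
  obtain ⟨q, hq, hq'⟩ := h2 s
  exact ⟨p * q, fun y hy => by simp [hp y hy, hq y hy], by simp [hp', hq']⟩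

theorem Evl.smul {f : (Fin d → ℝ) → ℝ} {φ : V → ℝ} (a : ℝ) (h1 : G.Evl v f φ) :
    G.Evl v (a • f) (a • φ) := by
  intro s
  obtain ⟨p, hp, hp'⟩ := h1 s
  exact ⟨MvPolynomial.C a * p, fun y hy => by simp [hp y hy], by simp [hp']⟩

theorem Evl.zero : G.Evl v 0 0 := fun s => ⟨0, by simp, by simp⟩
theorem Evl.one : G.Evl v 1 1 := fun s => ⟨1, by simp, by simp⟩

theorem Evl.pow {f : (Fin d → ℝ) → ℝ} {φ : V → ℝ} (h1 : G.Evl v f φ) (m : ℕ) :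
    G.Evl v (f ^ m) (φ ^ m) := by
  induction m with
  | zero => rw [pow_zero, pow_zero]; exact Evl.one
  | succ m ih => rw [pow_succ, pow_succ]; exact ih.mul h1

theorem Evl.lin (l : (Fin d → ℝ) →ₗ[ℝ] ℝ) : G.Evl v (fun y => l y) (fun _ => l v) := fun s =>
  ⟨lpoly l, fun y _ => by rw [lpoly_eval], by rw [lpoly_eval]⟩

theorem Evl.pl {f : (Fin d → ℝ) → ℝ} (l : V → (Fin d → ℝ) →ₗ[ℝ] ℝ)
    (h : ∀ s, ∀ y ∈ G.cone s, f y = l s y) : G.Evl v f (fun s => l s v) := fun s =>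
  ⟨lpoly (l s), fun y hy => by rw [lpoly_eval, h s y hy], by rw [lpoly_eval]⟩

theorem Evl.X (r : R) : G.Evl v (G.Xf r) (fun s => G.c s r v) :=
  Evl.pl (fun s => G.c s r) fun _ _ hy => G.Xf_eq hy r

theorem Evl.Xp (T : Finset R) : G.Evl v (G.Xp T) (fun s => ∏ r ∈ T, G.c s r v) := by
  induction T using Finset.induction_on with
  | empty =>
    have : G.Xp ∅ = 1 := by ext y; simp [GD.Xp]
    rw [this]; convert Evl.one using 1
    ext s; simp
  | insert r T hr ih =>
    have : G.Xp (insert r T) = G.Xp T * G.Xf r := by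
      ext y; simp [GD.Xp, Finset.prod_insert hr, mul_comm]
    rw [this]
    convert ih.mul (Evl.X r) using 1
    ext s; simp [Finset.prod_insert hr, mul_comm]

end GD


namespace GD
variable {d : ℕ} {V R : Type*} [Fintype V] [Fintype R] {G : GD d V R} {v : Fin d → ℝ}

theorem mset_Ak (s : V) {i : ℕ} {f : (Fin d → ℝ) → ℝ} (hf : f ∈ G.Ak i) (m : Multiset R) :
    (fun y => f y * (m.map fun r => G.c s r y).prod) ∈ G.Ak (i + m.card) := by
  induction m using Multiset.induction_on with
  | empty => simpa using hf
  | cons r m ih =>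
    have := G.Ak_mul ih (G.Ak_lin (G.c s r))
    rw [Multiset.card_cons, ← add_assoc]
    convert this using 1
    ext y; simp only [Multiset.map_cons, Multiset.prod_cons, Pi.mul_apply]; ring

theorem mset_mA (s : V) {i : ℕ} {f : (Fin d → ℝ) → ℝ} (hf : f ∈ G.Ak i) {m : Multiset R} (hm : m ≠ 0) :
    (fun y => f y * (m.map fun r => G.c s r y).prod) ∈ G.mA (i + m.card) := by
  obtain ⟨r, hr⟩ := Multiset.exists_mem_of_ne_zero hm
  obtain ⟨m', rfl⟩ := Multiset.exists_cons_of_mem hr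
  rw [Multiset.card_cons, ← add_assoc]
  refine Submodule.subset_span ⟨G.c s r, _, mset_Ak s hf m', ?_⟩
  ext y; simp only [Multiset.map_cons, Multiset.prod_cons]; ring

theorem monom_eval (x : R → ℝ) (α : R →₀ ℕ) : ∏ r, x r ^ α r = ((Finsupp.toMultiset α).map x).prod := by
  rw [Finsupp.toMultiset_map, Finsupp.prod_toMultiset, Finsupp.prod_mapDomain_index
    (fun _ => pow_zero _) (fun _ _ _ => pow_add _ _ _), Finsupp.prod_fintype _ _ (fun _ => pow_zero _)]

variable (D : TD V R) (hB : D.B = G.B) (hx : D.x = fun r s => G.c s r v)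

theorem gen_step {k : ℕ} {f : (Fin d → ℝ) → ℝ} (hf : f ∈ G.Ak k) (s : V)
    (h : ∀ s', D.ht s < D.ht s' → ∀ y ∈ G.cone s', f y = 0) (hB : D.B = G.B) :
    ∃ g ∈ Submodule.span ℝ (Set.range fun s : {s // (D.Rm ∅ s).card = k} => G.Xp (D.Rm ∅ s.1)) ⊔ G.mA k,
      g ∈ G.Ak k ∧ (∀ y ∈ G.cone s, f y = g y) ∧ ∀ s', D.ht s < D.ht s' → ∀ y ∈ G.cone s', g y = 0 := by
  obtain ⟨p, hp, hfp⟩ := hf s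
  set P := rp G s p with hP
  have hz : ∀ α ∈ P.support, α.support ⊆ G.B s → (D.Rm ∅ s).val ≤ Finsupp.toMultiset α := by
    intro α hα hαs
    refine (Multiset.le_iff_subset (D.Rm ∅ s).nodup).2 fun r hr => ?_
    rw [Finsupp.mem_toMultiset]
    by_contra hrα
    rw [Finset.mem_val] at hr
    have hrB : r ∈ G.B s := by rw [← hB]; exact D.Rm_sub _ _ hr
    obtain ⟨s', hne, hs'⟩ := G.wall_exists s hrB
    have hlt : D.ht s < D.ht s' := by
      refine D.ht_gt_of_Rp (τ := ∅) (Finset.empty_subset _) ?_ (Ne.symm hne)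
      intro r' hr'
      rw [hB]
      refine hs' (Finset.mem_erase.2 ⟨?_, ?_⟩)
      · rintro rfl
        have h1 := (D.mem_Rm.1 hr).2
        have h2 := (D.mem_Rp.1 hr').2
        linarith
      · rw [← hB]; exact D.Rp_sub _ _ hr'
    refine (MvPolynomial.mem_support_iff.1 hα) ?_
    refine rp_zero s (T := (G.B s).erase r) (Finset.erase_subset _ _) (fun y hy hyr => ?_) ?_
    · rw [← hfp y hy]
      refine h s' hlt y ?_
      have : y = ∑ r' ∈ (G.B s).erase r, G.c s r' y • G.e r' := by
        conv_lhs => rw [← G.rep s y]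
        symm
        exact Finset.sum_subset (Finset.subset_univ _) fun r' _ hr' => by rw [hyr r' hr', zero_smul]
      intro r'
      rw [this, G.c_sum s' _ r' _ hs']
      split_ifs
      · exact hy r'
      · exact le_rfl
    · intro r' hr'
      refine Finset.mem_erase.2 ⟨?_, hαs hr'⟩
      rintro rfl; exact hrα hr'
  let t : (R →₀ ℕ) → (Fin d → ℝ) → ℝ := fun α y =>
    G.Xp (D.Rm ∅ s) y * ((Finsupp.toMultiset α - (D.Rm ∅ s).val).map fun r => G.c s r y).prod
  have hcard : ∀ α ∈ P.support, (Finsupp.toMultiset α).card = k := by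
    intro α hα
    rw [Finsupp.card_toMultiset]
    have := (rp_hom s hp) (MvPolynomial.mem_support_iff.1 hα)
    rw [← this, Finsupp.weight_apply]; simp [Finsupp.sum]
  have hcard2 : ∀ α ∈ P.support, α.support ⊆ G.B s →
      (D.Rm ∅ s).card + (Finsupp.toMultiset α - (D.Rm ∅ s).val).card = k := by
    intro α hα hαs
    have h1 := hz α hα hαs
    have h2 := Multiset.card_le_card h1
    rw [Multiset.card_sub h1, hcard α hα]
    rw [hcard α hα] at h2
    change (D.Rm ∅ s).card ≤ k at h2
    change (D.Rm ∅ s).card + (k - (D.Rm ∅ s).card) = k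
    omega
  refine ⟨∑ α ∈ P.support.filter (fun α => α.support ⊆ G.B s), MvPolynomial.coeff α P • t α, ?_, ?_, ?_, ?_⟩
  · refine Submodule.sum_mem _ fun α hα => Submodule.smul_mem _ _ ?_
    obtain ⟨hα, hαs⟩ := Finset.mem_filter.1 hα
    have hc := hcard2 α hα hαs
    by_cases hm : Finsupp.toMultiset α - (D.Rm ∅ s).val = 0
    · refine Submodule.mem_sup_left (Submodule.subset_span ⟨⟨s, ?_⟩, ?_⟩)
      · rw [hm] at hc; simpa using hc
      · ext y; simp [t, hm]
    · refine Submodule.mem_sup_right ?_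
      have := mset_mA s (G.Ak_Xp (D.Rm ∅ s)) hm
      rwa [hc] at this
  · refine Submodule.sum_mem _ fun α hα => Submodule.smul_mem _ _ ?_
    obtain ⟨hα, hαs⟩ := Finset.mem_filter.1 hα
    have hc := hcard2 α hα hαs
    have := mset_Ak s (G.Ak_Xp (D.Rm ∅ s)) (Finsupp.toMultiset α - (D.Rm ∅ s).val)
    rwa [hc] at this
  · intro y hy
    rw [hfp y hy, ← rp_eval' (G := G) s p y, MvPolynomial.eval_eq', Finset.sum_filter, Finset.sum_apply]
    refine Finset.sum_congr rfl fun α hα => ?_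
    split_ifs with hαs
    · simp only [Pi.smul_apply, smul_eq_mul, t]
      congr 1
      rw [monom_eval]
      have h1 := hz α hα hαs
      have h2 := Multiset.sub_add_cancel h1
      conv_lhs => rw [← h2]
      rw [Multiset.map_add, Multiset.prod_add, mul_comm]
      congr 1
      exact Finset.prod_congr rfl fun r _ => (G.Xf_eq hy r).symm
    · obtain ⟨r, hr, hrT⟩ := Finset.not_subset.1 hαs
      rw [Finset.prod_eq_zero (Finset.mem_univ r), mul_zero]; · rfl
      rw [G.c_off s r hrT]
      exact zero_pow (Finsupp.mem_support_iff.1 hr)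
  · intro s' hs' y hy
    have : G.Xp (D.Rm ∅ s) y = 0 := by
      have : ¬ D.Rm ∅ s ⊆ D.B s' := by
        intro hsub
        have := D.ht_lt_of_Rm (τ := ∅) (s := s) (s' := s') (Finset.empty_subset _) hsub
          (by rintro rfl; exact lt_irrefl _ hs')
        linarith
      obtain ⟨r, hr, hr'⟩ := Finset.not_subset.1 this
      refine Finset.prod_eq_zero hr ?_
      rw [G.Xf_eq hy, G.c_off s' r (by rwa [hB] at hr')]; rfl
    simp [t, this]

theorem gen (hB : D.B = G.B) {k : ℕ} {f : (Fin d → ℝ) → ℝ} (hf : f ∈ G.Ak k) :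
    f ∈ Submodule.span ℝ (Set.range fun s : {s // (D.Rm ∅ s).card = k} => G.Xp (D.Rm ∅ s.1)) ⊔ G.mA k := by
  suffices H : ∀ n, ∀ S : Finset V, S.card = n → ∀ f ∈ G.Ak k,
      (∀ s ∉ S, ∀ y ∈ G.cone s, f y = 0) → (∀ s ∉ S, ∀ s', D.ht s < D.ht s' → s' ∉ S) →
      f ∈ Submodule.span ℝ (Set.range fun s : {s // (D.Rm ∅ s).card = k} => G.Xp (D.Rm ∅ s.1)) ⊔ G.mA k from
    H _ Finset.univ rfl f hf (by simp) (by simp)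
  intro n
  induction n with
  | zero =>
    intro S hS f hf h1 h2
    have : f = 0 := by
      ext y
      obtain ⟨s, hs⟩ := G.cover y
      exact h1 s (by rw [Finset.card_eq_zero.1 hS]; simp) y hs
    rw [this]; exact Submodule.zero_mem _
  | succ n ih =>
    intro S hS f hf h1 h2
    have hne : S.Nonempty := by rw [← Finset.card_pos]; omega
    obtain ⟨s, hs, hmax⟩ := S.exists_max_image D.ht hne
    obtain ⟨g, hg1, hg2, hg3, hg4⟩ := gen_step D hf s (fun s' hs' => h1 s' fun hc => by
      have := hmax s' hc; linarith) hB
    have key := ih (S.erase s) (by rw [Finset.card_erase_of_mem hs]; omega) (f - g)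
      (Submodule.sub_mem _ hf hg2) ?_ ?_
    · simpa using Submodule.add_mem _ key hg1
    · intro s' hs' y hy
      by_cases hss : s' = s
      · subst hss; simp [hg3 y hy]
      · have hs'S : s' ∉ S := fun hc => hs' (Finset.mem_erase.2 ⟨hss, hc⟩)
        have hlt : D.ht s < D.ht s' := by
          rcases lt_trichotomy (D.ht s) (D.ht s') with hh | hh | hh
          · exact hh
          · exact absurd (D.ht_inj hh).symm hss
          · exact absurd hs (h2 s' hs'S s hh)
        simp [h1 s' hs'S y hy, hg4 s' hlt y hy]
    · intro s' hs' s'' hlt hc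
      by_cases hss : s' = s
      · subst hss
        have := hmax s'' (Finset.mem_of_mem_erase hc); linarith
      · exact h2 s' (fun hc => hs' (Finset.mem_erase.2 ⟨hss, hc⟩)) s'' hlt (Finset.mem_of_mem_erase hc)

end GD


namespace GD
variable {d : ℕ} {V R : Type*} [Fintype V] [Fintype R] {G : GD d V R} {v : Fin d → ℝ}
variable (D : TD V R)

theorem Evl_xp (hx : D.x = fun r s => G.c s r v) (T : Finset R) : G.Evl v (G.Xp T) (D.xp T) := by
  convert Evl.Xp (v := v) T using 1
  ext s; simp [TD.xp, hx]

theorem ev_mA_of {j : ℕ} (hF : ∀ f ∈ G.Ak j, ∃ φ ∈ D.F j, G.Evl v f φ) {h : (Fin d → ℝ) → ℝ}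
    (hh : h ∈ G.mA (j + 1)) : ∃ φ ∈ D.F j, G.Evl v h φ := by
  induction hh using Submodule.span_induction with
  | mem y hy =>
    obtain ⟨l, f, hf, rfl⟩ := hy
    obtain ⟨φ, hφ, he⟩ := hF f hf
    refine ⟨l v • φ, Submodule.smul_mem _ _ hφ, ?_⟩
    convert (Evl.lin (G := G) (v := v) l).mul he using 1 <;> rfl
  | zero => exact ⟨0, Submodule.zero_mem _, Evl.zero⟩
  | add a b _ _ ha hb =>
    obtain ⟨φ, h1, h2⟩ := ha
    obtain ⟨ψ, h3, h4⟩ := hb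
    exact ⟨φ + ψ, Submodule.add_mem _ h1 h3, h2.add h4⟩
  | smul a b _ hb =>
    obtain ⟨φ, h1, h2⟩ := hb
    exact ⟨a • φ, Submodule.smul_mem _ _ h1, h2.smul a⟩

theorem Evl.sum {ι : Type*} (S : Finset ι) {f : ι → (Fin d → ℝ) → ℝ} {φ : ι → V → ℝ}
    (h : ∀ i ∈ S, G.Evl v (f i) (φ i)) : G.Evl v (∑ i ∈ S, f i) (∑ i ∈ S, φ i) := by
  induction S using Finset.induction_on with
  | empty => simpa using Evl.zero
  | insert i S hi ih =>
    rw [Finset.sum_insert hi, Finset.sum_insert hi]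
    exact (h i (Finset.mem_insert_self _ _)).add (ih fun j hj => h j (Finset.mem_insert_of_mem hj))

theorem gen' (hB : D.B = G.B) {k : ℕ} {f : (Fin d → ℝ) → ℝ} (hf : f ∈ G.Ak k) :
    ∃ a : {s // (D.Rm ∅ s).card = k} → ℝ, ∃ h ∈ G.mA k, f = ∑ s, a s • G.Xp (D.Rm ∅ s.1) + h := by
  obtain ⟨g, hg, h, hh, rfl⟩ := Submodule.mem_sup.1 (gen D hB hf)
  obtain ⟨a, rfl⟩ := (Submodule.mem_span_range_iff_exists_fun ℝ).1 hg
  exact ⟨a, h, hh, rfl⟩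

theorem ev_F (hB : D.B = G.B) (hx : D.x = fun r s => G.c s r v) (k : ℕ) :
    ∀ f ∈ G.Ak k, ∃ φ ∈ D.F k, G.Evl v f φ := by
  have hmain : ∀ a : {s // (D.Rm ∅ s).card = k} → ℝ,
      G.Evl v (∑ s, a s • G.Xp (D.Rm ∅ s.1)) (∑ s, a s • D.xp (D.Rm ∅ s.1)) := fun a =>
    Evl.sum _ fun s _ => (Evl_xp D hx _).smul _
  have hmem : ∀ a : {s // (D.Rm ∅ s).card = k} → ℝ, (∑ s, a s • D.xp (D.Rm ∅ s.1)) ∈ D.F k := by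
    intro a
    refine Submodule.sum_mem _ fun s _ => Submodule.smul_mem _ _ ?_
    have := D.xp_mem (D.Rm ∅ s.1)
    rwa [s.2] at this
  induction k with
  | zero =>
    intro f hf
    obtain ⟨a, h, hh, rfl⟩ := gen' D hB hf
    have h0 : h = 0 := (Submodule.mem_bot ℝ).1 hh
    refine ⟨_, hmem a, ?_⟩
    rw [h0, add_zero]; exact hmain a
  | succ k ih =>
    intro f hf
    obtain ⟨a, h, hh, rfl⟩ := gen' D hB hf
    have ih' := ih (fun a => Evl.sum _ fun s _ => (Evl_xp D hx _).smul _) (by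
      intro a
      refine Submodule.sum_mem _ fun s _ => Submodule.smul_mem _ _ ?_
      have := D.xp_mem (D.Rm ∅ s.1)
      rwa [s.2] at this)
    obtain ⟨φ, h1, h2⟩ := ev_mA_of D ih' hh
    exact ⟨_, Submodule.add_mem _ (hmem a) (D.F_mono (Nat.le_succ k) h1), (hmain a).add h2⟩

/-- elements of mA_k pair to zero with F_j when k + j ≤ d -/
theorem mA_pair (hB : D.B = G.B) (hx : D.x = fun r s => G.c s r v) {k j : ℕ} (hkj : k + j ≤ D.d)
    {h : (Fin d → ℝ) → ℝ} (hh : h ∈ G.mA k) :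
    ∃ φ ∈ D.F k, G.Evl v h φ ∧ ∀ g ∈ D.F j, ∑ s, D.w s * φ s * g s = 0 := by
  cases k with
  | zero =>
    have h0 : h = 0 := (Submodule.mem_bot ℝ).1 hh
    exact ⟨0, Submodule.zero_mem _, h0 ▸ Evl.zero, by simp⟩
  | succ k =>
    obtain ⟨φ, h1, h2⟩ := ev_mA_of D (ev_F D hB hx k) hh
    refine ⟨φ, D.F_mono (Nat.le_succ k) h1, h2, fun g hg => ?_⟩
    have := D.l1F (D.F_mul h1 hg) (by omega)
    simpa [mul_assoc] using this

theorem pair_self (s : V) : D.w s * D.xp (D.Rm ∅ s) s * D.xp (D.Rp ∅ s) s ≠ 0 := by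
  have h1 : D.xp (D.Rm ∅ s) s ≠ 0 := (D.xp_ne _ _).2 (D.Rm_sub _ _)
  have h2 : D.xp (D.Rp ∅ s) s ≠ 0 := (D.xp_ne _ _).2 (D.Rp_sub _ _)
  have h3 : D.w s ≠ 0 := fun h => by have := D.w_pos s; rw [h, zero_mul] at this; exact lt_irrefl _ this
  exact mul_ne_zero (mul_ne_zero h3 h1) h2

theorem pair_zero {s s' t : V} (h : D.ht s < D.ht s') :
    D.w t * D.xp (D.Rm ∅ s) t * D.xp (D.Rp ∅ s') t = 0 := by
  by_contra hc
  have h1 := (D.xp_ne _ _).1 (right_ne_zero_of_mul hc)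
  have h2 := (D.xp_ne _ _).1 (right_ne_zero_of_mul (left_ne_zero_of_mul hc))
  have h3 : D.ht t ≤ D.ht s := by
    by_cases hts : t = s
    · rw [hts]
    · exact (D.ht_lt_of_Rm (Finset.empty_subset _) h2 hts).le
  have h4 : D.ht s' ≤ D.ht t := by
    by_cases hts : t = s'
    · rw [hts]
    · exact (D.ht_gt_of_Rp (Finset.empty_subset _) h1 hts).le
  linarith

theorem pair_diag (s : V) :
    ∑ t, D.w t * D.xp (D.Rm ∅ s) t * D.xp (D.Rp ∅ s) t ≠ 0 := by
  rw [Finset.sum_eq_single s]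
  · exact pair_self D s
  · intro t _ hts
    by_contra hc
    have h1 := (D.xp_ne _ _).1 (right_ne_zero_of_mul hc)
    have h2 := (D.xp_ne _ _).1 (right_ne_zero_of_mul (left_ne_zero_of_mul hc))
    have := D.ht_lt_of_Rm (Finset.empty_subset _) h2 hts
    have := D.ht_gt_of_Rp (Finset.empty_subset _) h1 hts
    linarith
  · simp

/-- independence -/
theorem indep_Rm {ι : Type*} [Fintype ι] (i : ι → V) (hi : Function.Injective i) (a : ι → ℝ)
    (h : ∀ s', ∑ t, D.w t * (∑ s, a s • D.xp (D.Rm ∅ (i s))) t * D.xp (D.Rp ∅ (i s')) t = 0) : a = 0 := by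
  by_contra hne
  obtain ⟨s0, hs0⟩ := Function.ne_iff.1 hne
  obtain ⟨s, hs, hmax⟩ := (Finset.univ.filter fun s => a s ≠ 0).exists_max_image (fun s => D.ht (i s))
    ⟨s0, by simpa using hs0⟩
  have := h s
  have e : ∑ t, D.w t * (∑ s, a s • D.xp (D.Rm ∅ (i s))) t * D.xp (D.Rp ∅ (i s)) t
      = ∑ s', a s' * ∑ t, D.w t * D.xp (D.Rm ∅ (i s')) t * D.xp (D.Rp ∅ (i s)) t := by
    simp only [Finset.sum_apply, Pi.smul_apply, smul_eq_mul, Finset.mul_sum, Finset.sum_mul]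
    rw [Finset.sum_comm]
    exact Finset.sum_congr rfl fun _ _ => Finset.sum_congr rfl fun _ _ => by ring
  rw [e, Finset.sum_eq_single s] at this
  · exact (mul_ne_zero (by simpa using hs) (pair_diag D (i s))) this
  · intro s' _ hss
    by_cases ha : a s' = 0
    · rw [ha, zero_mul]
    · have hlt : D.ht (i s') < D.ht (i s) :=
        lt_of_le_of_ne (hmax s' (by simpa using ha)) fun hc => hss (hi (D.ht_inj hc))
      rw [Finset.sum_eq_zero fun t _ => pair_zero D hlt, mul_zero]
  · simp

theorem indep_Rp {ι : Type*} [Fintype ι] (i : ι → V) (hi : Function.Injective i) (a : ι → ℝ)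
    (h : ∀ s', ∑ t, D.w t * (∑ s, a s • D.xp (D.Rp ∅ (i s))) t * D.xp (D.Rm ∅ (i s')) t = 0) : a = 0 := by
  by_contra hne
  obtain ⟨s0, hs0⟩ := Function.ne_iff.1 hne
  obtain ⟨s, hs, hmax⟩ := (Finset.univ.filter fun s => a s ≠ 0).exists_min_image (fun s => D.ht (i s))
    ⟨s0, by simpa using hs0⟩
  have := h s
  have e : ∑ t, D.w t * (∑ s, a s • D.xp (D.Rp ∅ (i s))) t * D.xp (D.Rm ∅ (i s)) t
      = ∑ s', a s' * ∑ t, D.w t * D.xp (D.Rm ∅ (i s)) t * D.xp (D.Rp ∅ (i s')) t := by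
    simp only [Finset.sum_apply, Pi.smul_apply, smul_eq_mul, Finset.mul_sum, Finset.sum_mul]
    rw [Finset.sum_comm]
    exact Finset.sum_congr rfl fun _ _ => Finset.sum_congr rfl fun _ _ => by ring
  rw [e, Finset.sum_eq_single s] at this
  · exact (mul_ne_zero (by simpa using hs) (pair_diag D (i s))) this
  · intro s' _ hss
    by_cases ha : a s' = 0
    · rw [ha, zero_mul]
    · have hlt : D.ht (i s) < D.ht (i s') :=
        lt_of_le_of_ne (hmax s' (by simpa using ha)) fun hc => hss (hi (D.ht_inj hc)).symm
      rw [Finset.sum_eq_zero fun t _ => pair_zero D hlt, mul_zero]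
  · simp

theorem main_inj (hB : D.B = G.B) (hx : D.x = fun r s => G.c s r v)
    {l : (Fin d → ℝ) → ℝ} (hl : G.Evl v l D.ht) {k : ℕ} (hk : 2 * k < D.d)
    {f : (Fin d → ℝ) → ℝ} (hf : f ∈ G.Ak k)
    (h : l ^ (D.d - 2 * k) * f ∈ G.mA (D.d - k)) : f ∈ G.mA k := by
  obtain ⟨a, h0, hh, hfa⟩ := gen' D hB hf
  obtain ⟨φ, hφ, he⟩ := ev_F D hB hx k f hf
  have hz : ∀ g ∈ D.F (D.d - k), ∑ s, D.w s * φ s * g s = 0 := by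
    refine D.hard_lefschetz hk hφ fun g hg => ?_
    obtain ⟨ψ, _, h2, h3⟩ := mA_pair D hB hx (j := k) (by omega) h
    have := h2.unique ((hl.pow _).mul he)
    subst this
    rw [← h3 g hg]
    exact Finset.sum_congr rfl fun s _ => by simp [mul_assoc]
  obtain ⟨ψ, _, h2, h3⟩ := mA_pair D hB hx (j := D.d - k) (by omega) hh
  have hev : G.Evl v f ((∑ s, a s • D.xp (D.Rm ∅ s.1)) + ψ) := by
    rw [hfa]
    exact (Evl.sum _ fun s _ => (Evl_xp D hx _).smul _).add h2
  have := he.unique hev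
  have ha : a = 0 := by
    refine indep_Rm D (fun s : {s // (D.Rm ∅ s).card = k} => s.1) Subtype.val_injective a fun s' => ?_
    have hm : D.xp (D.Rp ∅ s'.1) ∈ D.F (D.d - k) := by
      have h5 := D.card_pq (τ := ∅) (s := s'.1) (Finset.empty_subset _)
      have := D.xp_mem (D.Rp ∅ s'.1)
      have hc : (D.Rp ∅ s'.1).card = D.d - k := by
        have := s'.2; simp at h5; omega
      rwa [hc] at this
    have e1 := hz _ hm
    have e2 := h3 _ hm
    rw [this] at e1
    simp only [Pi.add_apply, mul_add, add_mul, Finset.sum_add_distrib, e2, add_zero] at e1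
    exact e1
  rw [hfa, ha]; simpa using hh

theorem mA_le (k : ℕ) : G.mA k ≤ G.Ak k := by
  cases k with
  | zero => exact bot_le
  | succ k =>
    refine Submodule.span_le.2 ?_
    rintro h ⟨l, f, hf, rfl⟩
    rw [add_comm]
    exact G.Ak_mul (G.Ak_lin l) hf

theorem main_surj (hB : D.B = G.B) (hx : D.x = fun r s => G.c s r v)
    {l : (Fin d → ℝ) → ℝ} (hl : G.Evl v l D.ht) (hl1 : l ∈ G.Ak 1) {k : ℕ} (hk : 2 * k < D.d)
    {g : (Fin d → ℝ) → ℝ} (hg : g ∈ G.Ak (D.d - k)) :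
    ∃ f ∈ G.Ak k, g - l ^ (D.d - 2 * k) * f ∈ G.mA (D.d - k) := by
  let ι := {s // (D.Rm ∅ s).card = D.d - k}
  have hRp : ∀ s : ι, (D.Rp ∅ s.1).card = k := by
    intro s
    have h5 := D.card_pq (τ := ∅) (s := s.1) (Finset.empty_subset _)
    have := s.2
    simp at h5; omega
  have hXA : ∀ s : ι, G.Xp (D.Rp ∅ s.1) ∈ G.Ak k := fun s => by
    have := G.Ak_Xp (D.Rp ∅ s.1); rwa [hRp s] at this
  let φ0 : (ι → ℝ) →ₗ[ℝ] ((Fin d → ℝ) → ℝ) := Fintype.linearCombination ℝ (fun s : ι => G.Xp (D.Rp ∅ s.1))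
  let φ : (ι → ℝ) →ₗ[ℝ] ((Fin d → ℝ) → ℝ) ⧸ G.mA (D.d - k) :=
    (G.mA (D.d - k)).mkQ ∘ₗ (LinearMap.mulLeft ℝ (l ^ (D.d - 2 * k))) ∘ₗ φ0
  have hφ0 : ∀ a, φ0 a = ∑ s, a s • G.Xp (D.Rp ∅ s.1) := fun a => by
    simp [φ0, Fintype.linearCombination_apply]
  have hA : ∀ a, φ0 a ∈ G.Ak k := fun a => by
    rw [hφ0]; exact Submodule.sum_mem _ fun s _ => Submodule.smul_mem _ _ (hXA s)
  have hinj : Function.Injective φ := by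
    rw [injective_iff_map_eq_zero]
    intro a ha
    have h1 : l ^ (D.d - 2 * k) * φ0 a ∈ G.mA (D.d - k) := by
      simpa [φ, Submodule.Quotient.mk_eq_zero] using ha
    have h2 := main_inj D hB hx hl hk (hA a) h1
    obtain ⟨ψ, _, h3, h4⟩ := mA_pair D hB hx (j := D.d - k) (by omega) h2
    have h5 : G.Evl v (φ0 a) (∑ s, a s • D.xp (D.Rp ∅ s.1)) := by
      rw [hφ0]; exact Evl.sum _ fun s _ => (Evl_xp D hx _).smul _
    have := h5.unique h3
    refine indep_Rp D (fun s : ι => s.1) Subtype.val_injective a fun s' => ?_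
    rw [this]
    refine h4 _ ?_
    have := D.xp_mem (D.Rm ∅ s'.1)
    rwa [s'.2] at this
  let W : Submodule ℝ (((Fin d → ℝ) → ℝ) ⧸ G.mA (D.d - k)) :=
    Submodule.span ℝ (Set.range fun s : ι => (G.mA (D.d - k)).mkQ (G.Xp (D.Rm ∅ s.1)))
  have hWmem : ∀ f ∈ G.Ak (D.d - k), (G.mA (D.d - k)).mkQ f ∈ W := by
    intro f hf
    obtain ⟨a, h, hh, rfl⟩ := gen' D hB hf
    have h0 : (G.mA (D.d - k)).mkQ h = 0 := by simpa using hh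
    rw [map_add, h0, add_zero, map_sum]
    refine Submodule.sum_mem _ fun s _ => ?_
    rw [map_smul]
    exact Submodule.smul_mem _ _ (Submodule.subset_span ⟨s, rfl⟩)
  have hprod : ∀ f ∈ G.Ak k, l ^ (D.d - 2 * k) * f ∈ G.Ak (D.d - k) := by
    intro f hf
    have := G.Ak_mul (G.Ak_pow hl1 (D.d - 2 * k)) hf
    have e : D.d - 2 * k + k = D.d - k := by omega
    rwa [e] at this
  have hle : LinearMap.range φ ≤ W := by
    rintro _ ⟨a, rfl⟩
    exact hWmem _ (hprod _ (hA a))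
  have : FiniteDimensional ℝ W := FiniteDimensional.span_of_finite ℝ (Set.finite_range _)
  have hfr : Module.finrank ℝ W ≤ Module.finrank ℝ (LinearMap.range φ) := by
    rw [LinearMap.finrank_range_of_inj hinj, Module.finrank_fintype_fun_eq_card]
    exact finrank_range_le_card _
  have heq := Submodule.eq_of_le_of_finrank_le hle hfr
  have hgW := hWmem g hg
  rw [← heq] at hgW
  obtain ⟨a, ha⟩ := hgW
  refine ⟨φ0 a, hA a, ?_⟩
  have : (G.mA (D.d - k)).mkQ (g - l ^ (D.d - 2 * k) * φ0 a) = 0 := by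
    rw [map_sub, sub_eq_zero, ← ha]; rfl
  exact (Submodule.Quotient.mk_eq_zero _).1 this

end GD


/-- linear independence of a finset -/
def LIF {d : ℕ} (S : Finset (Fin d → ℝ)) : Prop :=
  ∀ a : (Fin d → ℝ) → ℝ, ∑ w ∈ S, a w • w = 0 → ∀ w ∈ S, a w = 0

section
variable {d : ℕ}

theorem LIF_of {S : Finset (Fin d → ℝ)}
    (h : LinearIndependent ℝ (fun x : (S : Set (Fin d → ℝ)) => (x : Fin d → ℝ))) : LIF S := by
  have : LinearIndepOn ℝ id (S : Set (Fin d → ℝ)) := h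
  exact linearIndepOn_finset_iff.1 this

theorem LIF.li {S : Finset (Fin d → ℝ)} (h : LIF S) : LinearIndepOn ℝ id (S : Set (Fin d → ℝ)) :=
  linearIndepOn_finset_iff.2 h

theorem LIF.mono {S T : Finset (Fin d → ℝ)} (h : LIF T) (hST : S ⊆ T) : LIF S :=
  linearIndepOn_finset_iff.1 (h.li.mono (by exact_mod_cast hST))

theorem LIF.ext {S : Finset (Fin d → ℝ)} (h : LIF S) {a b : (Fin d → ℝ) → ℝ}
    (hab : ∑ w ∈ S, a w • w = ∑ w ∈ S, b w • w) {w} (hw : w ∈ S) : a w = b w := by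
  have := h (fun w => a w - b w) (by simp only [sub_smul, Finset.sum_sub_distrib, hab, sub_self]) w hw
  linarith

theorem LIF.ne_zero {S : Finset (Fin d → ℝ)} (h : LIF S) {w} (hw : w ∈ S) : w ≠ 0 := by
  rintro rfl
  have := h (fun w => if w = 0 then 1 else 0) (Finset.sum_eq_zero fun w _ => by
    by_cases hw : w = 0 <;> simp [hw]) 0 hw
  simp at this

theorem ch_add {S : Finset (Fin d → ℝ)} {x y} (hx : x ∈ coneHull S) (hy : y ∈ coneHull S) :
    x + y ∈ coneHull S := by
  obtain ⟨a, ha, rfl⟩ := hx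
  obtain ⟨b, hb, rfl⟩ := hy
  exact ⟨fun w => a w + b w, fun w => add_nonneg (ha w) (hb w), by
    simp [add_smul, Finset.sum_add_distrib]⟩

theorem ch_smul {S : Finset (Fin d → ℝ)} {x} (hx : x ∈ coneHull S) {t : ℝ} (ht : 0 ≤ t) :
    t • x ∈ coneHull S := by
  obtain ⟨a, ha, rfl⟩ := hx
  exact ⟨fun w => t * a w, fun w => mul_nonneg ht (ha w), by
    simp [mul_smul, Finset.smul_sum]⟩

theorem ch_zero {S : Finset (Fin d → ℝ)} : (0 : Fin d → ℝ) ∈ coneHull S :=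
  ⟨fun _ => 0, fun _ => le_rfl, by simp⟩

theorem ch_gen {S : Finset (Fin d → ℝ)} {w} (hw : w ∈ S) : w ∈ coneHull S :=
  ⟨fun w' => if w' = w then 1 else 0, fun w' => by dsimp only; split_ifs <;> norm_num, by simp [hw]⟩

theorem ch_sum {S T : Finset (Fin d → ℝ)} (h : ∀ w ∈ S, w ∈ coneHull T) {a : (Fin d → ℝ) → ℝ}
    (ha : ∀ w, 0 ≤ a w) : ∑ w ∈ S, a w • w ∈ coneHull T :=
  Finset.sum_induction (fun w => a w • w) (fun x => x ∈ coneHull T) (fun _ _ => ch_add) ch_zero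
    fun w hw => ch_smul (h w hw) (ha w)

theorem ch_le {S T : Finset (Fin d → ℝ)} (h : ∀ w ∈ S, w ∈ coneHull T) : coneHull S ⊆ coneHull T := by
  rintro _ ⟨a, ha, rfl⟩
  exact ch_sum h ha

theorem ch_mono {S T : Finset (Fin d → ℝ)} (h : S ⊆ T) : coneHull S ⊆ coneHull T :=
  ch_le fun _ hw => ch_gen (h hw)

theorem ch_normalize {S : Finset (Fin d → ℝ)} (h : LIF S) :
    ∃ T : Finset (Fin d → ℝ), LIF T ∧ (∀ w ∈ T, ‖w‖ = 1) ∧ coneHull S = coneHull T := by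
  have hn : ∀ w ∈ S, ‖w‖ ≠ 0 := fun w hw => norm_ne_zero_iff.2 (h.ne_zero hw)
  have hinj : Set.InjOn (fun w : Fin d → ℝ => ‖w‖⁻¹ • w) (S : Set (Fin d → ℝ)) := by
    intro w hw w' hw' e
    by_contra hne
    have hw : w ∈ S := hw
    have hw' : w' ∈ S := hw'
    have := h.ext (a := fun u => if u = w then ‖w‖⁻¹ else 0) (b := fun u => if u = w' then ‖w'‖⁻¹ else 0)
      (by simp [ite_smul, hw, hw']; exact e) hw
    simp [hne] at this
    exact h.ne_zero hw this
  refine ⟨S.image fun w => ‖w‖⁻¹ • w, ?_, ?_, ?_⟩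
  · intro a ha t ht
    rw [Finset.sum_image hinj] at ha
    obtain ⟨w, hw, rfl⟩ := Finset.mem_image.1 ht
    have := h (fun w => a (‖w‖⁻¹ • w) * ‖w‖⁻¹) (by simpa [mul_smul] using ha) w hw
    exact (mul_eq_zero.1 this).resolve_right (inv_ne_zero (hn w hw))
  · intro t ht
    obtain ⟨w, hw, rfl⟩ := Finset.mem_image.1 ht
    rw [norm_smul, norm_inv, norm_norm, inv_mul_cancel₀ (hn w hw)]
  · apply Set.Subset.antisymm
    · refine ch_le fun w hw => ?_
      have : w = ‖w‖ • (‖w‖⁻¹ • w) := by rw [smul_smul, mul_inv_cancel₀ (hn w hw), one_smul]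
      rw [this]
      exact ch_smul (ch_gen (Finset.mem_image_of_mem _ hw)) (norm_nonneg _)
    · refine ch_le fun t ht => ?_
      obtain ⟨w, hw, rfl⟩ := Finset.mem_image.1 ht
      exact ch_smul (ch_gen hw) (inv_nonneg.2 (norm_nonneg _))

theorem ch_face {S : Finset (Fin d → ℝ)} {τ : Set (Fin d → ℝ)} (h : IsConeFace (coneHull S) τ) :
    ∃ S' ⊆ S, τ = coneHull S' := by
  rcases h with rfl | ⟨l, hl, rfl⟩
  · exact ⟨S, Finset.Subset.refl _, rfl⟩
  · refine ⟨S.filter fun w => l w = 0, Finset.filter_subset _ _, ?_⟩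
    ext x
    constructor
    · rintro ⟨⟨a, ha, rfl⟩, h0⟩
      have h1 : ∀ w ∈ S, a w * l w ≤ 0 := fun w hw =>
        mul_nonpos_of_nonneg_of_nonpos (ha w) (hl w (ch_gen hw))
      have h2 : ∑ w ∈ S, a w * l w = 0 := by simpa using h0
      have h3 := (Finset.sum_eq_zero_iff_of_nonpos h1).1 h2
      refine ⟨a, ha, ?_⟩
      rw [Finset.sum_filter]
      refine Finset.sum_congr rfl fun w hw => ?_
      split_ifs with hw0
      · rfl
      · rw [(mul_eq_zero.1 (h3 w hw)).resolve_right hw0, zero_smul]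
    · intro hx
      refine ⟨ch_mono (Finset.filter_subset _ _) hx, ?_⟩
      obtain ⟨a, ha, rfl⟩ := hx
      rw [map_sum]
      refine Finset.sum_eq_zero fun w hw => ?_
      rw [map_smul, (Finset.mem_filter.1 hw).2, smul_zero]

theorem face_int {S S' : Finset (Fin d → ℝ)} (h : LIF S) (hS : S' ⊆ S) (hy : ∑ w ∈ S, w ∈ coneHull S') :
    S' = S := by
  refine Finset.Subset.antisymm hS fun w hw => ?_
  obtain ⟨a, ha, e⟩ := hy
  by_contra hc
  have := h.ext (a := fun _ => 1) (b := fun w => if w ∈ S' then a w else 0) (by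
    simp only [one_smul, ite_smul, zero_smul]
    rw [e, ← Finset.sum_filter, Finset.filter_mem_eq_inter, Finset.inter_eq_right.2 hS]) hw
  simp [hc] at this

theorem ch_unique_sub {S T : Finset (Fin d → ℝ)} (hS : LIF S) (hS1 : ∀ w ∈ S, ‖w‖ = 1)
    (hT1 : ∀ w ∈ T, ‖w‖ = 1) (h : coneHull S = coneHull T) : S ⊆ T := by
  intro w hw
  obtain ⟨b, hb, hwb⟩ : w ∈ coneHull T := h ▸ ch_gen hw
  have hc : ∀ t ∈ T, ∃ a : (Fin d → ℝ) → ℝ, (∀ w, 0 ≤ a w) ∧ t = ∑ w ∈ S, a w • w := fun t ht => by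
    have : t ∈ coneHull S := h ▸ ch_gen ht
    exact this
  choose! a ha hta using hc
  have key : ∀ u ∈ S, (if u = w then (1:ℝ) else 0) = ∑ t ∈ T, b t * a t u := fun u hu => by
    refine hS.ext (a := fun u => if u = w then (1:ℝ) else 0) (b := fun u => ∑ t ∈ T, b t * a t u) ?_ hu
    simp only [ite_smul, one_smul, zero_smul, Finset.sum_ite_eq', hw, if_true, Finset.sum_smul]
    rw [Finset.sum_comm]
    conv_lhs => rw [hwb]
    refine Finset.sum_congr rfl fun t ht => ?_
    simp only [mul_smul]
    rw [← Finset.smul_sum, ← hta t ht]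
  have k1 := key w hw
  rw [if_pos rfl] at k1
  obtain ⟨t, ht, hne⟩ := Finset.exists_ne_zero_of_sum_ne_zero (show ∑ t ∈ T, b t * a t w ≠ 0 by
    rw [← k1]; norm_num)
  have hbt : b t ≠ 0 := left_ne_zero_of_mul hne
  have hz : ∀ u ∈ S, u ≠ w → a t u = 0 := by
    intro u hu huw
    have := key u hu
    rw [if_neg huw] at this
    have h2 := (Finset.sum_eq_zero_iff_of_nonneg (fun t ht => mul_nonneg (hb t) (ha t ht u))).1 this.symm t ht
    exact (mul_eq_zero.1 h2).resolve_left hbt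
  have e : t = a t w • w := by
    conv_lhs => rw [hta t ht]
    exact Finset.sum_eq_single w (fun u hu huw => by rw [hz u hu huw, zero_smul]) (fun h => absurd hw h)
  have n1 : a t w = 1 := by
    have := hT1 t ht
    rw [e, norm_smul, hS1 w hw, mul_one, Real.norm_of_nonneg (ha t ht w)] at this
    exact this
  rw [n1, one_smul] at e
  rwa [← e]

theorem ch_unique {S T : Finset (Fin d → ℝ)} (hS : LIF S) (hT : LIF T) (hS1 : ∀ w ∈ S, ‖w‖ = 1)
    (hT1 : ∀ w ∈ T, ‖w‖ = 1) (h : coneHull S = coneHull T) : S = T :=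
  Finset.Subset.antisymm (ch_unique_sub hS hS1 hT1 h) (ch_unique_sub hT hT1 hS1 h.symm)

theorem exists_co {S : Finset (Fin d → ℝ)} (hS : LIF S) (hsp : Submodule.span ℝ (coneHull S) = ⊤) :
    S.card = d ∧ ∃ co : (Fin d → ℝ) → ((Fin d → ℝ) →ₗ[ℝ] ℝ), (∀ w, w ∉ S → co w = 0) ∧
      (∀ w, ∀ w' ∈ S, co w w' = if w = w' then 1 else 0) ∧ ∀ y, ∑ w ∈ S, co w y • w = y := by
  have hs : ⊤ ≤ Submodule.span ℝ (Set.range fun x : S => (x : Fin d → ℝ)) := by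
    rw [← hsp, Submodule.span_le]
    rintro _ ⟨a, _, rfl⟩
    refine Submodule.sum_mem _ fun w hw => Submodule.smul_mem _ _ (Submodule.subset_span ⟨⟨w, hw⟩, rfl⟩)
  have hli : LinearIndependent ℝ (fun x : S => (x : Fin d → ℝ)) := hS.li
  let b := Module.Basis.mk hli hs
  have hb : ∀ i : S, b i = i := fun i => by simp [b]
  refine ⟨?_, fun w => if h : w ∈ S then b.coord ⟨w, h⟩ else 0, ?_, ?_, ?_⟩
  · have := Module.finrank_eq_card_basis b
    simpa using this.symm
  · intro w hw; simp [hw]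
  · intro w w' hw'
    by_cases hw : w ∈ S
    · have := hb ⟨w', hw'⟩
      simp only [hw, dite_true]
      have e : b.coord ⟨w, hw⟩ w' = b.coord ⟨w, hw⟩ (b ⟨w', hw'⟩) := by rw [this]
      rw [e, Module.Basis.coord_apply, Module.Basis.repr_self, Finsupp.single_apply]
      simp [eq_comm]
    · simp only [hw, dite_false, LinearMap.zero_apply]
      rw [if_neg]; rintro rfl; exact hw hw'
  · intro y
    rw [← Finset.sum_coe_sort]
    conv_rhs => rw [← b.sum_repr y]
    refine Finset.sum_congr rfl fun i _ => ?_
    simp [hb]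

theorem co_mem {S : Finset (Fin d → ℝ)} {co : (Fin d → ℝ) → ((Fin d → ℝ) →ₗ[ℝ] ℝ)}
    (h0 : ∀ w, w ∉ S → co w = 0)
    (h1 : ∀ w, ∀ w' ∈ S, co w w' = if w = w' then 1 else 0) (h2 : ∀ y, ∑ w ∈ S, co w y • w = y) (y) :
    y ∈ coneHull S ↔ ∀ w ∈ S, 0 ≤ co w y := by
  constructor
  · rintro ⟨a, ha, rfl⟩ w hw
    rw [map_sum]
    refine Finset.sum_nonneg fun w' hw' => ?_
    rw [map_smul, h1 w w' hw', smul_eq_mul]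
    split_ifs <;> simp [ha w']
  · intro h
    refine ⟨fun w => co w y, fun w => ?_, (h2 y).symm⟩
    by_cases hw : w ∈ S
    · exact h w hw
    · simp [h0 w hw]

theorem ch_closed {S : Finset (Fin d → ℝ)} (hS : LIF S) (hsp : Submodule.span ℝ (coneHull S) = ⊤) :
    IsClosed (coneHull S) := by
  obtain ⟨-, co, h0, h1, h2⟩ := exists_co hS hsp
  have : coneHull S = ⋂ w ∈ S, {y | 0 ≤ co w y} := by
    ext y; simp [co_mem h0 h1 h2 y]
  rw [this]
  refine isClosed_biInter fun w _ => ?_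
  exact isClosed_le continuous_const (LinearMap.continuous_of_finiteDimensional _)

/-- build GD from generators -/
theorem mkGD {V : Type} [Fintype V] (g : V → Finset (Fin d → ℝ)) (hg : Function.Injective g)
    (hli : ∀ s, LIF (g s)) (hsp : ∀ s, Submodule.span ℝ (coneHull (g s)) = ⊤)
    (hcov : ∀ y, ∃ s, y ∈ coneHull (g s))
    (hint : ∀ s s' y, y ∈ coneHull (g s) → y ∈ coneHull (g s') → y ∈ coneHull (g s ∩ g s')) :
    ∃ G : GD d V (Finset.univ.biUnion g), ∀ s, G.cone s = coneHull (g s) := by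
  choose hcard co h0 h1 h2 using fun s => exists_co (hli s) (hsp s)
  have hin : ∀ s, ∀ w ∈ g s, w ∈ Finset.univ.biUnion g := fun s w hw =>
    Finset.mem_biUnion.2 ⟨s, Finset.mem_univ _, hw⟩
  have hcone : ∀ s y, (∀ r : (Finset.univ.biUnion g : Finset _), 0 ≤ co s r.1 y) ↔ y ∈ coneHull (g s) := by
    intro s y
    rw [co_mem (h0 s) (h1 s) (h2 s)]
    constructor
    · intro h w hw; exact h ⟨w, hin s w hw⟩
    · intro h r
      by_cases hr : r.1 ∈ g s
      · exact h r hr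
      · simp [h0 s _ hr]
  have hT : ∀ s (T : Finset (Fin d → ℝ)), T ⊆ g s → ∀ (a : (Fin d → ℝ) → ℝ) w,
      co s w (∑ w' ∈ T, a w' • w') = if w ∈ T then a w else 0 := by
    intro s T hT a w
    rw [map_sum, Finset.sum_congr rfl fun w' hw' => by rw [map_smul, h1 s w w' (hT hw')]]
    simp
  refine ⟨{ e := fun r => r.1, B := fun s => Finset.univ.filter fun r => r.1 ∈ g s,
            c := fun s r => co s r.1, B_inj := ?_, cardB := ?_, c_off := ?_, c_e := ?_, rep := ?_,
            used := ?_, cover := ?_, inter := ?_ }, ?_⟩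
  · intro s s' h
    dsimp only at h
    apply hg
    ext w
    constructor
    · intro hw
      have : (⟨w, hin s w hw⟩ : (Finset.univ.biUnion g : Finset _)) ∈
          (Finset.univ.filter fun r : (Finset.univ.biUnion g : Finset _) => r.1 ∈ g s) := by simp [hw]
      rw [h] at this
      simpa using this
    · intro hw
      have : (⟨w, hin s' w hw⟩ : (Finset.univ.biUnion g : Finset _)) ∈
          (Finset.univ.filter fun r : (Finset.univ.biUnion g : Finset _) => r.1 ∈ g s') := by simp [hw]
      rw [← h] at this
      simpa using this
  · intro s
    refine Eq.trans ?_ (hcard s)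
    refine Finset.card_bij (fun r _ => r.1) (fun r hr => by simpa using hr)
      (fun r _ r' _ h => Subtype.ext h) (fun w hw => ⟨⟨w, hin s w hw⟩, by simp [hw], rfl⟩)
  · intro s r hr
    exact h0 s _ (by simpa using hr)
  · intro s r r' hr'
    rw [h1 s _ _ (by simpa using hr')]
    by_cases hrr : r = r'
    · rw [if_pos hrr, if_pos (congrArg Subtype.val hrr)]
    · rw [if_neg hrr, if_neg fun h => hrr (Subtype.ext h)]
  · intro s y
    rw [Finset.sum_coe_sort (Finset.univ.biUnion g) (fun w => co s w y • w)]
    conv_rhs => rw [← h2 s y]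
    symm
    refine Finset.sum_subset (fun w hw => hin s w hw) fun w _ hw => by simp [h0 s w hw]
  · intro r
    obtain ⟨s, -, hs⟩ := Finset.mem_biUnion.1 r.2
    exact ⟨s, by simpa using hs⟩
  · intro y
    obtain ⟨s, hs⟩ := hcov y
    exact ⟨s, (hcone s y).2 hs⟩
  · intro s s' y hy hy' r
    obtain ⟨a, -, rfl⟩ := hint s s' y ((hcone s y).1 hy) ((hcone s' y).1 hy')
    rw [hT s _ Finset.inter_subset_left, hT s' _ Finset.inter_subset_right]
  · intro s
    ext y
    exact hcone s y

theorem exists_GD {Δ : Finset (Set (Fin d → ℝ))} (hΔ : IsCompleteFan Δ) (hsimp : IsSimplicialFan Δ) :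
    ∃ (V R : Type) (_ : Fintype V) (_ : Fintype R) (G : GD d V R) (cn : V → Set (Fin d → ℝ)),
      Function.Injective cn ∧ (∀ s, cn s ∈ Δ ∧ Submodule.span ℝ (cn s) = ⊤ ∧ G.cone s = cn s) ∧
      ∀ σ ∈ Δ, ∃ s, σ ⊆ cn s := by
  have hgen : ∀ σ ∈ Δ, ∃ T : Finset (Fin d → ℝ), LIF T ∧ (∀ w ∈ T, ‖w‖ = 1) ∧ σ = coneHull T := by
    intro σ hσ
    obtain ⟨S, hS, rfl⟩ := hsimp.2 σ hσ
    exact ch_normalize (LIF_of hS)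
  choose! gn hli hn he using hgen
  let V := {σ : Set (Fin d → ℝ) // σ ∈ Δ ∧ Submodule.span ℝ σ = ⊤}
  have fV : Finite V := Finite.of_injective (fun s : V => (⟨s.1, s.2.1⟩ : Δ)) fun a b h =>
    Subtype.ext (by simpa using h)
  have fV' : Fintype V := Fintype.ofFinite V
  have hcov : ∀ y, ∃ s : V, y ∈ s.1 := by
    by_contra! hc
    obtain ⟨y, hy⟩ := hc
    have hO : IsOpen (⋃ s : V, s.1)ᶜ := by
      refine (isClosed_iUnion_of_finite fun s : V => ?_).isOpen_compl
      rw [he s.1 s.2.1]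
      refine ch_closed (hli _ s.2.1) ?_
      rw [← he s.1 s.2.1]; exact s.2.2
    let ι := {σ : Set (Fin d → ℝ) // σ ∈ Δ ∧ Submodule.span ℝ σ ≠ ⊤}
    have fι : Finite ι := Finite.of_injective (fun s : ι => (⟨s.1, s.2.1⟩ : Δ)) fun a b h =>
      Subtype.ext (by simpa using h)
    have hf : ∀ i : ι, ∃ f : (Fin d → ℝ) →ₗ[ℝ] ℝ, f ≠ 0 ∧ Submodule.span ℝ i.1 ≤ LinearMap.ker f := fun i =>
      Submodule.exists_le_ker_of_lt_top _ (lt_top_iff_ne_top.2 i.2.2)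
    choose f hf0 hfk using hf
    obtain ⟨p, hp, hpf⟩ := exists_generic f hf0 hO ⟨y, by simpa using hy⟩
    have : p ∈ ⋃ σ ∈ Δ, σ := by rw [hΔ.2]; trivial
    simp only [Set.mem_iUnion] at this
    obtain ⟨σ, hσ, hpσ⟩ := this
    by_cases hs : Submodule.span ℝ σ = ⊤
    · exact hp (Set.mem_iUnion.2 ⟨⟨σ, hσ, hs⟩, hpσ⟩)
    · exact hpf ⟨σ, hσ, hs⟩ (hfk ⟨σ, hσ, hs⟩ (Submodule.subset_span hpσ))
  have hV : ∀ s : V, coneHull (gn s.1) = s.1 := fun s => (he s.1 s.2.1).symm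
  obtain ⟨G, hG⟩ := mkGD (fun s : V => gn s.1) (fun s s' h => Subtype.ext (by
      rw [← hV s, ← hV s']; exact congrArg coneHull h)) (fun s => hli _ s.2.1)
    (fun s => by rw [hV]; exact s.2.2) (fun y => by
      obtain ⟨s, hs⟩ := hcov y
      exact ⟨s, by rw [hV]; exact hs⟩) (by
      intro s s' y hy hy'
      rw [hV] at hy hy'
      obtain ⟨f1, f2⟩ := hΔ.1.2.2 s.1 s.2.1 s'.1 s'.2.1
      obtain ⟨S, hS, eS⟩ := ch_face (S := gn s.1) (τ := s.1 ∩ s'.1) (by rwa [hV])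
      obtain ⟨T, hT, eT⟩ := ch_face (S := gn s'.1) (τ := s.1 ∩ s'.1) (by rwa [hV])
      have hST : S = T := ch_unique ((hli _ s.2.1).mono hS) ((hli _ s'.2.1).mono hT)
        (fun w hw => hn _ s.2.1 w (hS hw)) (fun w hw => hn _ s'.2.1 w (hT hw)) (eS.symm.trans eT)
      have : y ∈ coneHull S := by rw [← eS]; exact ⟨hy, hy'⟩
      refine ch_mono ?_ this
      subst hST
      exact Finset.subset_inter hS hT)
  refine ⟨V, _, fV', inferInstance, G, fun s => s.1, Subtype.val_injective, fun s =>
    ⟨s.2.1, s.2.2, by rw [hG, hV]⟩, fun σ hσ => ?_⟩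
  have hy : ∑ w ∈ gn σ, w ∈ σ := by
    rw [he σ hσ]
    have := ch_sum (S := gn σ) (T := gn σ) (fun w hw => ch_gen hw) (a := fun _ => 1) (fun _ => zero_le_one)
    simp only [one_smul] at this
    rw [← he σ hσ] at this ⊢
    exact this
  obtain ⟨s, hs⟩ := hcov (∑ w ∈ gn σ, w)
  refine ⟨s, ?_⟩
  obtain ⟨f1, -⟩ := hΔ.1.2.2 σ hσ s.1 s.2.1
  obtain ⟨S, hS, eS⟩ := ch_face (S := gn σ) (τ := σ ∩ s.1) (by rwa [← he σ hσ])
  have := face_int (hli σ hσ) hS (by rw [← eS]; exact ⟨hy, hs⟩)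
  rw [this, ← he σ hσ] at eS
  exact Set.inter_eq_left.1 eS

end

theorem hom_one_lin {d : ℕ} {p : MvPolynomial (Fin d) ℝ} (hp : p.IsHomogeneous 1) :
    ∃ L : (Fin d → ℝ) →ₗ[ℝ] ℝ, ∀ y, MvPolynomial.eval y p = L y := by
  have h : p ∈ MvPolynomial.homogeneousSubmodule (Fin d) ℝ 1 := hp
  rw [MvPolynomial.homogeneousSubmodule_one_eq_span_X] at h
  clear hp
  induction h using Submodule.span_induction with
  | mem y hy =>
    obtain ⟨i, rfl⟩ := hy
    exact ⟨LinearMap.proj i, fun y => by simp⟩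
  | zero => exact ⟨0, fun y => by simp⟩
  | add a b _ _ ha hb =>
    obtain ⟨L, hL⟩ := ha
    obtain ⟨M, hM⟩ := hb
    exact ⟨L + M, fun y => by simp [hL, hM]⟩
  | smul a b _ hb =>
    obtain ⟨L, hL⟩ := hb
    exact ⟨a • L, fun y => by simp [hL, MvPolynomial.smul_eval]⟩

theorem final_thm (d : ℕ) (hd : 1 ≤ d)
    (Δ : Finset (Set (Fin d → ℝ))) (hΔ : IsCompleteFan Δ) (hsimp : IsSimplicialFan Δ)
    (ℓ : (Fin d → ℝ) → ℝ) (hℓ : ℓ ∈ conewisePoly d Δ 1)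
    (hconv : ConvexOn ℝ Set.univ ℓ)
    (hstrict : ∀ σ ∈ Δ, ∀ τ ∈ Δ, Submodule.span ℝ σ = ⊤ → Submodule.span ℝ τ = ⊤ →
      σ ≠ τ → ¬ ∃ l : (Fin d → ℝ) →ₗ[ℝ] ℝ,
        (∀ x ∈ σ, ℓ x = l x) ∧ (∀ x ∈ τ, ℓ x = l x))
    (k : ℕ) (hk : 2 * k < d) :
    (∀ g ∈ conewisePoly d Δ (d - k), ∃ f ∈ conewisePoly d Δ k,
        (g - fun x => ℓ x ^ (d - 2 * k) * f x) ∈ mConewisePoly d Δ (d - k)) ∧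
    (∀ f ∈ conewisePoly d Δ k,
        (fun x => ℓ x ^ (d - 2 * k) * f x) ∈ mConewisePoly d Δ (d - k) →
        f ∈ mConewisePoly d Δ k) := by
  obtain ⟨V, R, _, _, G, cn, hcni, hcn, hsub⟩ := exists_GD hΔ hsimp
  have hA : ∀ j, conewisePoly d Δ j = G.Ak j := by
    intro j
    ext f
    constructor
    · intro hf s
      rw [(hcn s).2.2]; exact hf _ (hcn s).1
    · intro hf σ hσ
      obtain ⟨s, hs⟩ := hsub σ hσ
      obtain ⟨p, hp, h⟩ := hf s
      rw [(hcn s).2.2] at h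
      exact ⟨p, hp, fun x hx => h x (hs hx)⟩
  have hM : ∀ j, mConewisePoly d Δ j = G.mA j := by
    intro j
    cases j with
    | zero => rfl
    | succ j => simp only [mConewisePoly, GD.mA, hA]
  simp only [hA, hM] at hℓ ⊢
  have hls : ∀ s, ∀ y ∈ G.cone s, ℓ y = G.ls ℓ s y := by
    intro s y hy
    obtain ⟨p, hp, h⟩ := hℓ s
    obtain ⟨L, hL⟩ := hom_one_lin hp
    have hLs : ∀ y ∈ G.cone s, ℓ y = L y := fun y hy => by rw [h y hy, hL]
    rw [hLs y hy, G.ls_apply, ← G.lin L s y]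
    refine Finset.sum_congr rfl fun r _ => ?_
    by_cases hr : r ∈ G.B s
    · rw [hLs (G.e r)]
      intro r'
      rw [G.c_e s r' r hr]; split_ifs <;> norm_num
    · rw [G.c_off s r hr]; simp
  have hst : Function.Injective (G.ls ℓ) := by
    intro s s' h
    by_contra hne
    refine hstrict (cn s) (hcn s).1 (cn s') (hcn s').1 (hcn s).2.1 (hcn s').2.1 (fun h => hne (hcni h))
      ⟨G.ls ℓ s, fun x hx => hls s x (by rw [(hcn s).2.2]; exact hx), fun x hx => ?_⟩
    rw [h]
    exact hls s' x (by rw [(hcn s').2.2]; exact hx)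
  let ι := {q : V × R // q.2 ∈ G.B q.1} ⊕ {q : V × V // q.1 ≠ q.2}
  let F : ι → ((Fin d → ℝ) →ₗ[ℝ] ℝ) := Sum.elim (fun q => G.c q.1.1 q.1.2)
    (fun q => G.ls ℓ q.1.1 - G.ls ℓ q.1.2)
  obtain ⟨v, -, hv⟩ := exists_generic F (by
    rintro (q | q) h
    · have := G.c_e q.1.1 q.1.2 q.1.2 q.2
      simp only [F, Sum.elim_inl] at h
      rw [h] at this
      simp at this
    · simp only [F, Sum.elim_inr] at h
      exact q.2 (hst (sub_eq_zero.1 h))) isOpen_univ ⟨0, trivial⟩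
  let D := G.toTD hd ℓ hconv hls hst v (fun s r hr => hv (Sum.inl ⟨(s, r), hr⟩)) (by
    intro s s' h
    by_contra hne
    have := hv (Sum.inr ⟨(s, s'), hne⟩)
    simp only [F, Sum.elim_inr, LinearMap.sub_apply] at this
    exact this (sub_eq_zero.2 h))
  have hEv : G.Evl v ℓ D.ht := GD.Evl.pl (fun s => G.ls ℓ s) hls
  exact ⟨fun g hg => GD.main_surj D rfl rfl hEv hℓ hk hg, fun f hf h => GD.main_inj D rfl rfl hEv hk hf h⟩

/-- McMullen's hard Lefschetz theorem for complete simplicial fans: a strictly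
convex conewise linear function `ℓ` is a Lefschetz element, i.e. for
`0 ≤ k < d/2`, multiplication by `ℓ^{d-2k}` induces an isomorphism
`Ā(Δ)_k → Ā(Δ)_{d-k}` (stated here as: the induced map is surjective and
injective modulo `m·A(Δ)`). -/
theorem mcmullen_hard_lefschetz (d : ℕ) (hd : 1 ≤ d)
    (Δ : Finset (Set (Fin d → ℝ))) (hΔ : IsCompleteFan Δ) (hsimp : IsSimplicialFan Δ)
    (ℓ : (Fin d → ℝ) → ℝ) (hℓ : ℓ ∈ conewisePoly d Δ 1)
    (hconv : ConvexOn ℝ Set.univ ℓ)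
    (hstrict : ∀ σ ∈ Δ, ∀ τ ∈ Δ, Submodule.span ℝ σ = ⊤ → Submodule.span ℝ τ = ⊤ →
      σ ≠ τ → ¬ ∃ l : (Fin d → ℝ) →ₗ[ℝ] ℝ,
        (∀ x ∈ σ, ℓ x = l x) ∧ (∀ x ∈ τ, ℓ x = l x))
    (k : ℕ) (hk : 2 * k < d) :
    (∀ g ∈ conewisePoly d Δ (d - k), ∃ f ∈ conewisePoly d Δ k,
        (g - fun x => ℓ x ^ (d - 2 * k) * f x) ∈ mConewisePoly d Δ (d - k)) ∧
    (∀ f ∈ conewisePoly d Δ k,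
        (fun x => ℓ x ^ (d - 2 * k) * f x) ∈ mConewisePoly d Δ (d - k) →
        f ∈ mConewisePoly d Δ k) := by
  exact final_thm d hd Δ hΔ hsimp ℓ hℓ hconv hstrict k hk
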